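/- Let M be a compact boundaryless smooth manifold. (i) For a smooth map f : M → S^p, the framed cobordism class of the Pontryagin manifold (f^{-1}(y), f^*w) does not depend on the choice of regular value y ∈ S^p or of positively oriented basis w of T_y S^p. (ii) Two smooth maps f, g : M → S^p are smoothly homotopic if and only if their Pontryagin manifolds are framed cobordant. Hence the Pontryagin construction gives a bijection between [M, S^p], the set of smooth maps M → S^p up to smooth homotopy, and the set Π^p_fr(M) of framed cobordism classes of compact codimension-p framed submanifolds of M. -/

import Mathlib

/-!
# Statement 17: The Pontryagin–Thom correspondence `[M, S^p] ≅ Π^p_fr(M)`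
-/

open scoped RealInnerProductSpace Topology Topology.Homotopy unitInterval
open Function Set Metric

noncomputable section

namespace Paper


variable {E : Type*} [NormedAddCommGroup E] [InnerProductSpace ℝ E]

/-- The tangent space of a subset `M ⊆ E` at `x`: the span of all velocity vectors at
`x` of curves lying in `M`. -/
def SubTangent {E' : Type*} [NormedAddCommGroup E'] [NormedSpace ℝ E']
    (M : Set E') (x : E') : Submodule ℝ E' :=
  Submodule.span ℝ {v | ∃ γ : ℝ → E', (∀ t, γ t ∈ M) ∧ γ 0 = x ∧ HasDerivAt γ v 0}

/-- Smoothness of a map on a subset: local extendability to smooth maps on open sets. -/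
def SmoothOnSet {E' G : Type*} [NormedAddCommGroup E'] [NormedSpace ℝ E']
    [NormedAddCommGroup G] [NormedSpace ℝ G] (f : E' → G) (N : Set E') : Prop :=
  ∀ x ∈ N, ∃ (U : Set E') (g : E' → G), IsOpen U ∧ x ∈ U ∧
    ContDiffOn ℝ (⊤ : ℕ∞) g U ∧ Set.EqOn f g (N ∩ U)

/-- `M` is a smooth `m`-dimensional submanifold (without boundary) of `E'`:
locally a regular level set of a smooth submersion. -/
def IsSubmanifold {E' : Type*} [NormedAddCommGroup E'] [NormedSpace ℝ E']
    (M : Set E') (m : ℕ) : Prop :=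
  ∀ x ∈ M, ∃ (U : Set E')
      (Φ : E' → EuclideanSpace ℝ (Fin (Module.finrank ℝ E' - m))),
    IsOpen U ∧ x ∈ U ∧ ContDiffOn ℝ (⊤ : ℕ∞) Φ U ∧
    (∀ y ∈ U, Function.Surjective (fderiv ℝ Φ y)) ∧
    U ∩ M = U ∩ Φ ⁻¹' {0}

/-- `L` is a derivative of `f` at `x ∈ M` along `M` (the derivative of a local smooth
extension of `f|_M`). -/
def HasDerivOn {E' G : Type*} [NormedAddCommGroup E'] [NormedSpace ℝ E']
    [NormedAddCommGroup G] [NormedSpace ℝ G]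
    (f : E' → G) (M : Set E') (x : E') (L : E' →L[ℝ] G) : Prop :=
  ∃ g : E' → G, (∀ᶠ y in nhds x, y ∈ M → f y = g y) ∧ f x = g x ∧ HasFDerivAt g L x

/-- A framing of a submanifold `N ⊆ M` of codimension `p`: a smooth field of
bases of the orthogonal complement of `T_xN` inside `T_xM`. -/
structure IsFraming (M : Set E) (N : Set E) (p : ℕ) (ν : Fin p → E → E) : Prop where
  smooth : ∀ i, SmoothOnSet (ν i) N
  mem_tangent : ∀ i, ∀ x ∈ N, ν i x ∈ SubTangent M x
  orth : ∀ i, ∀ x ∈ N, ∀ v ∈ SubTangent N x, ⟪ν i x, v⟫ = 0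
  indep : ∀ x ∈ N, LinearIndependent ℝ fun i => ν i x
  spans : ∀ x ∈ N,
    SubTangent N x ⊔ Submodule.span ℝ (Set.range fun i => ν i x) = SubTangent M x

/-- `(N, ν)` is a compact framed submanifold of `M` of codimension `p`
(`m` denotes the dimension of `M`). -/
structure IsFramedSubmanifold (M : Set E) (m : ℕ) (N : Set E) (p : ℕ)
    (ν : Fin p → E → E) : Prop where
  subset : N ⊆ M
  compact : IsCompact N
  submanifold : IsSubmanifold N (m - p)
  framing : IsFraming M N p ν

/-- The unit `p`-sphere in `ℝ^{p+1}`. -/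
def sphereSet (p : ℕ) : Set (EuclideanSpace ℝ (Fin (p + 1))) :=
  Metric.sphere 0 1

/-- `w` is a positively oriented basis of the tangent space `T_y S^p`. -/
def PosOrientedTangentBasis (p : ℕ) (y : EuclideanSpace ℝ (Fin (p + 1)))
    (w : Fin p → EuclideanSpace ℝ (Fin (p + 1))) : Prop :=
  (∀ i, ⟪y, w i⟫ = 0) ∧
  0 < Matrix.det (Matrix.of fun i j => (Fin.cons y w : Fin (p+1) → _) i j)

/-- `y` is a regular value of `f|_M`. -/
def IsRegularValue (p : ℕ) (f : E → EuclideanSpace ℝ (Fin (p + 1))) (M : Set E)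
    (y : EuclideanSpace ℝ (Fin (p + 1))) : Prop :=
  ∀ x ∈ M, f x = y → ∃ L, HasDerivOn f M x L ∧
    SubTangent (sphereSet p) y ≤ Submodule.map (L : E →ₗ[ℝ] _) (SubTangent M x)

/-- `(N, ν)` is the Pontryagin manifold `(f⁻¹(y), f^*w)` of `f`. -/
structure IsPontryaginManifold (m p : ℕ) (f : E → EuclideanSpace ℝ (Fin (p + 1)))
    (M : Set E) (y : EuclideanSpace ℝ (Fin (p + 1)))
    (w : Fin p → EuclideanSpace ℝ (Fin (p + 1)))
    (N : Set E) (ν : Fin p → E → E) : Prop where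
  framed : IsFramedSubmanifold M m N p ν
  mem_sphere : y ∈ sphereSet p
  basis : PosOrientedTangentBasis p y w
  regular : IsRegularValue p f M y
  preimage : N = {x ∈ M | f x = y}
  pullback : ∀ x ∈ N, ∃ L, HasDerivOn f M x L ∧ ∀ i, L (ν i x) = w i

/-- Smooth homotopy of maps on `M` with values in `target`. -/
def SmoothHomotopicOn {G : Type*} [NormedAddCommGroup G] [NormedSpace ℝ G]
    (M : Set E) (f g : E → G) (target : Set G) : Prop :=
  ∃ H : E × ℝ → G, SmoothOnSet H (M ×ˢ (univ : Set ℝ)) ∧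
    (∀ x ∈ M, ∀ t : ℝ, H (x, t) ∈ target) ∧
    (∀ x ∈ M, H (x, 0) = f x) ∧ (∀ x ∈ M, H (x, 1) = g x)

/-- The product inner product on `E × ℝ`. -/
def prodInner (u v : E × ℝ) : ℝ := ⟪u.1, v.1⟫ + u.2 * v.2

/-- Framed cobordism of framed submanifolds `(N, ν)`, `(N', ν')` of `M` within
`M × [0,1]`, following Milnor/Pontryagin. -/
def FramedCobordant (M : Set E) (m p : ℕ) (N : Set E) (ν : Fin p → E → E)
    (N' : Set E) (ν' : Fin p → E → E) : Prop :=
  ∃ (Xc : Set (E × ℝ)) (u : Fin p → (E × ℝ) → (E × ℝ)) (ε : ℝ),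
    0 < ε ∧ ε < 1 / 2 ∧
    IsCompact Xc ∧ Xc ⊆ M ×ˢ Icc (0 : ℝ) 1 ∧
    Xc ∩ (univ ×ˢ Iio ε) = N ×ˢ Ico (0 : ℝ) ε ∧
    Xc ∩ (univ ×ˢ Ioi (1 - ε)) = N' ×ˢ Ioc (1 - ε) 1 ∧
    IsSubmanifold (Xc ∩ (univ ×ˢ Ioo (0 : ℝ) 1)) (m - p + 1) ∧
    (∀ i, SmoothOnSet (u i) Xc) ∧
    (∀ z ∈ Xc ∩ (univ ×ˢ Ioo (0 : ℝ) 1),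
      (∀ i, u i z ∈ SubTangent (M ×ˢ (univ : Set ℝ)) z) ∧
      (∀ i, ∀ v ∈ SubTangent (Xc ∩ (univ ×ˢ Ioo (0 : ℝ) 1)) z, prodInner (u i z) v = 0) ∧
      LinearIndependent ℝ (fun i => u i z) ∧
      SubTangent (Xc ∩ (univ ×ˢ Ioo (0 : ℝ) 1)) z ⊔
          Submodule.span ℝ (Set.range fun i => u i z)
        = SubTangent (M ×ˢ (univ : Set ℝ)) z) ∧
    (∀ x t, (x, t) ∈ Xc → t < ε → ∀ i, u i (x, t) = (ν i x, 0)) ∧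
    (∀ x t, (x, t) ∈ Xc → 1 - ε < t → ∀ i, u i (x, t) = (ν' i x, 0))


variable (M : Set E) (m p : ℕ)

/-- Smooth maps `M → S^p` (ambient maps, smooth on `M`, carrying `M` into the sphere). -/
def SmoothSphereMap : Type _ :=
  {f : E → EuclideanSpace ℝ (Fin (p + 1)) //
    SmoothOnSet f M ∧ ∀ x ∈ M, f x ∈ sphereSet p}

/-- `[M, S^p]`: smooth maps up to smooth homotopy. -/
def SmoothMapClasses : Type _ :=
  Quot (fun f g : SmoothSphereMap M p => SmoothHomotopicOn M f.1 g.1 (sphereSet p))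

/-- Compact codimension-`p` framed submanifolds of `M`. -/
def FramedPair : Type _ :=
  {q : Set E × (Fin p → E → E) // IsFramedSubmanifold M m q.1 p q.2}

/-- `Π^p_fr(M)`: framed submanifolds up to framed cobordism. -/
def FramedCobordismClasses : Type _ :=
  Quot (fun a b : FramedPair M m p =>
    FramedCobordant M m p a.1.1 a.1.2 b.1.1 b.1.2)

/-!
The Pontryagin manifold of `f` is the zero set of a ray equation: in coordinates of `ℝ^{p+1}`
adapted to the basis `y, w`, the part of `f` transverse to the line through `y`, on the open set
where the component along `y` is positive. This makes sense for any map without zeros, so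
homotopies into the sphere may be replaced by homotopies without zeros into `ℝ^{p+1}`.

A homotopy without zeros gives a framed cobordism: by Sard's theorem a small perturbation,
vanishing near the ends, makes its ray equation transverse to zero. Conversely, extend the framing
of a cobordism to a smooth map `φ` to `ℝ^p` whose derivative is dual to the frame and which agrees
at the two ends with the ray equations of the given maps. The collapse map built from `φ` has no
zeros and points along `y` exactly on the cobordism, so it joins the collapses of these two ray
equations, and the segment from each map to the collapse of its own ray equation avoids zero. The
same collapse, applied to a single framed submanifold, realises it as a Pontryagin manifold.

Both constructions treat arbitrary pairs of regular values and positively oriented bases at once,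
because `GL⁺(p + 1, ℝ)` is path connected.
-/

section

open scoped ContDiff
open Filter

section LocalCharts

variable {V F W : Type*} [NormedAddCommGroup V] [NormedSpace ℝ V] [NormedAddCommGroup F]
  [NormedSpace ℝ F] [NormedAddCommGroup W] [NormedSpace ℝ W]

theorem isOpen_setOf_surjective [FiniteDimensional ℝ F] :
    IsOpen {L : V →L[ℝ] F | Surjective L} := by
  refine isOpen_iff_mem_nhds.2 fun L hL => ?_
  obtain ⟨R, hR⟩ := (L : V →ₗ[ℝ] F).exists_rightInverse_of_surjective (LinearMap.range_eq_top.2 hL)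
  let R' : F →L[ℝ] V := LinearMap.toContinuousLinearMap R
  have hunit : IsUnit (L.comp R') := by
    have : L.comp R' = 1 := by ext c; exact LinearMap.congr_fun hR c
    exact this ▸ isUnit_one
  have hcont : Continuous fun L' : V →L[ℝ] F => L'.comp R' := by fun_prop
  filter_upwards [hcont.continuousAt.preimage_mem_nhds (Units.isOpen.mem_nhds hunit)]
  rintro L' ⟨T, hT : (T : F →L[ℝ] F) = L'.comp R'⟩ c
  exact ⟨R' ((↑T⁻¹ : F →L[ℝ] F) c),
    (DFunLike.congr_fun hT _).symm.trans (DFunLike.congr_fun T.mul_inv c)⟩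

theorem exists_openPartialHomeomorph_of_bijective_fderiv [CompleteSpace V] [CompleteSpace W]
    {U : Set V} (hU : IsOpen U) {θ : V → W} (hθ : ContDiffOn ℝ ∞ θ U) {x : V} (hx : x ∈ U)
    (hbij : Bijective (fderiv ℝ θ x)) :
    ∃ e : OpenPartialHomeomorph V W, x ∈ e.source ∧ e.source ⊆ U ∧ (∀ z, e z = θ z) ∧
      ContDiffOn ℝ ∞ e.symm e.target := by
  have hderiv : ∀ z ∈ U, HasFDerivAt θ (fderiv ℝ θ z) z := fun z hz =>
    ((hθ.contDiffAt (hU.mem_nhds hz)).differentiableAt (by simp)).hasFDerivAt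
  let A : V ≃L[ℝ] W := ContinuousLinearEquiv.ofBijective (fderiv ℝ θ x)
    (LinearMap.ker_eq_bot.2 hbij.1) (LinearMap.range_eq_top.2 hbij.2)
  have hA : (A : V →L[ℝ] W) = fderiv ℝ θ x := rfl
  have hθx : ContDiffAt ℝ ∞ θ x := hθ.contDiffAt (hU.mem_nhds hx)
  have hθA : HasFDerivAt θ (A : V →L[ℝ] W) x := hA ▸ hderiv x hx
  let O := U ∩ fderiv ℝ θ ⁻¹' range ((↑) : (V ≃L[ℝ] W) → V →L[ℝ] W)
  have hO : IsOpen O :=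
    (hθ.continuousOn_fderiv_of_isOpen hU (by simp)).isOpen_inter_preimage hU
      ContinuousLinearEquiv.isOpen
  let e := (hθx.toOpenPartialHomeomorph θ hθA (by simp)).restrOpen O hO
  refine ⟨e, ⟨hθx.mem_toOpenPartialHomeomorph_source hθA (by simp), hx, A, hA⟩,
    fun z hz => hz.2.1, fun z => rfl, fun w hw => ?_⟩
  obtain ⟨-, hzU, A', hA'⟩ := e.map_target hw
  exact (e.contDiffAt_symm (f₀' := A') hw (hA' ▸ hderiv _ hzU)
    (hθ.contDiffAt (hU.mem_nhds hzU))).contDiffWithinAt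

theorem exists_chart_of_surjective_fderiv [CompleteSpace V] [FiniteDimensional ℝ F]
    {U : Set V} (hU : IsOpen U) {Φ : V → F} (hΦ : ContDiffOn ℝ ∞ Φ U) {x : V} (hx : x ∈ U)
    (hsurj : Surjective (fderiv ℝ Φ x)) :
    ∃ (Q : V →L[ℝ] (fderiv ℝ Φ x).ker) (e : OpenPartialHomeomorph V (F × (fderiv ℝ Φ x).ker)),
      (∀ k : (fderiv ℝ Φ x).ker, Q k = k) ∧ x ∈ e.source ∧ e.source ⊆ U ∧
      (∀ z, e z = (Φ z, Q (z - x))) ∧ ContDiffOn ℝ ∞ e.symm e.target := by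
  obtain ⟨Q, hQ⟩ := (fderiv ℝ Φ x).ker_closedComplemented_of_finiteDimensional_range
  have hsmooth : ContDiffOn ℝ ∞ (fun z => (Φ z, Q (z - x))) U :=
    hΦ.prodMk (Q.contDiff.comp (contDiff_id.sub contDiff_const)).contDiffOn
  have hderiv : HasFDerivAt (fun z => (Φ z, Q (z - x))) ((fderiv ℝ Φ x).prod Q) x :=
    ((hΦ.contDiffAt (hU.mem_nhds hx)).differentiableAt (by simp)).hasFDerivAt.prodMk
      (Q.hasFDerivAt.comp x ((hasFDerivAt_id x).sub_const x))
  have hbij : Bijective (fderiv ℝ (fun z => (Φ z, Q (z - x))) x) := by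
    rw [hderiv.fderiv]
    constructor
    · refine (injective_iff_map_eq_zero _).2 fun v hv => ?_
      have hΦv : fderiv ℝ Φ x v = 0 := congrArg Prod.fst hv
      have hQv : Q v = 0 := congrArg Prod.snd hv
      exact congrArg Subtype.val ((hQ ⟨v, hΦv⟩).symm.trans hQv)
    · rintro ⟨a, k⟩
      obtain ⟨v, hv⟩ := hsurj a
      have hker : ∀ k : (fderiv ℝ Φ x).ker, fderiv ℝ Φ x k = 0 := fun k => k.2
      refine ⟨v - (Q v : V) + k, Prod.ext ?_ ?_⟩
      · simp [hv, hker]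
      · simp [hQ]
  have : CompleteSpace (fderiv ℝ Φ x).ker := (fderiv ℝ Φ x).isClosed_ker.completeSpace_coe
  obtain ⟨e, hxe, heU, he, hsymm⟩ :=
    exists_openPartialHomeomorph_of_bijective_fderiv hU hsmooth hx hbij
  exact ⟨Q, e, hQ, hxe, heU, he, hsymm⟩

end LocalCharts

section OrthogonalLifts

variable {V F : Type*} [NormedAddCommGroup V] [NormedSpace ℝ V] [NormedAddCommGroup F]
  [NormedSpace ℝ F]

/-- A bilinear form without isotropic vectors. It plays the role of an inner product; the inner
product of a product space is of this kind although it does not induce the norm of the product. -/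
def Anisotropic (B : V →L[ℝ] V →L[ℝ] ℝ) : Prop :=
  ∀ v, B v v = 0 → v = 0

/-- The operator `A B⁻¹ Aᵀ : F* → F`, the analogue of `A A*` for the adjoint taken with respect
to `B`. -/
def gramOperator (B : V →L[ℝ] V →L[ℝ] ℝ) (A : V →L[ℝ] F) : (F →L[ℝ] ℝ) →L[ℝ] F :=
  A.comp (B.inverse.comp ((ContinuousLinearMap.compL ℝ V F ℝ).flip A))

/-- The solution `v` of `A v = c` that is `B`-orthogonal to `ker A`, for surjective `A` and
anisotropic `B` (a Moore–Penrose inverse). -/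
def orthLift (B : V →L[ℝ] V →L[ℝ] ℝ) (A : V →L[ℝ] F) (c : F) : V :=
  B.inverse (((gramOperator B A).inverse c).comp A)

theorem finrank_continuousDual (F : Type*) [NormedAddCommGroup F] [NormedSpace ℝ F]
    [FiniteDimensional ℝ F] : Module.finrank ℝ (F →L[ℝ] ℝ) = Module.finrank ℝ F :=
  (LinearMap.toContinuousLinearMap (𝕜 := ℝ) (E := F) (F' := ℝ)).finrank_eq.symm.trans
    Subspace.dual_finrank_eq

theorem isInvertible_of_injective [FiniteDimensional ℝ V] [FiniteDimensional ℝ F]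
    (hdim : Module.finrank ℝ V = Module.finrank ℝ F) {A : V →L[ℝ] F} (hA : Injective A) :
    A.IsInvertible :=
  ⟨.ofBijective A (LinearMap.ker_eq_bot.2 hA) (LinearMap.range_eq_top.2
    ((LinearMap.injective_iff_surjective_of_finrank_eq_finrank hdim).1 hA)), rfl⟩

variable [FiniteDimensional ℝ V] {B : V →L[ℝ] V →L[ℝ] ℝ}

theorem Anisotropic.isInvertible (hB : Anisotropic B) : B.IsInvertible :=
  isInvertible_of_injective (finrank_continuousDual V).symm <|
    (injective_iff_map_eq_zero B).2 fun v hv => hB v (by simp [hv])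

variable [FiniteDimensional ℝ F] {A : V →L[ℝ] F}

theorem Anisotropic.isInvertible_gramOperator (hB : Anisotropic B) (hA : Surjective A) :
    (gramOperator B A).IsInvertible := by
  refine isInvertible_of_injective (finrank_continuousDual F) <|
    (injective_iff_map_eq_zero _).2 fun l hl => ?_
  have hBv : B (B.inverse (l.comp A)) = l.comp A := hB.isInvertible.self_apply_inverse _
  have hAv : A (B.inverse (l.comp A)) = 0 := hl
  have hv : B.inverse (l.comp A) = 0 := hB _ (by rw [hBv]; simp [hAv])
  ext c
  obtain ⟨v, rfl⟩ := hA c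
  simpa [hv] using (DFunLike.congr_fun hBv v).symm

theorem Anisotropic.map_orthLift (hB : Anisotropic B) (hA : Surjective A) (c : F) :
    A (orthLift B A c) = c :=
  (hB.isInvertible_gramOperator hA).self_apply_inverse c

omit [FiniteDimensional ℝ F] in
theorem Anisotropic.orthLift_orthogonal (hB : Anisotropic B) (c : F) {v : V} (hv : A v = 0) :
    B (orthLift B A c) v = 0 := by
  rw [orthLift, hB.isInvertible.self_apply_inverse]
  simp [hv]

theorem Anisotropic.contDiffAt_orthLift (hB : Anisotropic B) (hA : Surjective A) (c : F) :
    ContDiffAt ℝ ∞ (fun A' => orthLift B A' c) A := by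
  have hgram : ContDiff ℝ ∞ (gramOperator B : (V →L[ℝ] F) → _) := by
    unfold gramOperator
    fun_prop
  have hinv : ContDiffAt ℝ ∞ (fun A' => (gramOperator B A').inverse) A := by
    obtain ⟨T, hT⟩ := hB.isInvertible_gramOperator hA
    exact (hT ▸ contDiffAt_map_inverse T : ContDiffAt ℝ ∞ _ (gramOperator B A)).comp A
      hgram.contDiffAt
  unfold orthLift
  fun_prop

end OrthogonalLifts

section ScalarSard

open MeasureTheory

universe u

theorem exists_contDiff_eventuallyEq {V F : Type*} [NormedAddCommGroup V] [NormedSpace ℝ V]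
    [HasContDiffBump V] [NormedAddCommGroup F] [NormedSpace ℝ F] {U : Set V} (hU : IsOpen U)
    {g : V → F} (hg : ContDiffOn ℝ ∞ g U) {x : V} (hx : x ∈ U) :
    ∃ g' : V → F, ContDiff ℝ ∞ g' ∧ g' =ᶠ[𝓝 x] g := by
  obtain ⟨r, hr, hrU⟩ := Metric.isOpen_iff.1 hU x hx
  let b : ContDiffBump x := ⟨r / 4, r / 2, by linarith, by linarith⟩
  refine ⟨fun z => b z • g z, contDiff_iff_contDiffAt.2 fun z => ?_, ?_⟩
  · by_cases hz : z ∈ U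
    · exact b.contDiff.contDiffAt.smul (hg.contDiffAt (hU.mem_nhds hz))
    · have hzb : z ∉ tsupport b := fun hmem =>
        hz (hrU (closedBall_subset_ball (by change r / 2 < r; linarith) (b.tsupport_eq ▸ hmem)))
      refine (contDiffAt_const (c := (0 : F))).congr_of_eventuallyEq ?_
      filter_upwards [notMem_tsupport_iff_eventuallyEq.1 hzb] with y hy
      simp [hy]
  · filter_upwards [b.eventuallyEq_one] with z hz
    simp [hz]

theorem measure_image_eq_zero_of_locally {V W : Type*} [TopologicalSpace V]
    [SecondCountableTopology V] [MeasurableSpace W] {μ : Measure W} {f : V → W} {C : Set V}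
    (h : ∀ x ∈ C, ∃ u ∈ 𝓝 x, μ (f '' (u ∩ C)) = 0) : μ (f '' C) = 0 := by
  choose! u hu hμ using h
  obtain ⟨t, htC, htc, hcov⟩ := TopologicalSpace.countable_cover_nhdsWithin
    (f := u) (s := C) (fun x hx => mem_nhdsWithin_of_mem_nhds (hu x hx))
  have himage : f '' C ⊆ ⋃ x ∈ t, f '' (u x ∩ C) := by
    rintro _ ⟨z, hz, rfl⟩
    obtain ⟨x, hx, hzx⟩ := mem_iUnion₂.1 (hcov hz)
    exact mem_iUnion₂.2 ⟨x, hx, z, ⟨hzx, hz⟩, rfl⟩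
  exact measure_mono_null himage <|
    (measure_biUnion_null_iff htc).2 fun x hx => hμ x (htC hx)

variable {V F : Type*} [NormedAddCommGroup V] [NormedSpace ℝ V] [NormedAddCommGroup F]
  [NormedSpace ℝ F]

/-- The set of points at which the derivatives of `g` of orders `1, …, n` vanish. -/
def flatSet (g : V → F) (n : ℕ) : Set V :=
  {x | ∀ i, 1 ≤ i → i ≤ n → iteratedFDeriv ℝ i g x = 0}

theorem iteratedFDeriv_one_eq_zero_iff {g : V → F} {x : V} :
    iteratedFDeriv ℝ 1 g x = 0 ↔ fderiv ℝ g x = 0 := by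
  rw [← norm_eq_zero, norm_iteratedFDeriv_one, norm_eq_zero]

theorem fderiv_eq_zero_of_mem_flatSet {g : V → F} {x : V} {n : ℕ} (hn : 1 ≤ n)
    (hx : x ∈ flatSet g n) : fderiv ℝ g x = 0 :=
  iteratedFDeriv_one_eq_zero_iff.1 (hx 1 le_rfl hn)

theorem setOf_fderiv_eq_zero_subset (g : V → F) (n : ℕ) :
    {x | fderiv ℝ g x = 0} ⊆
      flatSet g (n + 1) ∪ ⋃ j ∈ Ici 1, flatSet g j \ flatSet g (j + 1) := by
  intro x hx
  refine or_iff_not_imp_right.2 fun hx' => ?_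
  simp only [mem_iUnion₂, Set.mem_sdiff, not_exists, not_and, not_not] at hx'
  refine Nat.le_induction (P := fun k _ => x ∈ flatSet g k) ?_ (fun k hk => hx' k hk) (n + 1)
    (Nat.le_add_left 1 n)
  intro i hi hi'
  obtain rfl : i = 1 := le_antisymm hi' hi
  exact iteratedFDeriv_one_eq_zero_iff.2 hx

theorem exists_norm_iteratedFDeriv_sub_le [ProperSpace V] {g : V → F} (hg : ContDiff ℝ ∞ g)
    (c : V) (j k : ℕ) :
    ∃ C : ℝ, 0 ≤ C ∧ ∀ x ∈ ball c 1, ∀ y ∈ ball c 1,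
      (∀ i, k + 1 ≤ i → i ≤ k + j → iteratedFDeriv ℝ i g x = 0) →
      ‖iteratedFDeriv ℝ k g y - iteratedFDeriv ℝ k g x‖ ≤ C * ‖y - x‖ ^ (j + 1) := by
  have hsmooth : ∀ k, ContDiff ℝ ∞ (iteratedFDeriv ℝ k g) := fun k =>
    hg.iteratedFDeriv_right (m := ∞) (i := k) (by exact_mod_cast le_top)
  have hdiff : ∀ k z, DifferentiableAt ℝ (iteratedFDeriv ℝ k g) z := fun k z =>
    (hsmooth k).differentiable (by simp) z
  induction j generalizing k with
  | zero =>
    obtain ⟨C, hC⟩ :=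
      (isCompact_closedBall c 1).bddAbove_image (hsmooth (k + 1)).continuous.norm.continuousOn
    have hbound : ∀ z ∈ ball c 1, ‖iteratedFDeriv ℝ (k + 1) g z‖ ≤ C := fun z hz =>
      hC ⟨z, ball_subset_closedBall hz, rfl⟩
    refine ⟨C, (norm_nonneg _).trans (hbound c (mem_ball_self one_pos)), fun x hx y hy _ => ?_⟩
    rw [zero_add, pow_one]
    exact (convex_ball c 1).norm_image_sub_le_of_norm_fderiv_le (𝕜 := ℝ) (fun z _ => hdiff k z)
      (fun z hz => norm_fderiv_iteratedFDeriv.trans_le (hbound z hz)) hx hy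
  | succ j ih =>
    obtain ⟨C, hC0, hC⟩ := ih (k + 1)
    refine ⟨C, hC0, fun x hx y hy hflat => ?_⟩
    have hbound : ∀ z ∈ segment ℝ x y,
        ‖fderiv ℝ (iteratedFDeriv ℝ k g) z‖ ≤ C * ‖y - x‖ ^ (j + 1) := by
      intro z hz
      calc ‖fderiv ℝ (iteratedFDeriv ℝ k g) z‖
          = ‖iteratedFDeriv ℝ (k + 1) g z - iteratedFDeriv ℝ (k + 1) g x‖ := by
            rw [norm_fderiv_iteratedFDeriv, hflat (k + 1) le_rfl (by omega), sub_zero]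
        _ ≤ C * ‖z - x‖ ^ (j + 1) :=
            hC x hx z ((convex_ball c 1).segment_subset hx hy hz)
              fun i hi hi' => hflat i (by omega) (by omega)
        _ ≤ C * ‖y - x‖ ^ (j + 1) := by
            gcongr
            exact norm_sub_le_of_mem_segment hz
    calc ‖iteratedFDeriv ℝ k g y - iteratedFDeriv ℝ k g x‖
        ≤ C * ‖y - x‖ ^ (j + 1) * ‖y - x‖ :=
          (convex_segment x y).norm_image_sub_le_of_norm_fderiv_le (𝕜 := ℝ)
            (fun z _ => hdiff k z) hbound (left_mem_segment ℝ x y) (right_mem_segment ℝ x y)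
      _ = C * ‖y - x‖ ^ (j + 1 + 1) := by ring

theorem exists_holderOnWith_flatSet [ProperSpace V] {g : V → F} (hg : ContDiff ℝ ∞ g) (c : V)
    (n : ℕ) :
    ∃ C : NNReal, HolderOnWith C ((n + 1 : ℕ) : NNReal) g (ball c 1 ∩ flatSet g n) := by
  obtain ⟨C, hC0, hC⟩ := exists_norm_iteratedFDeriv_sub_le hg c n 0
  lift C to NNReal using hC0
  refine ⟨C, fun x hx y hy => ?_⟩
  have hdist := hC x hx.1 y hy.1 fun i hi hi' => hx.2 i (by omega) (by omega)
  simp only [iteratedFDeriv_zero_eq_comp, comp_apply, ← map_sub,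
    LinearIsometryEquiv.norm_map] at hdist
  rw [edist_comm, edist_comm x y, edist_eq_enorm_sub, edist_eq_enorm_sub, NNReal.coe_natCast,
    ENNReal.rpow_natCast, ← ofReal_norm, ← ofReal_norm, ← ENNReal.ofReal_pow (norm_nonneg _),
    ← ENNReal.ofReal_coe_nnreal, ← ENNReal.ofReal_mul C.coe_nonneg]
  exact ENNReal.ofReal_le_ofReal hdist

theorem volume_image_flatSet_eq_zero [FiniteDimensional ℝ V] {g : V → ℝ}
    (hg : ContDiff ℝ ∞ g) : volume (g '' flatSet g (Module.finrank ℝ V + 1)) = 0 := by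
  set d := Module.finrank ℝ V
  refine measure_image_eq_zero_of_locally fun c _ => ⟨ball c 1, ball_mem_nhds c one_pos, ?_⟩
  obtain ⟨C, hC⟩ := exists_holderOnWith_flatSet hg c (d + 1)
  have hdim : dimH (g '' (ball c 1 ∩ flatSet g (d + 1))) < ((1 : NNReal) : ENNReal) :=
    calc dimH (g '' (ball c 1 ∩ flatSet g (d + 1)))
        ≤ dimH (ball c 1 ∩ flatSet g (d + 1)) / ((d + 1 + 1 : ℕ) : NNReal) :=
          hC.dimH_image_le (by positivity)
      _ ≤ (d : ENNReal) / ((d + 1 + 1 : ℕ) : NNReal) := by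
          gcongr
          exact (dimH_mono (subset_univ _)).trans_eq (Real.dimH_univ_eq_finrank V)
      _ < (1 : NNReal) := by
          refine ENNReal.div_lt_of_lt_mul ?_
          rw [ENNReal.coe_one, one_mul]
          norm_cast
          omega
  simpa [hausdorffMeasure_real] using hausdorffMeasure_of_dimH_lt hdim

/-- The hypersurface is cut out by a functional of the derivative of order `j`. -/
theorem exists_hypersurface_of_mem_flatSet {g : V → F} (hg : ContDiff ℝ ∞ g) {j : ℕ} (hj : 1 ≤ j)
    {x : V} (hx : x ∈ flatSet g j \ flatSet g (j + 1)) :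
    ∃ w : V → ℝ, ContDiff ℝ ∞ w ∧ fderiv ℝ w x ≠ 0 ∧ ∀ z ∈ flatSet g j, w z = 0 := by
  have hne : iteratedFDeriv ℝ (j + 1) g x ≠ 0 := fun h0 => hx.2 fun i hi hi' =>
    hi'.eq_or_lt.elim (fun h => h ▸ h0) fun h => hx.1 i hi (Nat.lt_succ_iff.1 h)
  have hsmooth : ContDiff ℝ ∞ (iteratedFDeriv ℝ j g) :=
    hg.iteratedFDeriv_right (m := ∞) (i := j) (by exact_mod_cast le_top)
  obtain ⟨v, hv⟩ : ∃ v, fderiv ℝ (iteratedFDeriv ℝ j g) x v ≠ 0 := by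
    by_contra! h
    exact hne (ContinuousMultilinearMap.ext fun m => by
      rw [iteratedFDeriv_succ_apply_left, h]
      rfl)
  obtain ⟨l, hl⟩ := SeparatingDual.exists_ne_zero (R := ℝ) hv
  refine ⟨fun z => l (iteratedFDeriv ℝ j g z), l.contDiff.comp hsmooth, fun h => hl ?_,
    fun z hz => ?_⟩
  · rw [← ContinuousLinearMap.comp_apply,
      ← (l.hasFDerivAt.comp x (hsmooth.differentiable (by simp) x).hasFDerivAt).fderiv]
    exact DFunLike.congr_fun h v
  · simp only [hz j hj le_rfl, map_zero]

/-- Restricting `g` to the hypersurface `w = 0` lowers the dimension by one. -/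
theorem exists_nhds_volume_image_critical_eq_zero [FiniteDimensional ℝ V]
    (ih : ∀ K : Submodule ℝ V, Module.finrank ℝ K + 1 = Module.finrank ℝ V →
      ∀ h : K → ℝ, ContDiff ℝ ∞ h → volume (h '' {k | fderiv ℝ h k = 0}) = 0)
    {g : V → ℝ} (hg : ContDiff ℝ ∞ g) {w : V → ℝ} (hw : ContDiff ℝ ∞ w) {x : V}
    (hx : fderiv ℝ w x ≠ 0) (hwx : w x = 0) :
    ∃ u ∈ 𝓝 x, volume (g '' (u ∩ {z | w z = 0 ∧ fderiv ℝ g z = 0})) = 0 := by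
  have hlin : (fderiv ℝ w x : V →ₗ[ℝ] ℝ) ≠ 0 := fun h => hx (ContinuousLinearMap.coe_injective h)
  obtain ⟨Q, e, -, hxe, -, he, hsymm⟩ := exists_chart_of_surjective_fderiv isOpen_univ
    hw.contDiffOn (mem_univ x) (LinearMap.surjective hlin)
  let ψ : (fderiv ℝ w x).ker → V := fun k => e.symm (0, k)
  let O : Set (fderiv ℝ w x).ker := (fun k => ((0 : ℝ), k)) ⁻¹' e.target
  have hO : IsOpen O := e.open_target.preimage (by fun_prop)
  have hψ : ContDiffOn ℝ ∞ ψ O :=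
    hsymm.comp (contDiff_prodMk_right (0 : ℝ)).contDiffOn fun k hk => hk
  have hex : e x = (0, 0) := by simp [he, hwx]
  have h0O : 0 ∈ O := mem_preimage.2 (hex ▸ e.map_source hxe)
  obtain ⟨h, hh, hheq⟩ := exists_contDiff_eventuallyEq hO (hg.comp_contDiffOn hψ) h0O
  have hnull := ih _ (Module.Dual.finrank_ker_add_one_of_ne_zero hlin) h hh
  have htendsto : Tendsto (fun z => Q (z - x)) (𝓝 x) (𝓝 0) :=
    (by fun_prop : Continuous fun z => Q (z - x)).tendsto' x 0 (by simp)
  refine ⟨_, inter_mem (htendsto.eventually (hheq.eventually_nhds.and (hO.mem_nhds h0O)))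
    (e.open_source.mem_nhds hxe), measure_mono_null ?_ hnull⟩
  rintro _ ⟨z, ⟨⟨⟨hzh : h =ᶠ[𝓝 (Q (z - x))] g ∘ ψ, hzO⟩, hze⟩, hzw, hzg⟩, rfl⟩
  have hψz : ψ (Q (z - x)) = z := by
    rw [show ψ (Q (z - x)) = e.symm (e z) by simp only [ψ, he, hzw], e.left_inv hze]
  refine ⟨Q (z - x), ?_, by rw [hzh.eq_of_nhds, comp_apply, hψz]⟩
  rw [mem_ofPred_eq, hzh.fderiv_eq, fderiv_comp _ (hg.differentiable (by simp) _)
    ((hψ.contDiffAt (hO.mem_nhds hzO)).differentiableAt (by simp)), hψz, hzg,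
    ContinuousLinearMap.zero_comp]

theorem volume_image_setOf_fderiv_eq_zero {V : Type u} [NormedAddCommGroup V] [NormedSpace ℝ V]
    [FiniteDimensional ℝ V] {g : V → ℝ} (hg : ContDiff ℝ ∞ g) :
    volume (g '' {x | fderiv ℝ g x = 0}) = 0 := by
  induction hd : Module.finrank ℝ V generalizing V with
  | zero =>
    have : Subsingleton V := Module.finrank_zero_iff.1 hd
    exact (Set.subsingleton_of_subsingleton.image g).measure_zero _
  | succ d ih =>
    have hstep : ∀ j ∈ Ici 1, volume (g '' (flatSet g j \ flatSet g (j + 1))) = 0 := by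
      refine fun j hj => measure_image_eq_zero_of_locally fun x hx => ?_
      obtain ⟨w, hw, hwx, hwflat⟩ := exists_hypersurface_of_mem_flatSet hg hj hx
      obtain ⟨u, hu, hnull⟩ := exists_nhds_volume_image_critical_eq_zero
        (fun K hK h hh => ih hh (by omega)) hg hw hwx (hwflat x hx.1)
      refine ⟨u, hu, measure_mono_null (image_mono (inter_subset_inter_right u ?_)) hnull⟩
      exact fun z hz => ⟨hwflat z hz.1, fderiv_eq_zero_of_mem_flatSet hj hz.1⟩
    refine measure_mono_null (image_mono (setOf_fderiv_eq_zero_subset g (Module.finrank ℝ V))) ?_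
    rw [image_union, measure_union_null_iff, image_iUnion₂,
      measure_biUnion_null_iff (Set.to_countable _)]
    exact ⟨volume_image_flatSet_eq_zero hg, hstep⟩

end ScalarSard

section VectorSard

open MeasureTheory

universe u

variable {V F : Type*} [NormedAddCommGroup V] [NormedSpace ℝ V] [NormedAddCommGroup F]
  [NormedSpace ℝ F]

/-- The points of `U` at which the derivative of `f` is not surjective. -/
def criticalSet (f : V → F) (U : Set V) : Set V :=
  {x ∈ U | ¬ Surjective (fderiv ℝ f x)}

theorem isCompact_inter_criticalSet [FiniteDimensional ℝ F] {f : V → F} {U C : Set V}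
    (hU : IsOpen U) (hf : ContDiffOn ℝ ∞ f U) (hC : IsCompact C) (hCU : C ⊆ U) :
    IsCompact (C ∩ criticalSet f U) := by
  have heq : C ∩ criticalSet f U = C ∩ fderiv ℝ f ⁻¹' {L | Surjective L}ᶜ :=
    Set.ext fun z => and_congr_right fun hz => and_iff_right (hCU hz)
  have hcont : ContinuousOn (fderiv ℝ f) C :=
    (hf.continuousOn_fderiv_of_isOpen hU (by simp)).mono hCU
  exact heq ▸ hC.of_isClosed_subset (hcont.preimage_isClosed_of_isClosed hC.isClosed
    isOpen_setOf_surjective.isClosed_compl) inter_subset_left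

theorem image_inter_criticalSet_subset {W : Type*} [NormedAddCommGroup W] [NormedSpace ℝ W]
    {f : V → F} {U : Set V} (hU : IsOpen U) (hf : ContDiffOn ℝ ∞ f U)
    (e : OpenPartialHomeomorph V W) (he : ContDiffOn ℝ ∞ e.symm e.target) :
    f '' (e.source ∩ criticalSet f U) ⊆ (f ∘ e.symm) '' criticalSet (f ∘ e.symm) e.target := by
  rintro _ ⟨z, ⟨hz, hzU, hcrit⟩, rfl⟩
  refine ⟨e z, ⟨e.map_source hz, fun hsurj => hcrit ?_⟩, congrArg f (e.left_inv hz)⟩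
  have hesymm : DifferentiableAt ℝ e.symm (e z) :=
    (he.contDiffAt (e.open_target.mem_nhds (e.map_source hz))).differentiableAt (by simp)
  have hfz : DifferentiableAt ℝ f (e.symm (e z)) := by
    rw [e.left_inv hz]
    exact (hf.contDiffAt (hU.mem_nhds hzU)).differentiableAt (by simp)
  rw [fderiv_comp _ hfz hesymm, e.left_inv hz] at hsurj
  exact Surjective.of_comp hsurj

theorem volume_image_setOf_mem_and_fderiv_eq_zero {ι : Type*} [Fintype ι] [Nonempty ι]
    [FiniteDimensional ℝ V] {U : Set V} (hU : IsOpen U) {f : V → ι → ℝ}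
    (hf : ContDiffOn ℝ ∞ f U) : volume (f '' {x ∈ U | fderiv ℝ f x = 0}) = 0 := by
  obtain ⟨i⟩ := ‹Nonempty ι›
  refine measure_image_eq_zero_of_locally fun x hx => ?_
  obtain ⟨g, hg, hgf⟩ := exists_contDiff_eventuallyEq hU (contDiffOn_pi.1 hf i) hx.1
  refine ⟨_, hgf.eventually_nhds, measure_mono_null ?_
    (Measure.pi_eval_preimage_null (i := i) (fun _ : ι => volume)
      (volume_image_setOf_fderiv_eq_zero hg))⟩
  rintro _ ⟨z, ⟨hzg : g =ᶠ[𝓝 z] fun y => f y i, hzU, hz⟩, rfl⟩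
  refine ⟨z, ?_, hzg.eq_of_nhds⟩
  have hfz : HasFDerivAt f (0 : V →L[ℝ] ι → ℝ) z :=
    hz ▸ ((hf.contDiffAt (hU.mem_nhds hzU)).differentiableAt (by simp)).hasFDerivAt
  exact hzg.fderiv_eq.trans (hasFDerivAt_pi'.1 hfz i).fderiv

theorem volume_eq_zero_of_forall_insertNth {k : ℕ} (i : Fin (k + 1)) {S : Set (Fin (k + 1) → ℝ)}
    (hS : MeasurableSet S)
    (h : ∀ t, volume {ρ : Fin k → ℝ | (i.insertNth t ρ : Fin (k + 1) → ℝ) ∈ S} = 0) :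
    volume S = 0 := by
  have hT := (volume_preserving_piFinSuccAbove (fun _ : Fin (k + 1) => ℝ) i).symm
  rw [← hT.measure_preimage_equiv S, Measure.volume_eq_prod,
    Measure.measure_prod_null ((MeasurableEquiv.measurable _) hS)]
  exact Eventually.of_forall h

theorem surjective_of_surjective_removeNth {K : Type*} [AddCommGroup K] [Module ℝ K] {k : ℕ}
    {i : Fin (k + 1)} {D : ℝ × K →ₗ[ℝ] Fin (k + 1) → ℝ} (hfst : ∀ a, D a i = a.1)
    (hsurj : Surjective fun b => i.removeNth (D (0, b))) : Surjective D := by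
  intro c
  obtain ⟨b, hb⟩ := hsurj (i.removeNth (c - D (c i, 0)))
  refine ⟨(c i, b), funext fun l => Fin.succAboveCases i (hfst _) (fun j => ?_) l⟩
  have hbj : D (0, b) (i.succAbove j) = c (i.succAbove j) - D (c i, 0) (i.succAbove j) :=
    congrFun hb j
  rw [show (c i, b) = (c i, (0 : K)) + (0, b) by simp, map_add, Pi.add_apply, hbj]
  ring

theorem volume_slice_image_criticalSet_eq_zero {K : Type*} [NormedAddCommGroup K]
    [NormedSpace ℝ K] {k : ℕ}
    (ih : ∀ O : Set K, IsOpen O → ∀ h : K → Fin k → ℝ, ContDiffOn ℝ ∞ h O →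
      volume (h '' criticalSet h O) = 0)
    {i : Fin (k + 1)} {T : Set (ℝ × K)} (hT : IsOpen T) {f : ℝ × K → Fin (k + 1) → ℝ}
    (hf : ContDiffOn ℝ ∞ f T) (hfi : ∀ a ∈ T, f a i = a.1) (t : ℝ) :
    volume {ρ : Fin k → ℝ | (i.insertNth t ρ : Fin (k + 1) → ℝ) ∈ f '' criticalSet f T} = 0 := by
  let O : Set K := (fun b => (t, b)) ⁻¹' T
  let h : K → Fin k → ℝ := fun b => i.removeNth (f (t, b))
  have hO : IsOpen O := hT.preimage (by fun_prop)
  have hft : ContDiffOn ℝ ∞ (fun b => f (t, b)) O :=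
    hf.comp (contDiff_prodMk_right t).contDiffOn fun b hb => hb
  have hh : ContDiffOn ℝ ∞ h O := contDiffOn_pi.2 fun j => contDiffOn_pi.1 hft (i.succAbove j)
  refine measure_mono_null ?_ (ih O hO h hh)
  rintro ρ ⟨⟨s, b⟩, ⟨hsb, hcrit⟩, hρ⟩
  obtain rfl : s = t := by simpa [hρ] using (hfi _ hsb).symm
  refine ⟨b, ⟨hsb, fun hsurj => hcrit ?_⟩, by simp only [h, hρ, Fin.removeNth_insertNth]⟩
  have hfb : HasFDerivAt f (fderiv ℝ f (s, b)) (s, b) :=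
    ((hf.contDiffAt (hT.mem_nhds hsb)).differentiableAt (by simp)).hasFDerivAt
  have hhb : HasFDerivAt h (fderiv ℝ h b) b :=
    ((hh.contDiffAt (hO.mem_nhds hsb)).differentiableAt (by simp)).hasFDerivAt
  have hfst : ∀ a, fderiv ℝ f (s, b) a i = a.1 := by
    have heq : (fun a => f a i) =ᶠ[𝓝 (s, b)] Prod.fst := by
      filter_upwards [hT.mem_nhds hsb] with a ha using hfi a ha
    exact DFunLike.congr_fun
      ((hasFDerivAt_pi'.1 hfb i).unique (hasFDerivAt_fst.congr_of_eventuallyEq heq))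
  have hslice : ∀ c, fderiv ℝ h b c = i.removeNth (fderiv ℝ f (s, b) (0, c)) := fun c =>
    funext fun j => DFunLike.congr_fun ((hasFDerivAt_pi'.1 hhb j).unique
      (hasFDerivAt_pi'.1 (hfb.comp b (hasFDerivAt_prodMk_right s b)) (i.succAbove j))) c
  exact surjective_of_surjective_removeNth (D := (fderiv ℝ f (s, b) : ℝ × K →ₗ[ℝ] _)) hfst
    fun c => (hsurj c).imp fun b' hb' => (hslice b').symm.trans hb'

theorem exists_nhds_volume_image_inter_criticalSet_eq_zero [FiniteDimensional ℝ V] {k : ℕ}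
    (ih : ∀ (K : Submodule ℝ V) (O : Set K), IsOpen O → ∀ h : K → Fin k → ℝ,
      ContDiffOn ℝ ∞ h O → volume (h '' criticalSet h O) = 0)
    {U : Set V} (hU : IsOpen U) {f : V → Fin (k + 1) → ℝ} (hf : ContDiffOn ℝ ∞ f U) {x : V}
    (hx : x ∈ U) (hne : fderiv ℝ f x ≠ 0) :
    ∃ u ∈ 𝓝 x, volume (f '' (u ∩ criticalSet f U)) = 0 := by
  obtain ⟨i, hi⟩ : ∃ i, fderiv ℝ (fun z => f z i) x ≠ 0 := by
    by_contra! h0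
    have hfx := ((hf.contDiffAt (hU.mem_nhds hx)).differentiableAt (by simp)).hasFDerivAt
    exact hne (ContinuousLinearMap.ext fun v => funext fun i => DFunLike.congr_fun
      ((hasFDerivAt_pi'.1 hfx i).fderiv.symm.trans (h0 i)) v)
  obtain ⟨Q, e, -, hxe, heU, he, hsymm⟩ := exists_chart_of_surjective_fderiv hU
    (contDiffOn_pi.1 hf i) hx
    (LinearMap.surjective fun h => hi (ContinuousLinearMap.coe_injective h))
  obtain ⟨r, hr, hre⟩ := nhds_basis_closedBall.mem_iff.1 (e.open_source.mem_nhds hxe)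
  refine ⟨closedBall x r, closedBall_mem_nhds x hr, ?_⟩
  have hcompact : IsCompact (f '' (closedBall x r ∩ criticalSet f U)) :=
    (isCompact_inter_criticalSet hU hf (isCompact_closedBall x r)
      (hre.trans heU)).image_of_continuousOn
      (hf.continuousOn.mono (inter_subset_left.trans (hre.trans heU)))
  refine volume_eq_zero_of_forall_insertNth i hcompact.measurableSet fun t => ?_
  refine measure_mono_null (fun ρ hρ => ?_) <| volume_slice_image_criticalSet_eq_zero (ih _)
    e.open_target (hf.comp hsymm fun a ha => heU (e.map_target ha)) (i := i)
    (fun a ha => congrArg Prod.fst ((he _).symm.trans (e.right_inv ha))) t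
  exact image_inter_criticalSet_subset hU hf e hsymm
    (image_mono (inter_subset_inter_left _ hre) hρ)

theorem volume_image_criticalSet_eq_zero {V : Type u} [NormedAddCommGroup V] [NormedSpace ℝ V]
    [FiniteDimensional ℝ V] {k : ℕ} {U : Set V} (hU : IsOpen U) {f : V → Fin k → ℝ}
    (hf : ContDiffOn ℝ ∞ f U) : volume (f '' criticalSet f U) = 0 := by
  induction k generalizing V with
  | zero =>
    have hempty : criticalSet f U = ∅ :=
      eq_empty_of_forall_notMem fun x hx => hx.2 fun c => ⟨0, Subsingleton.elim _ _⟩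
    rw [hempty, image_empty, measure_empty]
  | succ k ih =>
    have hnonzero : volume (f '' {x ∈ criticalSet f U | fderiv ℝ f x ≠ 0}) = 0 := by
      refine measure_image_eq_zero_of_locally fun x hx => ?_
      obtain ⟨u, hu, hnull⟩ := exists_nhds_volume_image_inter_criticalSet_eq_zero
        (fun K O hO h hh => ih hO hh) hU hf hx.1.1 hx.2
      exact ⟨u, hu, measure_mono_null
        (image_mono (inter_subset_inter_right u fun z hz => hz.1)) hnull⟩
    refine measure_mono_null ?_ (measure_union_null
      (volume_image_setOf_mem_and_fderiv_eq_zero hU hf) hnonzero)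
    rw [← image_union]
    exact image_mono fun x hx => or_iff_not_imp_left.2 fun h => ⟨hx, fun h0 => h ⟨hx.1, h0⟩⟩

end VectorSard

section TangentSpaces

variable {V W F : Type*} [NormedAddCommGroup V] [NormedSpace ℝ V] [NormedAddCommGroup W]
  [NormedSpace ℝ W] [NormedAddCommGroup F] [NormedSpace ℝ F] {M U : Set V} {x v : V}

theorem mem_subTangent_of_eventually {γ : ℝ → V} (hx : x ∈ M) (hγM : ∀ᶠ t in 𝓝 0, γ t ∈ M)
    (hγx : γ 0 = x) (hγ : HasDerivAt γ v 0) : v ∈ SubTangent M x := by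
  classical
  refine Submodule.subset_span ⟨fun t => if γ t ∈ M then γ t else x, fun t => ?_, ?_, ?_⟩
  · dsimp only
    split_ifs with h
    exacts [h, hx]
  · simp only [hγx, ite_self]
  · exact hγ.congr_of_eventuallyEq (hγM.mono fun t ht => if_pos ht)

theorem mem_subTangent_of_hasFDerivAt {ψ : W → V} {L : W →L[ℝ] V} {k : W}
    (hψ : HasFDerivAt ψ L k) (hM : ∀ᶠ y in 𝓝 k, ψ y ∈ M) (b : W) : L b ∈ SubTangent M (ψ k) := by
  have hline : HasDerivAt (fun t : ℝ => k + t • b) b 0 := by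
    simpa using ((hasDerivAt_id (0 : ℝ)).smul_const b).const_add k
  have hk : k + (0 : ℝ) • b = k := by simp
  have hlim : Tendsto (fun t : ℝ => k + t • b) (𝓝 0) (𝓝 k) := by
    simpa only [hk] using hline.continuousAt.tendsto
  exact mem_subTangent_of_eventually (γ := ψ ∘ fun t : ℝ => k + t • b) hM.self_of_nhds
    (hlim.eventually hM) (congrArg ψ hk) (HasFDerivAt.comp_hasDerivAt _ (hk.symm ▸ hψ) hline)

theorem eqOn_subTangent_of_hasFDerivAt {f g : V → F} {L L' : V →L[ℝ] F} (hf : HasFDerivAt f L x)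
    (hg : HasFDerivAt g L' x) (h : ∀ᶠ z in 𝓝 x, z ∈ M → f z = g z) :
    EqOn L L' (SubTangent M x) := by
  have hle : SubTangent M x ≤ LinearMap.eqLocus (L : V →ₗ[ℝ] F) (L' : V →ₗ[ℝ] F) := by
    refine Submodule.span_le.2 ?_
    rintro v ⟨γ, hγM, rfl, hγ⟩
    refine (hf.comp_hasDerivAt 0 hγ).unique ((hg.comp_hasDerivAt 0 hγ).congr_of_eventuallyEq ?_)
    filter_upwards [hγ.continuousAt.eventually h] with t ht using ht (hγM t)
  exact fun v hv => hle hv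

theorem HasDerivOn.eqOn_subTangent {f : V → F} {L L' : V →L[ℝ] F} (h : HasDerivOn f M x L)
    (h' : HasDerivOn f M x L') : EqOn L L' (SubTangent M x) := by
  obtain ⟨g, hfg, -, hg⟩ := h
  obtain ⟨g', hfg', -, hg'⟩ := h'
  refine eqOn_subTangent_of_hasFDerivAt hg hg' ?_
  filter_upwards [hfg, hfg'] with z hz hz' hzM using (hz hzM).symm.trans (hz' hzM)

theorem hasDerivOn_of_eqOn {f g : V → F} {L : V →L[ℝ] F} (hx : x ∈ M) (h : EqOn f g M)
    (hg : HasFDerivAt g L x) : HasDerivOn f M x L :=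
  ⟨g, Eventually.of_forall fun _ hz => h hz, h hx, hg⟩

theorem subTangent_prod_univ (hx : x ∈ M) (t : ℝ) :
    SubTangent (M ×ˢ (univ : Set ℝ)) (x, t) =
      (SubTangent M x).comap (LinearMap.fst ℝ V ℝ) := by
  refine le_antisymm (Submodule.span_le.2 ?_) fun v hv => ?_
  · rintro v ⟨γ, hγM, hγx, hγ⟩
    exact Submodule.subset_span
      ⟨fun s => (γ s).1, fun s => (hγM s).1, congrArg Prod.fst hγx, hγ.fst⟩
  · have hinl : (SubTangent M x).map (LinearMap.inl ℝ V ℝ) ≤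
        SubTangent (M ×ˢ (univ : Set ℝ)) (x, t) := by
      refine (Submodule.map_span_le _ _ _).2 ?_
      rintro a ⟨γ, hγM, hγx, hγ⟩
      exact Submodule.subset_span ⟨fun s => (γ s, t), fun s => ⟨hγM s, mem_univ t⟩,
        by simp only [hγx], hγ.prodMk (hasDerivAt_const 0 t)⟩
    have hinr : ((0 : V), v.2) ∈ SubTangent (M ×ˢ (univ : Set ℝ)) (x, t) := by
      refine Submodule.subset_span ⟨fun s => (x, t + s * v.2), fun s => ⟨hx, mem_univ _⟩,
        by simp, (hasDerivAt_const 0 x).prodMk ?_⟩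
      simpa using ((hasDerivAt_id (0 : ℝ)).mul_const v.2).const_add t
    simpa using add_mem (hinl (Submodule.mem_map_of_mem hv)) hinr

/-- `Φ` is a submersion on the open set `U` whose zero set is `M ∩ U`: a local equation of `M`. -/
structure IsDefiningMap (M U : Set V) (Φ : V → F) : Prop where
  isOpen : IsOpen U
  contDiffOn : ContDiffOn ℝ ∞ Φ U
  surjective : ∀ z ∈ U, Surjective (fderiv ℝ Φ z)
  mem_iff : ∀ z ∈ U, z ∈ M ↔ Φ z = 0

namespace IsDefiningMap

variable {Φ : V → F}

theorem hasFDerivAt (h : IsDefiningMap M U Φ) (hx : x ∈ U) : HasFDerivAt Φ (fderiv ℝ Φ x) x :=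
  ((h.contDiffOn.contDiffAt (h.isOpen.mem_nhds hx)).differentiableAt (by simp)).hasFDerivAt

theorem inter_eq (h : IsDefiningMap M U Φ) : U ∩ M = U ∩ Φ ⁻¹' {0} :=
  Set.ext fun z => and_congr_right (h.mem_iff z)

theorem equiv_comp (h : IsDefiningMap M U Φ) (T : F ≃L[ℝ] W) :
    IsDefiningMap M U fun z => T (Φ z) where
  isOpen := h.isOpen
  contDiffOn := T.contDiff.comp_contDiffOn h.contDiffOn
  surjective z hz := by
    have hd : HasFDerivAt (fun z => T (Φ z)) ((T : F →L[ℝ] W).comp (fderiv ℝ Φ z)) z :=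
      (T : F →L[ℝ] W).hasFDerivAt.comp z (h.hasFDerivAt hz)
    rw [hd.fderiv]
    exact T.surjective.comp (h.surjective z hz)
  mem_iff z hz := by rw [h.mem_iff z hz, map_eq_zero_iff T T.injective]

theorem prod_univ (h : IsDefiningMap M U Φ) :
    IsDefiningMap (M ×ˢ (univ : Set ℝ)) (U ×ˢ (univ : Set ℝ)) fun z => Φ z.1 where
  isOpen := h.isOpen.prod isOpen_univ
  contDiffOn := h.contDiffOn.comp contDiff_fst.contDiffOn fun z hz => hz.1
  surjective z hz := by
    have hd : HasFDerivAt (fun z : V × ℝ => Φ z.1) ((fderiv ℝ Φ z.1).comp (.fst ℝ V ℝ)) z :=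
      (h.hasFDerivAt hz.1).comp z hasFDerivAt_fst
    rw [hd.fderiv]
    exact (h.surjective z.1 hz.1).comp Prod.fst_surjective
  mem_iff z hz := by simp only [mem_prod, mem_univ, and_true, h.mem_iff z.1 hz.1]

variable [CompleteSpace V] [FiniteDimensional ℝ F]

theorem exists_parametrization (h : IsDefiningMap M U Φ) (hxU : x ∈ U) (hxM : x ∈ M) :
    ∃ (O : Set (fderiv ℝ Φ x).ker) (ψ : (fderiv ℝ Φ x).ker → V), IsOpen O ∧ 0 ∈ O ∧
      ContDiffOn ℝ ∞ ψ O ∧ ψ 0 = x ∧ fderiv ℝ ψ 0 = (fderiv ℝ Φ x).ker.subtypeL ∧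
      MapsTo ψ O M ∧ ψ '' O ∈ 𝓝[M] x := by
  obtain ⟨Q, e, hQ, hxe, heU, he, hsymm⟩ :=
    exists_chart_of_surjective_fderiv h.isOpen h.contDiffOn hxU (h.surjective x hxU)
  let O : Set (fderiv ℝ Φ x).ker := (fun k => ((0 : F), k)) ⁻¹' e.target
  let ψ : (fderiv ℝ Φ x).ker → V := fun k => e.symm (0, k)
  have hO : IsOpen O := e.open_target.preimage (by fun_prop)
  have heM : ∀ z ∈ e.source, z ∈ M → e z = (0, Q (z - x)) := fun z hz hzM => by
    rw [he, (h.mem_iff z (heU hz)).1 hzM]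
  have hex : e x = (0, 0) := by rw [heM x hxe hxM, sub_self, map_zero]
  have h0O : 0 ∈ O := mem_preimage.2 (hex ▸ e.map_source hxe)
  have hψ : ContDiffOn ℝ ∞ ψ O :=
    hsymm.comp (contDiff_prodMk_right (0 : F)).contDiffOn fun k hk => hk
  have hψx : ψ 0 = x := (congrArg e.symm hex).symm.trans (e.left_inv hxe)
  have heψ : ∀ k ∈ O, Φ (ψ k) = 0 ∧ Q (ψ k - x) = k := fun k hk =>
    Prod.ext_iff.1 ((he _).symm.trans (e.right_inv hk))
  have hψ0 : HasFDerivAt ψ (fderiv ℝ ψ 0) 0 :=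
    ((hψ.contDiffAt (hO.mem_nhds h0O)).differentiableAt (by simp)).hasFDerivAt
  have hΦψ : HasFDerivAt Φ (fderiv ℝ Φ x) (ψ 0) := by
    rw [hψx]
    exact h.hasFDerivAt hxU
  refine ⟨O, ψ, hO, h0O, hψ, hψx, ContinuousLinearMap.ext fun k => ?_,
    fun k hk => (h.mem_iff _ (heU (e.map_target hk))).2 (heψ k hk).1, ?_⟩
  · have hΦk : fderiv ℝ Φ x (fderiv ℝ ψ 0 k) = 0 :=
      DFunLike.congr_fun ((hΦψ.comp 0 hψ0).unique
        ((hasFDerivAt_const (0 : F) 0).congr_of_eventuallyEq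
          (by filter_upwards [hO.mem_nhds h0O] with k hk using (heψ k hk).1))) k
    have hQk : Q (fderiv ℝ ψ 0 k) = k :=
      DFunLike.congr_fun ((Q.hasFDerivAt.comp 0 (hψ0.sub_const x)).unique
        ((hasFDerivAt_id 0).congr_of_eventuallyEq
          (by filter_upwards [hO.mem_nhds h0O] with k hk using (heψ k hk).2))) k
    exact congrArg Subtype.val ((hQ ⟨_, hΦk⟩).symm.trans hQk)
  · refine mem_nhdsWithin.2 ⟨e.source, e.open_source, hxe, fun z hz => ⟨Q (z - x), ?_, ?_⟩⟩
    · exact mem_preimage.2 (heM z hz.1 hz.2 ▸ e.map_source hz.1)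
    · exact (congrArg e.symm (heM z hz.1 hz.2)).symm.trans (e.left_inv hz.1)

theorem subTangent_eq (h : IsDefiningMap M U Φ) (hxU : x ∈ U) (hxM : x ∈ M) :
    SubTangent M x = (fderiv ℝ Φ x).ker := by
  refine le_antisymm (fun v hv => ?_) fun v hv => ?_
  · refine eqOn_subTangent_of_hasFDerivAt (h.hasFDerivAt hxU) (hasFDerivAt_const (0 : F) x) ?_ hv
    filter_upwards [h.isOpen.mem_nhds hxU] with z hz using (h.mem_iff z hz).1
  · obtain ⟨O, ψ, hO, h0O, hψ, hψx, hψ', hψM, -⟩ := h.exists_parametrization hxU hxM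
    have hψ0 := ((hψ.contDiffAt (hO.mem_nhds h0O)).differentiableAt (by simp)).hasFDerivAt
    have hmem := mem_subTangent_of_hasFDerivAt hψ0 (mem_of_superset (hO.mem_nhds h0O) hψM) ⟨v, hv⟩
    rwa [hψx, hψ'] at hmem

end IsDefiningMap

section Submanifolds

variable {m : ℕ}

theorem IsSubmanifold.exists_isDefiningMap (hM : IsSubmanifold M m) (hx : x ∈ M) :
    ∃ (U : Set V) (Φ : V → EuclideanSpace ℝ (Fin (Module.finrank ℝ V - m))),
      x ∈ U ∧ IsDefiningMap M U Φ := by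
  obtain ⟨U, Φ, hU, hxU, hΦ, hsurj, heq⟩ := hM x hx
  exact ⟨U, Φ, hxU, hU, hΦ, hsurj, fun z hz => by simpa [hz] using Set.ext_iff.1 heq z⟩

theorem isSubmanifold_of_isDefiningMap [FiniteDimensional ℝ F]
    (hF : Module.finrank ℝ F = Module.finrank ℝ V - m)
    (h : ∀ x ∈ M, ∃ (U : Set V) (Φ : V → F), x ∈ U ∧ IsDefiningMap M U Φ) :
    IsSubmanifold M m := by
  intro x hx
  obtain ⟨U, Φ, hxU, hΦ⟩ := h x hx
  let T : F ≃L[ℝ] EuclideanSpace ℝ (Fin (Module.finrank ℝ V - m)) :=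
    ContinuousLinearEquiv.ofFinrankEq (by simpa using hF)
  have hTΦ := hΦ.equiv_comp T
  exact ⟨U, _, hTΦ.isOpen, hxU, hTΦ.contDiffOn, hTΦ.surjective, hTΦ.inter_eq⟩

variable [FiniteDimensional ℝ V]

theorem IsSubmanifold.prod_univ (hM : IsSubmanifold M m) :
    IsSubmanifold (M ×ˢ (univ : Set ℝ)) (m + 1) := by
  refine isSubmanifold_of_isDefiningMap (F := EuclideanSpace ℝ (Fin (Module.finrank ℝ V - m)))
    (by simp) fun z hz => ?_
  obtain ⟨U, Φ, hzU, hΦ⟩ := hM.exists_isDefiningMap hz.1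
  exact ⟨U ×ˢ univ, fun z => Φ z.1, mk_mem_prod hzU (mem_univ _), hΦ.prod_univ⟩

open MeasureTheory in
theorem IsSubmanifold.volume_image_critical_eq_zero (hM : IsSubmanifold M m) (hU : IsOpen U)
    {k : ℕ} {f : V → Fin k → ℝ} (hf : ContDiffOn ℝ ∞ f U) :
    volume (f '' {x ∈ M ∩ U | ¬ SurjOn (fderiv ℝ f x) (SubTangent M x) univ}) = 0 := by
  refine measure_image_eq_zero_of_locally fun x hx => ?_
  obtain ⟨U', Φ, hxU', hΦ⟩ := hM.exists_isDefiningMap hx.1.1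
  obtain ⟨O, ψ, hO, -, hψ, -, -, hψM, himage⟩ := hΦ.exists_parametrization hxU' hx.1.1
  obtain ⟨u, hu, huψ⟩ := mem_nhdsWithin_iff_exists_mem_nhds_inter.1 himage
  have hOU : IsOpen (O ∩ ψ ⁻¹' U) := hψ.continuousOn.isOpen_inter_preimage hO hU
  refine ⟨u, hu, measure_mono_null ?_ (volume_image_criticalSet_eq_zero hOU
    (hf.comp (hψ.mono inter_subset_left) fun k hk => hk.2))⟩
  rintro _ ⟨z, ⟨hzu, ⟨hzM, hzU⟩, hcrit⟩, rfl⟩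
  obtain ⟨k, hk, rfl⟩ := huψ ⟨hzu, hzM⟩
  have hψk := ((hψ.contDiffAt (hO.mem_nhds hk)).differentiableAt (by simp)).hasFDerivAt
  have hfψk := ((hf.contDiffAt (hU.mem_nhds hzU)).differentiableAt (by simp)).hasFDerivAt
  refine ⟨k, ⟨⟨hk, hzU⟩, fun hsurj => hcrit fun c _ => ?_⟩, rfl⟩
  rw [(hfψk.comp k hψk).fderiv] at hsurj
  obtain ⟨b, hb⟩ := hsurj c
  exact ⟨_, mem_subTangent_of_hasFDerivAt hψk (mem_of_superset (hO.mem_nhds hk) hψM) b, hb⟩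

theorem IsSubmanifold.exists_regularValue [FiniteDimensional ℝ F] (hM : IsSubmanifold M m)
    (hU : IsOpen U) {f : V → F} (hf : ContDiffOn ℝ ∞ f U) :
    ∃ q, ∀ x ∈ M ∩ U, f x = q → SurjOn (fderiv ℝ f x) (SubTangent M x) univ := by
  let T : F ≃L[ℝ] (Fin (Module.finrank ℝ F) → ℝ) := ContinuousLinearEquiv.ofFinrankEq (by simp)
  have hnull := hM.volume_image_critical_eq_zero hU (T.contDiff.comp_contDiffOn hf)
  obtain ⟨q, hq⟩ := (MeasureTheory.measure_eq_zero_iff_ae_notMem.1 hnull).exists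
  refine ⟨T.symm q, fun x hx hfx => ?_⟩
  by_contra hcrit
  refine hq ⟨x, ⟨hx, fun hsurj => hcrit fun c _ => ?_⟩, by simp [hfx]⟩
  have hfx' := ((hf.contDiffAt (hU.mem_nhds hx.2)).differentiableAt (by simp)).hasFDerivAt
  obtain ⟨v, hv, hvc⟩ := hsurj (mem_univ (T c))
  rw [(T.hasFDerivAt.comp x hfx').fderiv] at hvc
  exact ⟨v, hv, T.injective hvc⟩

end Submanifolds

end TangentSpaces

section SmoothExtensions

variable {V G : Type*} [NormedAddCommGroup V] [NormedSpace ℝ V] [NormedAddCommGroup G]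
  [NormedSpace ℝ G] {f : V → G} {N N' : Set V}

theorem SmoothOnSet.mono (h : SmoothOnSet f N) (hs : N' ⊆ N) : SmoothOnSet f N' := fun x hx => by
  obtain ⟨U, g, hU, hxU, hg, heq⟩ := h x (hs hx)
  exact ⟨U, g, hU, hxU, hg, heq.mono (inter_subset_inter_left _ hs)⟩

open scoped Manifold in
theorem SmoothOnSet.exists_contDiff [FiniteDimensional ℝ V] (hf : SmoothOnSet f N)
    (hN : IsClosed N) : ∃ g : V → G, ContDiff ℝ ∞ g ∧ EqOn f g N := by
  -- the constraint `{f x}` on `N`, and none outside, is convex, so a partition of unity applies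
  let t : V → Set G := fun x => {c | x ∈ N → f x = c}
  have ht : ∀ x, Convex ℝ (t x) := fun x => by
    by_cases hx : x ∈ N
    · simp only [t, hx, true_imp_iff, ofPred_eq_eq_singleton', convex_singleton]
    · simp only [t, hx, false_imp_iff, ofPred_true, convex_univ]
  have hloc : ∀ x, ∃ U ∈ 𝓝 x, ∃ g : V → G,
      ContMDiffOn 𝓘(ℝ, V) 𝓘(ℝ, G) ∞ g U ∧ ∀ y ∈ U, g y ∈ t y := fun x => by
    by_cases hx : x ∈ N
    · obtain ⟨U, g, hU, hxU, hg, heq⟩ := hf x hx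
      exact ⟨U, hU.mem_nhds hxU, g, hg.contMDiffOn, fun y hy hyN => heq ⟨hyN, hy⟩⟩
    · exact ⟨Nᶜ, hN.isOpen_compl.mem_nhds hx, fun _ => 0, contMDiffOn_const,
        fun y hy hyN => absurd hyN hy⟩
  obtain ⟨g, hg⟩ := exists_contMDiffMap_forall_mem_convex_of_local (n := (⊤ : ℕ∞)) 𝓘(ℝ, V) ht hloc
  exact ⟨g, g.contMDiff.contDiff, fun x hx => hg x hx⟩

end SmoothExtensions

section Dimension

variable {V : Type*} [NormedAddCommGroup V] [NormedSpace ℝ V] {M : Set V} {m : ℕ}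

theorem subsingleton_of_isOpen_of_isCompact (hM : IsOpen M) (hMc : IsCompact M)
    (hne : M.Nonempty) : Subsingleton V := by
  have huniv : M = univ := IsClopen.eq_univ ⟨hMc.isClosed, hM⟩ hne
  by_contra h
  rw [not_subsingleton_iff_nontrivial] at h
  have := NormedSpace.noncompactSpace ℝ V
  exact noncompact_univ V (huniv ▸ hMc)

theorem IsSubmanifold.isOpen_of_finrank_le (hM : IsSubmanifold M m)
    (h : Module.finrank ℝ V ≤ m) : IsOpen M := by
  refine isOpen_iff_mem_nhds.2 fun x hx => ?_
  obtain ⟨U, Φ, hxU, hΦ⟩ := hM.exists_isDefiningMap hx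
  have : Subsingleton (EuclideanSpace ℝ (Fin (Module.finrank ℝ V - m))) := by
    rw [Nat.sub_eq_zero_of_le h]
    infer_instance
  filter_upwards [hΦ.isOpen.mem_nhds hxU] with z hz
  exact (hΦ.mem_iff z hz).2 (Subsingleton.elim _ _)

-- `IsSubmanifold` truncates `finrank ℝ V - m`, so `m` may exceed `finrank ℝ V`; and `V` may be
-- infinite-dimensional, with `finrank ℝ V = 0`.
theorem IsSubmanifold.le_finrank_or_finrank_eq_zero (hM : IsSubmanifold M m) (hMc : IsCompact M)
    (hne : M.Nonempty) : m ≤ Module.finrank ℝ V ∨ Module.finrank ℝ V = 0 := by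
  refine (le_total m _).imp_right fun h => ?_
  have := subsingleton_of_isOpen_of_isCompact (hM.isOpen_of_finrank_le h) hMc hne
  exact Module.finrank_zero_of_subsingleton

theorem IsSubmanifold.finiteDimensional (hM : IsSubmanifold M m) (hMc : IsCompact M)
    (hne : M.Nonempty) : FiniteDimensional ℝ V := by
  by_contra h
  have h0 : Module.finrank ℝ V = 0 := Module.finrank_of_not_finite h
  have := subsingleton_of_isOpen_of_isCompact
    (hM.isOpen_of_finrank_le (h0.trans_le (Nat.zero_le m))) hMc hne
  exact h inferInstance

end Dimension

section TangentialLifts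

variable {V F : Type*} [NormedAddCommGroup V] [NormedSpace ℝ V] [NormedAddCommGroup F]
  [NormedSpace ℝ F] {B : V →L[ℝ] V →L[ℝ] ℝ} {T : Submodule ℝ V} {A A' : V →L[ℝ] F} {c : F}
  {u u' : V} {ι : Type*}

/-- `u` is the vector of `T` lifting `c` along `A` and `B`-orthogonal to the kernel of `A` on `T`.
The framing induced by an equation `ζ` consists of the lifts of the basis vectors along its
derivative. -/
structure IsOrthogonalLift (B : V →L[ℝ] V →L[ℝ] ℝ) (T : Submodule ℝ V) (A : V →L[ℝ] F) (c : F)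
    (u : V) : Prop where
  mem : u ∈ T
  map_eq : A u = c
  orth : ∀ v ∈ T, A v = 0 → B u v = 0

theorem IsOrthogonalLift.congr (h : IsOrthogonalLift B T A c u) (hA : EqOn A A' T) :
    IsOrthogonalLift B T A' c u where
  mem := h.mem
  map_eq := (hA h.mem).symm.trans h.map_eq
  orth v hv hv0 := h.orth v hv ((hA hv).trans hv0)

theorem IsOrthogonalLift.unique (h : IsOrthogonalLift B T A c u)
    (h' : IsOrthogonalLift B T A c u') (hB : Anisotropic B) : u = u' := by
  have hmem : u - u' ∈ T := T.sub_mem h.mem h'.mem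
  have hker : A (u - u') = 0 := by rw [map_sub, h.map_eq, h'.map_eq, sub_self]
  refine sub_eq_zero.1 (hB _ ?_)
  rw [map_sub B, sub_apply, h.orth _ hmem hker, h'.orth _ hmem hker, sub_zero]

theorem linearIndependent_of_map_eq_basis (b : Module.Basis ι ℝ F) {u : ι → V}
    (h : ∀ i, A (u i) = b i) : LinearIndependent ℝ u :=
  LinearIndependent.of_comp (A : V →ₗ[ℝ] F)
    ((funext h : (A : V →ₗ[ℝ] F) ∘ u = b) ▸ b.linearIndependent)

theorem inf_ker_sup_span_range_eq (b : Module.Basis ι ℝ F) {u : ι → V} (hu : ∀ i, u i ∈ T)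
    (h : ∀ i, A (u i) = b i) : T ⊓ A.ker ⊔ Submodule.span ℝ (range u) = T := by
  have hspan : Submodule.span ℝ (range u) ≤ T :=
    Submodule.span_le.2 (range_subset_iff.2 hu)
  refine le_antisymm (sup_le inf_le_left hspan) fun v hv => ?_
  have hmap : A v ∈ (Submodule.span ℝ (range u)).map (A : V →ₗ[ℝ] F) := by
    rw [Submodule.map_span, ← range_comp, (funext h : (A : V →ₗ[ℝ] F) ∘ u = b), b.span_eq]
    exact Submodule.mem_top
  obtain ⟨w, hw, hwv⟩ := hmap
  rw [← sub_add_cancel v w]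
  refine Submodule.add_mem_sup ⟨T.sub_mem hv (hspan hw), ?_⟩ hw
  exact (map_sub A v w).trans (sub_eq_zero.2 hwv.symm)

end TangentialLifts

section RegularLevels

variable {V F G : Type*} [NormedAddCommGroup V] [NormedSpace ℝ V] [NormedAddCommGroup F]
  [NormedSpace ℝ F] [NormedAddCommGroup G] [NormedSpace ℝ G] {M O U : Set V} {ζ : V → F}
  {Φ : V → G} {x : V} {m : ℕ}

/-- The zero set of `ζ` in `M ∩ O`. -/
def levelSet (M O : Set V) (ζ : V → F) : Set V :=
  {x | x ∈ M ∧ x ∈ O ∧ ζ x = 0}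

theorem IsDefiningMap.exists_isDefiningMap_levelSet [CompleteSpace V] [FiniteDimensional ℝ F]
    [FiniteDimensional ℝ G] (hΦ : IsDefiningMap M U Φ) (hxU : x ∈ U) (hO : IsOpen O)
    (hζ : ContDiffOn ℝ ∞ ζ O) (hx : x ∈ levelSet M O ζ)
    (hsurj : SurjOn (fderiv ℝ ζ x) (SubTangent M x) univ) :
    ∃ U' ⊆ U, x ∈ U' ∧ IsDefiningMap (levelSet M O ζ) U' (fun z => (Φ z, ζ z)) ∧
      ∀ z ∈ U', fderiv ℝ (fun z => (Φ z, ζ z)) z = (fderiv ℝ Φ z).prod (fderiv ℝ ζ z) := by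
  have hopen : IsOpen (U ∩ O) := hΦ.isOpen.inter hO
  have hd : ∀ z ∈ U ∩ O, fderiv ℝ (fun z => (Φ z, ζ z)) z =
      (fderiv ℝ Φ z).prod (fderiv ℝ ζ z) :=
    fun z hz => ((hΦ.hasFDerivAt hz.1).prodMk
      ((hζ.contDiffAt (hO.mem_nhds hz.2)).differentiableAt (by simp)).hasFDerivAt).fderiv
  have hsmooth : ContDiffOn ℝ ∞ (fun z => (Φ z, ζ z)) (U ∩ O) :=
    (hΦ.contDiffOn.mono inter_subset_left).prodMk (hζ.mono inter_subset_right)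
  have hcont : ContinuousOn (fderiv ℝ fun z => (Φ z, ζ z)) (U ∩ O) :=
    hsmooth.continuousOn_fderiv_of_isOpen hopen (by simp)
  have hsurj' : Surjective (fderiv ℝ (fun z => (Φ z, ζ z)) x) := by
    rw [hd x ⟨hxU, hx.2.1⟩]
    rintro ⟨a, c⟩
    obtain ⟨v, hv⟩ := hΦ.surjective x hxU a
    obtain ⟨w, hw, hwc⟩ := hsurj (mem_univ (c - fderiv ℝ ζ x v))
    rw [hΦ.subTangent_eq hxU hx.1] at hw
    have hw0 : fderiv ℝ Φ x w = 0 := hw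
    exact ⟨v + w, by simp [hv, hw0, hwc]⟩
  refine ⟨(U ∩ O) ∩ fderiv ℝ (fun z => (Φ z, ζ z)) ⁻¹' {L | Surjective L}, fun z hz => hz.1.1,
    ⟨⟨hxU, hx.2.1⟩, hsurj'⟩, ⟨hcont.isOpen_inter_preimage hopen isOpen_setOf_surjective,
    hsmooth.mono inter_subset_left, fun z hz => hz.2, fun z hz => ?_⟩, fun z hz => hd z hz.1⟩
  simp only [levelSet, mem_ofPred_eq, hΦ.mem_iff z hz.1.1, hz.1.2, true_and, Prod.mk_eq_zero]

/-- `0` is a regular value of the restriction to `M ∩ O` of the smooth map `ζ`. -/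
structure IsRegularLevel (M O : Set V) (ζ : V → F) : Prop where
  isOpen : IsOpen O
  contDiffOn : ContDiffOn ℝ ∞ ζ O
  surjOn : ∀ x ∈ levelSet M O ζ, SurjOn (fderiv ℝ ζ x) (SubTangent M x) univ

namespace IsRegularLevel

theorem hasFDerivAt (h : IsRegularLevel M O ζ) (hx : x ∈ O) : HasFDerivAt ζ (fderiv ℝ ζ x) x :=
  ((h.contDiffOn.contDiffAt (h.isOpen.mem_nhds hx)).differentiableAt (by simp)).hasFDerivAt

theorem mono {O' : Set V} (h : IsRegularLevel M O ζ) (hO' : IsOpen O') (hO : O' ⊆ O) :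
    IsRegularLevel M O' ζ where
  isOpen := hO'
  contDiffOn := h.contDiffOn.mono hO
  surjOn x hx := h.surjOn x ⟨hx.1, hO hx.2.1, hx.2.2⟩

variable [CompleteSpace V] [FiniteDimensional ℝ F] [FiniteDimensional ℝ G]

theorem exists_isDefiningMap (h : IsRegularLevel M O ζ) (hx : x ∈ levelSet M O ζ) (hxU : x ∈ U)
    (hΦ : IsDefiningMap M U Φ) :
    ∃ U' ⊆ U, x ∈ U' ∧ IsDefiningMap (levelSet M O ζ) U' (fun z => (Φ z, ζ z)) ∧
      ∀ z ∈ U', fderiv ℝ (fun z => (Φ z, ζ z)) z = (fderiv ℝ Φ z).prod (fderiv ℝ ζ z) :=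
  hΦ.exists_isDefiningMap_levelSet hxU h.isOpen h.contDiffOn hx (h.surjOn x hx)

theorem subTangent_eq (h : IsRegularLevel M O ζ) (hM : IsSubmanifold M m)
    (hx : x ∈ levelSet M O ζ) :
    SubTangent (levelSet M O ζ) x = SubTangent M x ⊓ (fderiv ℝ ζ x).ker := by
  obtain ⟨U, Φ, hxU, hΦ⟩ := hM.exists_isDefiningMap hx.1
  obtain ⟨U', -, hxU', hΦ', hd⟩ := h.exists_isDefiningMap hx hxU hΦ
  rw [hΦ'.subTangent_eq hxU' hx, hΦ.subTangent_eq hxU hx.1, hd x hxU']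
  exact ContinuousLinearMap.ker_prod _ _

theorem exists_smooth_isOrthogonalLift [FiniteDimensional ℝ V] {B : V →L[ℝ] V →L[ℝ] ℝ}
    (h : IsRegularLevel M O ζ) (hM : IsSubmanifold M m) (hB : Anisotropic B) (c : F) :
    ∃ u : V → V, SmoothOnSet u (levelSet M O ζ) ∧ ∀ x ∈ levelSet M O ζ,
      IsOrthogonalLift B (SubTangent M x) (fderiv ℝ ζ x) c (u x) := by
  have hloc : ∀ x ∈ levelSet M O ζ, ∃ (U : Set V) (g : V → V), IsOpen U ∧ x ∈ U ∧
      ContDiffOn ℝ ∞ g U ∧ ∀ z ∈ levelSet M O ζ, z ∈ U →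
        IsOrthogonalLift B (SubTangent M z) (fderiv ℝ ζ z) c (g z) := by
    intro x hx
    obtain ⟨U, Φ, hxU, hΦ⟩ := hM.exists_isDefiningMap hx.1
    obtain ⟨U', hU', hxU', hΦ', hd⟩ := h.exists_isDefiningMap hx hxU hΦ
    refine ⟨U', fun z => orthLift B (fderiv ℝ (fun z => (Φ z, ζ z)) z) (0, c), hΦ'.isOpen, hxU',
      fun z hz => ?_, fun z hzl hz => ?_⟩
    · exact ((hB.contDiffAt_orthLift (hΦ'.surjective z hz) (0, c)).comp z
        ((hΦ'.contDiffOn.contDiffAt (hΦ'.isOpen.mem_nhds hz)).fderiv_right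
          (by simp))).contDiffWithinAt
    · have hmap := hB.map_orthLift (hΦ'.surjective z hz) (0, c)
      have horth : ∀ v, fderiv ℝ (fun z => (Φ z, ζ z)) z v = 0 → _ :=
        fun v hv => hB.orthLift_orthogonal (0, c) hv
      beta_reduce
      rw [hd z hz] at hmap horth ⊢
      rw [hΦ.subTangent_eq (hU' hz) hzl.1]
      exact ⟨congrArg Prod.fst hmap, congrArg Prod.snd hmap,
        fun v hv hv0 => horth v (Prod.ext hv hv0)⟩
  choose! U g hU hxU hg hlift using hloc
  refine ⟨fun x => g x x, fun x hx => ⟨U x, g x, hU x hx, hxU x hx, hg x hx, fun z hz => ?_⟩,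
    fun x hx => hlift x hx x hx (hxU x hx)⟩
  exact (hlift z hz.1 z hz.1 (hxU z hz.1)).unique (hlift x hx z hz.1 hz.2) hB

theorem finrank_le (h : IsRegularLevel M O ζ) (hM : IsSubmanifold M m) [FiniteDimensional ℝ V]
    (hx : x ∈ levelSet M O ζ) :
    Module.finrank ℝ V - m + Module.finrank ℝ F ≤ Module.finrank ℝ V := by
  obtain ⟨U, Φ, hxU, hΦ⟩ := hM.exists_isDefiningMap hx.1
  obtain ⟨U', -, hxU', hΦ', -⟩ := h.exists_isDefiningMap hx hxU hΦ
  simpa using LinearMap.finrank_le_finrank_of_surjective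
    (f := (fderiv ℝ (fun z => (Φ z, ζ z)) x).toLinearMap) (hΦ'.surjective x hxU')

theorem isSubmanifold {k : ℕ} (h : IsRegularLevel M O ζ) (hM : IsSubmanifold M m)
    (hk : Module.finrank ℝ V - k = Module.finrank ℝ V - m + Module.finrank ℝ F) :
    IsSubmanifold (levelSet M O ζ) k := by
  refine isSubmanifold_of_isDefiningMap
    (F := EuclideanSpace ℝ (Fin (Module.finrank ℝ V - m)) × F) (by simpa using hk.symm)
    fun x hx => ?_
  obtain ⟨U, Φ, hxU, hΦ⟩ := hM.exists_isDefiningMap hx.1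
  obtain ⟨U', -, hxU', hΦ', -⟩ := h.exists_isDefiningMap hx hxU hΦ
  exact ⟨U', _, hxU', hΦ'⟩

end IsRegularLevel

/-- On the zero set of `ζ`, the field `ν i` is the `B`-orthogonal lift of the `i`-th standard basis
vector along the derivative of `ζ`. -/
def IsLevelFrame {ι : Type*} [Fintype ι] [DecidableEq ι] (B : V →L[ℝ] V →L[ℝ] ℝ) (M O : Set V)
    (ζ : V → ι → ℝ) (ν : ι → V → V) : Prop :=
  ∀ x ∈ levelSet M O ζ, ∀ i,
    IsOrthogonalLift B (SubTangent M x) (fderiv ℝ ζ x) (Pi.single i 1) (ν i x)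

section LevelFrames

variable {ι : Type*} [Fintype ι] [DecidableEq ι] {B : V →L[ℝ] V →L[ℝ] ℝ} {ζ : V → ι → ℝ}
  {ν : ι → V → V}

theorem IsRegularLevel.exists_isLevelFrame [FiniteDimensional ℝ V] (h : IsRegularLevel M O ζ)
    (hM : IsSubmanifold M m) (hB : Anisotropic B) :
    ∃ ν : ι → V → V, (∀ i, SmoothOnSet (ν i) (levelSet M O ζ)) ∧ IsLevelFrame B M O ζ ν := by
  choose ν hν hlift using fun i : ι =>
    h.exists_smooth_isOrthogonalLift hM hB (Pi.single i 1)
  exact ⟨ν, hν, fun x hx i => hlift i x hx⟩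

namespace IsLevelFrame

theorem mono {O' : Set V} (hν : IsLevelFrame B M O ζ ν) (hO : O' ⊆ O) :
    IsLevelFrame B M O' ζ ν :=
  fun x hx => hν x ⟨hx.1, hO hx.2.1, hx.2.2⟩

theorem linearIndependent (hν : IsLevelFrame B M O ζ ν) (hx : x ∈ levelSet M O ζ) :
    LinearIndependent ℝ fun i => ν i x :=
  linearIndependent_of_map_eq_basis (Pi.basisFun ℝ ι) fun i => by
    rw [(hν x hx i).map_eq, Pi.basisFun_apply]

variable [CompleteSpace V]

theorem orthogonal (hν : IsLevelFrame B M O ζ ν) (h : IsRegularLevel M O ζ)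
    (hM : IsSubmanifold M m) (hx : x ∈ levelSet M O ζ) (i : ι) {v : V}
    (hv : v ∈ SubTangent (levelSet M O ζ) x) : B (ν i x) v = 0 := by
  rw [h.subTangent_eq hM hx] at hv
  exact (hν x hx i).orth v hv.1 hv.2

theorem sup_span_range_eq (hν : IsLevelFrame B M O ζ ν) (h : IsRegularLevel M O ζ)
    (hM : IsSubmanifold M m) (hx : x ∈ levelSet M O ζ) :
    SubTangent (levelSet M O ζ) x ⊔ Submodule.span ℝ (range fun i => ν i x) = SubTangent M x := by
  rw [h.subTangent_eq hM hx]
  exact inf_ker_sup_span_range_eq (Pi.basisFun ℝ ι) (fun i => (hν x hx i).mem)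
    fun i => by rw [(hν x hx i).map_eq, Pi.basisFun_apply]

end IsLevelFrame

end LevelFrames

end RegularLevels

section SplitCoordinates

variable {V W : Type*} [NormedAddCommGroup W] [NormedSpace ℝ W] {p : ℕ}
  (b b' : Module.Basis (Fin (p + 1)) ℝ W)

/-- The coordinates of a vector in a basis, with the first one split off. -/
def splitCoord : W ≃L[ℝ] ℝ × (Fin p → ℝ) :=
  haveI := b.finiteDimensional_of_finite
  b.equivFunL.trans (Fin.consEquivL ℝ fun _ => ℝ).symm

theorem splitCoord_apply (v : W) :
    splitCoord b v = (b.repr v 0, fun i : Fin p => b.repr v i.succ) :=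
  rfl

theorem splitCoord_zero : splitCoord b (b 0) = (1, 0) := by
  ext i <;> simp [splitCoord_apply]

theorem splitCoord_succ (i : Fin p) : splitCoord b (b i.succ) = (0, Pi.single i 1) := by
  ext j <;> simp [splitCoord_apply, Finsupp.single_apply, Pi.single_apply, eq_comm]

theorem splitCoord_symm_apply (z : ℝ × (Fin p → ℝ)) :
    (splitCoord b).symm z = z.1 • b 0 + ∑ i, z.2 i • b i.succ := by
  refine (ContinuousLinearEquiv.symm_apply_eq _).2 ?_
  simp only [map_add, map_smul, map_sum, splitCoord_zero, splitCoord_succ]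
  ext j <;> simp [Prod.fst_sum, Prod.snd_sum, Finset.sum_apply, Pi.single_apply]

theorem splitCoord_symm_fst (r : ℝ) : (splitCoord b).symm (r, 0) = r • b 0 := by
  simp [splitCoord_symm_apply]

variable {b b'} in
theorem splitCoord_map {P : W →L[ℝ] W} (hP : ∀ i, P (b' i) = b i) (v : W) :
    splitCoord b (P v) = splitCoord b' v := by
  refine DFunLike.congr_fun (b'.ext (f₁ := ((splitCoord b).toLinearMap.comp P.toLinearMap))
    (f₂ := (splitCoord b').toLinearMap) fun i => ?_) v
  refine Fin.cases ?_ (fun i => ?_) i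
  · simp [hP, splitCoord_zero]
  · simp [hP, splitCoord_succ]

/-- The domain on which `rayEquation b F` cuts out the preimage under `F` of the open ray through
`b 0`. -/
def rayDomain (F : V → W) : Set V :=
  {x | 0 < (splitCoord b (F x)).1}

/-- The coordinates of `F` transverse to the line spanned by `b 0`. -/
def rayEquation (F : V → W) (x : V) : Fin p → ℝ :=
  (splitCoord b (F x)).2

variable {b} {F : V → W} {M : Set V} {x : V}

theorem mem_levelSet_ray_iff :
    x ∈ levelSet M (rayDomain b F) (rayEquation b F) ↔ x ∈ M ∧ ∃ r : ℝ, 0 < r ∧ F x = r • b 0 := by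
  refine and_congr_right fun _ => ⟨fun h => ⟨_, h.1, ?_⟩, ?_⟩
  · rw [← splitCoord_symm_fst, ContinuousLinearEquiv.eq_symm_apply]
    exact Prod.ext rfl h.2
  · rintro ⟨r, hr, hx⟩
    simp [rayDomain, rayEquation, hx, splitCoord_zero, hr]

theorem isOpen_rayDomain [TopologicalSpace V] (hF : Continuous F) : IsOpen (rayDomain b F) :=
  isOpen_lt continuous_const ((splitCoord b).continuous.comp hF).fst

variable [NormedAddCommGroup V] [NormedSpace ℝ V]

theorem contDiff_rayEquation (hF : ContDiff ℝ ∞ F) : ContDiff ℝ ∞ (rayEquation b F) :=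
  ((splitCoord b).contDiff.comp hF).snd

theorem fderiv_rayEquation (hF : DifferentiableAt ℝ F x) (v : V) :
    fderiv ℝ (rayEquation b F) x v = (splitCoord b (fderiv ℝ F x v)).2 :=
  DFunLike.congr_fun
    (((splitCoord b).hasFDerivAt.comp x hF.hasFDerivAt).snd.fderiv) v

end SplitCoordinates

section Sphere

variable {p : ℕ} {y : EuclideanSpace ℝ (Fin (p + 1))}
  {w : Fin p → EuclideanSpace ℝ (Fin (p + 1))}

theorem norm_eq_one_of_mem_sphereSet (hy : y ∈ sphereSet p) : ‖y‖ = 1 :=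
  mem_sphere_zero_iff_norm.1 hy

theorem isDefiningMap_sphereSet (p : ℕ) :
    IsDefiningMap (sphereSet p) {0}ᶜ fun z => ‖z‖ ^ 2 - 1 where
  isOpen := isOpen_compl_singleton
  contDiffOn := ((contDiff_norm_sq ℝ).sub contDiff_const).contDiffOn
  surjective z hz c := by
    rw [((hasStrictFDerivAt_norm_sq z).hasFDerivAt.sub_const 1).fderiv]
    have hz : ‖z‖ ≠ 0 := norm_ne_zero_iff.2 hz
    refine ⟨(c / (2 * ‖z‖ ^ 2)) • z, ?_⟩
    simp only [map_smul, smul_apply, innerSL_apply_apply, real_inner_self_eq_norm_sq, smul_eq_mul,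
      nsmul_eq_mul, Nat.cast_ofNat]
    field_simp
  mem_iff z _ := by
    rw [sphereSet, mem_sphere_zero_iff_norm, sub_eq_zero,
      pow_eq_one_iff_of_nonneg (norm_nonneg z) two_ne_zero]

theorem mem_subTangent_sphereSet_iff (hy : y ∈ sphereSet p) {u : EuclideanSpace ℝ (Fin (p + 1))} :
    u ∈ SubTangent (sphereSet p) y ↔ ⟪y, u⟫ = 0 := by
  have hy0 : y ≠ 0 := ne_zero_of_mem_unit_sphere (⟨y, hy⟩ : sphere _ 1)
  rw [(isDefiningMap_sphereSet p).subTangent_eq hy0 hy, LinearMap.mem_ker,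
    ((hasStrictFDerivAt_norm_sq y).hasFDerivAt.sub_const 1).fderiv]
  simp

namespace PosOrientedTangentBasis

theorem linearIndependent (hw : PosOrientedTangentBasis p y w) :
    LinearIndependent ℝ (Fin.cons y w : Fin (p + 1) → EuclideanSpace ℝ (Fin (p + 1))) := by
  have hrows := Matrix.linearIndependent_rows_iff_isUnit.2
    ((Matrix.isUnit_iff_isUnit_det _).2 (isUnit_iff_ne_zero.2 hw.2.ne'))
  exact LinearIndependent.of_comp (WithLp.linearEquiv 2 ℝ (Fin (p + 1) → ℝ)).toLinearMap hrows

/-- The basis `y, w₁, …, w_p` of the ambient space of the sphere. -/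
def basis (hw : PosOrientedTangentBasis p y w) :
    Module.Basis (Fin (p + 1)) ℝ (EuclideanSpace ℝ (Fin (p + 1))) :=
  basisOfLinearIndependentOfCardEqFinrank hw.linearIndependent (by simp)

theorem basis_zero (hw : PosOrientedTangentBasis p y w) : hw.basis 0 = y := by
  simp [basis]

theorem basis_succ (hw : PosOrientedTangentBasis p y w) (i : Fin p) : hw.basis i.succ = w i := by
  simp [basis]

theorem det_basis_pos (hw : PosOrientedTangentBasis p y w) :
    0 < (Matrix.of fun i j => hw.basis i j).det := by
  simpa [basis] using hw.2

variable (hw : PosOrientedTangentBasis p y w) (hy : y ∈ sphereSet p)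
  {u : EuclideanSpace ℝ (Fin (p + 1))}

include hy in
theorem splitCoord_fst (v : EuclideanSpace ℝ (Fin (p + 1))) :
    (splitCoord hw.basis v).1 = ⟪y, v⟫ := by
  have h : ⟪y, (splitCoord hw.basis).symm (splitCoord hw.basis v)⟫ = (splitCoord hw.basis v).1 := by
    rw [splitCoord_symm_apply, hw.basis_zero, inner_add_right, inner_smul_right, inner_sum,
      real_inner_self_eq_norm_sq, norm_eq_one_of_mem_sphereSet hy]
    simp [hw.basis_succ, inner_smul_right, hw.1]
  rw [← h, ContinuousLinearEquiv.symm_apply_apply]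

theorem splitCoord_eq (i : Fin p) : splitCoord hw.basis (w i) = (0, Pi.single i 1) := by
  rw [← hw.basis_succ, splitCoord_succ]

include hy in
theorem exists_mem_subTangent (c : Fin p → ℝ) :
    ∃ u ∈ SubTangent (sphereSet p) y, (splitCoord hw.basis u).2 = c := by
  refine ⟨(splitCoord hw.basis).symm (0, c), ?_, by simp⟩
  rw [mem_subTangent_sphereSet_iff hy, ← hw.splitCoord_fst hy]
  simp

include hy in
theorem eq_iff_splitCoord_snd (hu : u ∈ SubTangent (sphereSet p) y) (i : Fin p) :
    u = w i ↔ (splitCoord hw.basis u).2 = Pi.single i 1 := by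
  rw [mem_subTangent_sphereSet_iff hy, ← hw.splitCoord_fst hy] at hu
  rw [← (splitCoord hw.basis).injective.eq_iff, hw.splitCoord_eq, Prod.ext_iff, hu]
  exact and_iff_right rfl

include hy in
theorem levelSet_ray_eq {E : Type*} [NormedAddCommGroup E] [InnerProductSpace ℝ E] {M : Set E}
    {F : E → EuclideanSpace ℝ (Fin (p + 1))} (hFS : MapsTo F M (sphereSet p)) :
    levelSet M (rayDomain hw.basis F) (rayEquation hw.basis F) = {x ∈ M | F x = y} := by
  ext x
  rw [mem_levelSet_ray_iff, hw.basis_zero]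
  refine and_congr_right fun hx => ⟨?_, fun h => ⟨1, one_pos, by rw [h, one_smul]⟩⟩
  rintro ⟨r, hr, hFx⟩
  have hnorm := norm_eq_one_of_mem_sphereSet (hFS hx)
  rw [hFx, norm_smul, norm_eq_one_of_mem_sphereSet hy, mul_one, Real.norm_of_nonneg hr.le] at hnorm
  rw [hFx, hnorm, one_smul]

end PosOrientedTangentBasis

end Sphere

section PontryaginManifolds

variable {m p}

theorem anisotropic_innerSL : Anisotropic (innerSL ℝ : E →L[ℝ] E →L[ℝ] ℝ) :=
  fun _ hv => inner_self_eq_zero.1 hv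

theorem HasDerivOn.map_mem_subTangent {V W : Type*} [NormedAddCommGroup V] [NormedSpace ℝ V]
    [NormedAddCommGroup W] [NormedSpace ℝ W] {M : Set V} {S : Set W} {f : V → W} {x v : V}
    {L : V →L[ℝ] W} (h : HasDerivOn f M x L) (hf : MapsTo f M S) (hv : v ∈ SubTangent M x) :
    L v ∈ SubTangent S (f x) := by
  obtain ⟨g, hfg, hx, hg⟩ := h
  have hle : SubTangent M x ≤ (SubTangent S (f x)).comap L.toLinearMap := by
    refine Submodule.span_le.2 ?_
    rintro v ⟨γ, hγM, rfl, hγ⟩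
    refine Submodule.subset_span ⟨f ∘ γ, fun t => hf (hγM t), rfl,
      (hg.comp_hasDerivAt 0 hγ).congr_of_eventuallyEq ?_⟩
    filter_upwards [hγ.continuousAt.eventually hfg] with t ht using ht (hγM t)
  exact hle hv

variable {M} {N : Set E} {F f : E → EuclideanSpace ℝ (Fin (p + 1))}
  {y : EuclideanSpace ℝ (Fin (p + 1))} {w : Fin p → EuclideanSpace ℝ (Fin (p + 1))}
  {ν : Fin p → E → E}

theorem HasDerivOn.congr {x : E} {L : E →L[ℝ] EuclideanSpace ℝ (Fin (p + 1))}
    (h : HasDerivOn f M x L) (hf : EqOn f F M) (hx : x ∈ M) : HasDerivOn F M x L := by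
  obtain ⟨g, hfg, hxg, hg⟩ := h
  exact ⟨g, hfg.mono fun z hz hzM => (hf hzM).symm.trans (hz hzM), (hf hx).symm.trans hxg, hg⟩

theorem IsPontryaginManifold.congr (h : IsPontryaginManifold m p f M y w N ν)
    (hf : EqOn f F M) : IsPontryaginManifold m p F M y w N ν where
  framed := h.framed
  mem_sphere := h.mem_sphere
  basis := h.basis
  regular x hx hxy := by
    obtain ⟨L, hL, hle⟩ := h.regular x hx ((hf hx).trans hxy)
    exact ⟨L, hL.congr hf hx, hle⟩
  preimage := h.preimage.trans (Set.ext fun x => and_congr_right fun hx => by rw [hf hx])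
  pullback x hx := by
    obtain ⟨L, hL, hLw⟩ := h.pullback x hx
    exact ⟨L, hL.congr hf (h.framed.subset hx), hLw⟩

theorem hasDerivOn_fderiv (hF : ContDiff ℝ ∞ F) {x : E} (hx : x ∈ M) :
    HasDerivOn F M x (fderiv ℝ F x) :=
  hasDerivOn_of_eqOn hx (fun _ _ => rfl) (hF.differentiable (by simp) x).hasFDerivAt

theorem IsRegularValue.isRegularLevel (h : IsRegularValue p F M y) (hF : ContDiff ℝ ∞ F)
    (hFS : MapsTo F M (sphereSet p)) (hy : y ∈ sphereSet p) (hw : PosOrientedTangentBasis p y w) :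
    IsRegularLevel M (rayDomain hw.basis F) (rayEquation hw.basis F) where
  isOpen := isOpen_rayDomain hF.continuous
  contDiffOn := (contDiff_rayEquation hF).contDiffOn
  surjOn x hx c _ := by
    rw [hw.levelSet_ray_eq hy hFS] at hx
    obtain ⟨L, hL, hle⟩ := h x hx.1 hx.2
    obtain ⟨u, hu, huc⟩ := hw.exists_mem_subTangent hy c
    obtain ⟨v, hv, rfl⟩ := hle hu
    refine ⟨v, hv, ?_⟩
    rw [fderiv_rayEquation (hF.differentiable (by simp) x),
      (hasDerivOn_fderiv hF hx.1).eqOn_subTangent hL hv]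
    exact huc

theorem fderiv_eq_iff_fderiv_rayEquation_eq (hF : ContDiff ℝ ∞ F)
    (hFS : MapsTo F M (sphereSet p)) (hw : PosOrientedTangentBasis p y w) {x v : E} (hx : x ∈ M)
    (hxy : F x = y) (hv : v ∈ SubTangent M x) (i : Fin p) :
    fderiv ℝ F x v = w i ↔ fderiv ℝ (rayEquation hw.basis F) x v = Pi.single i 1 := by
  have hmem := (hasDerivOn_fderiv hF hx).map_mem_subTangent hFS hv
  rw [hxy] at hmem
  rw [hw.eq_iff_splitCoord_snd (hxy ▸ hFS hx) hmem,
    fderiv_rayEquation (hF.differentiable (by simp) x)]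

theorem IsPontryaginManifold.isLevelFrame [FiniteDimensional ℝ E]
    (h : IsPontryaginManifold m p F M y w N ν)
    (hM : IsSubmanifold M m) (hF : ContDiff ℝ ∞ F) (hFS : MapsTo F M (sphereSet p)) :
    IsLevelFrame (innerSL ℝ) M (rayDomain h.basis.basis F) (rayEquation h.basis.basis F) ν := by
  have hN := (h.basis.levelSet_ray_eq h.mem_sphere hFS).trans h.preimage.symm
  intro x hx i
  have hxN : x ∈ N := hN ▸ hx
  have hν := h.framed.framing.mem_tangent i x hxN
  have hxMy : x ∈ {x ∈ M | F x = y} := h.preimage ▸ hxN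
  refine ⟨hν, ?_, fun v hv hv0 => h.framed.framing.orth i x hxN v ?_⟩
  · rw [← fderiv_eq_iff_fderiv_rayEquation_eq hF hFS h.basis hxMy.1 hxMy.2 hν]
    obtain ⟨L, hL, hLw⟩ := h.pullback x hxN
    rw [(hasDerivOn_fderiv hF hxMy.1).eqOn_subTangent hL hν, hLw]
  · have hreg := h.regular.isRegularLevel hF hFS h.mem_sphere h.basis
    rw [← hN, hreg.subTangent_eq hM hx]
    exact ⟨hv, hv0⟩

theorem IsLevelFrame.isFraming [FiniteDimensional ℝ E] {O : Set E} {ζ : E → Fin p → ℝ}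
    (hlift : IsLevelFrame (innerSL ℝ) M O ζ ν) (h : IsRegularLevel M O ζ)
    (hM : IsSubmanifold M m) (hν : ∀ i, SmoothOnSet (ν i) (levelSet M O ζ)) :
    IsFraming M (levelSet M O ζ) p ν where
  smooth := hν
  mem_tangent i x hx := (hlift x hx i).mem
  orth i _ hx _ hv := hlift.orthogonal h hM hx i hv
  indep _ hx := hlift.linearIndependent hx
  spans _ hx := hlift.sup_span_range_eq h hM hx

theorem IsRegularLevel.isSubmanifold_of_isCompact [FiniteDimensional ℝ E] {O : Set E}
    {ζ : E → Fin p → ℝ} (h : IsRegularLevel M O ζ) (hM : IsSubmanifold M m) (hMc : IsCompact M) :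
    IsSubmanifold (levelSet M O ζ) (m - p) := by
  intro x hx
  refine h.isSubmanifold hM ?_ x hx
  have hle := h.finrank_le hM hx
  have hdim := hM.le_finrank_or_finrank_eq_zero hMc ⟨x, hx.1⟩
  rw [Module.finrank_fin_fun] at hle ⊢
  omega

theorem IsRegularValue.exists_isPontryaginManifold [FiniteDimensional ℝ E]
    (h : IsRegularValue p F M y) (hM : IsSubmanifold M m) (hMc : IsCompact M)
    (hF : ContDiff ℝ ∞ F) (hFS : MapsTo F M (sphereSet p)) (hy : y ∈ sphereSet p)
    (hw : PosOrientedTangentBasis p y w) : ∃ N ν, IsPontryaginManifold m p F M y w N ν := by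
  have hreg := h.isRegularLevel hF hFS hy hw
  have hN := hw.levelSet_ray_eq hy hFS
  obtain ⟨ν, hν, hlift⟩ := hreg.exists_isLevelFrame hM anisotropic_innerSL
  refine ⟨_, ν, ⟨⟨fun x hx => hx.1, ?_, hreg.isSubmanifold_of_isCompact hM hMc,
    hlift.isFraming hreg hM hν⟩, hy, hw, h, hN, fun x hx => ?_⟩⟩
  · rw [hN]
    exact hMc.inter_right (isClosed_singleton.preimage hF.continuous)
  · have hxMy := hN ▸ hx
    exact ⟨_, hasDerivOn_fderiv hF hxMy.1, fun i =>
      (fderiv_eq_iff_fderiv_rayEquation_eq hF hFS hw hxMy.1 hxMy.2 (hlift x hx i).mem i).2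
        (hlift x hx i).map_eq⟩

end PontryaginManifolds

section Transversality

variable {V F : Type*} [NormedAddCommGroup V] [NormedSpace ℝ V] [FiniteDimensional ℝ V]
  [NormedAddCommGroup F] [NormedSpace ℝ F] [FiniteDimensional ℝ F] {M : Set V} {m : ℕ}

theorem IsSubmanifold.exists_isRegularLevel_sub_smul (hM : IsSubmanifold M m) {a H : V → ℝ}
    {T : V → F} (ha : ContDiff ℝ ∞ a) (hH : ContDiff ℝ ∞ H) (hT : ContDiff ℝ ∞ T)
    (ha0 : ∀ x, 0 ≤ a x)
    (hreg : ∀ x ∈ M, 0 < H x → T x = 0 → a x = 0 →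
      SurjOn (fderiv ℝ T x) (SubTangent M x) univ) :
    ∃ q, IsRegularLevel M {x | 0 < H x} fun x => T x - (a x * H x) • q := by
  have haH := ha.mul hH
  have hpos : IsOpen {x | 0 < a x * H x} := isOpen_lt continuous_const haH.continuous
  have hquot : ContDiffOn ℝ ∞ (fun x => (a x * H x)⁻¹ • T x) {x | 0 < a x * H x} :=
    (haH.contDiffOn.inv fun x hx => (show 0 < a x * H x from hx).ne').smul hT.contDiffOn
  obtain ⟨q, hq⟩ := hM.exists_regularValue hpos hquot
  refine ⟨q, isOpen_lt continuous_const hH.continuous, (hT.sub (haH.smul_const q)).contDiffOn, ?_⟩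
  rintro x ⟨hxM, hHx, hx⟩
  have haHd := (haH.differentiable (by simp) x).hasFDerivAt
  have hTd := (hT.differentiable (by simp) x).hasFDerivAt
  rw [(hTd.fun_sub (haHd.smul_const q)).fderiv]
  rcases (ha0 x).eq_or_lt with h0 | h0
  · -- `a` has a minimum at its zeros, so the perturbation vanishes there to first order.
    have hmin : IsLocalMin a x := Eventually.of_forall fun z => h0 ▸ ha0 z
    have hd : fderiv ℝ (fun x => a x * H x) x = 0 := by
      rw [fderiv_fun_mul (ha.differentiable (by simp) x) (hH.differentiable (by simp) x),
        hmin.fderiv_eq_zero, ← h0, zero_smul, smul_zero, add_zero]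
    have hTx : T x = 0 := by simpa [← h0] using hx
    simpa [hd] using hreg x hxM hHx hTx h0.symm
  · have hxpos : 0 < a x * H x := mul_pos h0 hHx
    have hquotx : (a x * H x)⁻¹ • T x = q := by
      rw [sub_eq_zero.1 hx, inv_smul_smul₀ hxpos.ne']
    intro c _
    obtain ⟨v, hv, hvc⟩ := hq x ⟨hxM, hxpos⟩ hquotx (mem_univ ((a x * H x)⁻¹ • c))
    have hTd' := (haHd.smul ((hquot.contDiffAt (hpos.mem_nhds hxpos)).differentiableAt
      (by simp)).hasFDerivAt).congr_of_eventuallyEq (f₁ := T) <| by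
        filter_upwards [hpos.mem_nhds hxpos] with z hz
        exact (smul_inv_smul₀ (show 0 < a z * H z from hz).ne' (T z)).symm
    refine ⟨v, hv, ?_⟩
    rw [hTd.unique hTd']
    simp only [smul_apply, hvc, hquotx, smul_inv_smul₀ hxpos.ne', add_sub_cancel_right]

end Transversality

section RegularValues

variable {p : ℕ} {y : EuclideanSpace ℝ (Fin (p + 1))}

theorem exists_posOrientedTangentBasis (hy : y ∈ sphereSet p) (hpos : 0 < y 0) :
    ∃ w, PosOrientedTangentBasis p y w := by
  let e (i : Fin p) : EuclideanSpace ℝ (Fin (p + 1)) := EuclideanSpace.single i.succ 1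
  refine ⟨fun i => e i - ⟪e i, y⟫ • y, fun i => ?_, ?_⟩
  · rw [inner_sub_right, inner_smul_right, real_inner_self_eq_norm_sq,
      norm_eq_one_of_mem_sphereSet hy, real_inner_comm]
    ring
  have hshear : (Matrix.of fun i j => (Fin.cons y fun i => e i - ⟪e i, y⟫ • y :
      Fin (p + 1) → EuclideanSpace ℝ (Fin (p + 1))) i j).det =
      (Matrix.of fun i j => (Fin.cons y e :
        Fin (p + 1) → EuclideanSpace ℝ (Fin (p + 1))) i j).det := by
    refine Matrix.det_eq_of_forall_row_eq_smul_add_const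
      (Fin.cons 0 fun i => -⟪e i, y⟫) 0 (by simp) fun i j => ?_
    refine Fin.cases ?_ (fun i => ?_) i <;> simp [sub_eq_add_neg]
  rw [hshear, Matrix.det_of_isUpperTriangular, Fin.prod_univ_succ]
  · simpa [e] using hpos
  · intro i j hij
    induction i using Fin.cases with
    | zero => exact absurd hij (Fin.not_lt_zero _)
    | succ i => simp [e, ne_of_lt (show j < i.succ from hij)]

variable {E : Type*} [NormedAddCommGroup E] [InnerProductSpace ℝ E] {M : Set E} {m : ℕ}
  {F f : E → EuclideanSpace ℝ (Fin (p + 1))}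

theorem isRegularValue_of_isRegularLevel
    {b : Module.Basis (Fin (p + 1)) ℝ (EuclideanSpace ℝ (Fin (p + 1)))} {q : Fin p → ℝ}
    (h : IsRegularLevel M (rayDomain b F)
      fun x => rayEquation b F x - (splitCoord b (F x)).1 • q)
    (hF : ContDiff ℝ ∞ F) (hFS : MapsTo F M (sphereSet p)) {r : ℝ} (hr : 0 < r)
    (hy : r • y = (splitCoord b).symm (1, q)) : IsRegularValue p F M y := by
  have hsplit : splitCoord b y = (r⁻¹, r⁻¹ • q) := by
    rw [← inv_smul_smul₀ hr.ne' y, hy, map_smul, ContinuousLinearEquiv.apply_symm_apply]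
    simp
  rintro x hx rfl
  have hFd := (hF.differentiable (by simp) x).hasFDerivAt
  have hsplitd := (splitCoord b).hasFDerivAt.comp x hFd
  refine ⟨_, hasDerivOn_fderiv hF hx, fun u hu => ?_⟩
  obtain ⟨v, hv, hvu⟩ := h.surjOn x ⟨hx, by simpa [rayDomain, hsplit] using hr,
    by simp [rayEquation, hsplit]⟩ (mem_univ ((splitCoord b u).2 - (splitCoord b u).1 • q))
  have hd : HasFDerivAt (fun x => rayEquation b F x - (splitCoord b (F x)).1 • q) _ x :=
    hsplitd.snd.sub (hsplitd.fst.smul_const q)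
  rw [hd.fderiv] at hvu
  refine ⟨v, hv, sub_eq_zero.1 ?_⟩
  have hu' := (hasDerivOn_fderiv hF hx).map_mem_subTangent hFS hv
  have hmul : fderiv ℝ F x v - u = ((splitCoord b (fderiv ℝ F x v - u)).1 * r) • F x := by
    rw [mul_smul, hy, ← map_smul, ContinuousLinearEquiv.eq_symm_apply]
    refine Prod.ext (by simp) ?_
    simpa [sub_smul, sub_eq_sub_iff_sub_eq_sub] using hvu
  have hinner := (mem_subTangent_sphereSet_iff (hFS hx)).1 (Submodule.sub_mem _ hu' hu)
  rw [hmul, inner_smul_right, real_inner_self_eq_norm_sq, norm_eq_one_of_mem_sphereSet (hFS hx),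
    one_pow, mul_one] at hinner
  rw [hinner, zero_smul] at hmul
  exact hmul

theorem IsSubmanifold.exists_isRegularValue [FiniteDimensional ℝ E] (hM : IsSubmanifold M m)
    (hF : ContDiff ℝ ∞ F) (hFS : MapsTo F M (sphereSet p)) :
    ∃ y w, y ∈ sphereSet p ∧ PosOrientedTangentBasis p y w ∧ IsRegularValue p F M y := by
  let b := (EuclideanSpace.basisFun (Fin (p + 1)) ℝ).toBasis
  obtain ⟨q, hq⟩ := hM.exists_isRegularLevel_sub_smul (a := fun _ => 1) contDiff_const
    ((splitCoord b).contDiff.comp hF).fst (contDiff_rayEquation (b := b) hF)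
    (fun _ => zero_le_one) fun _ _ _ _ h => absurd h one_ne_zero
  simp only [one_mul] at hq
  set z := (splitCoord b).symm (1, q) with hz
  have hz0 : z 0 = 1 := by simp [hz, splitCoord_symm_apply, b]
  have hzn : 0 < ‖z‖ := norm_pos_iff.2 fun h => by simp [h] at hz0
  have hy : ‖z‖⁻¹ • z ∈ sphereSet p := by
    simp [sphereSet, norm_smul, hzn.ne']
  obtain ⟨w, hw⟩ := exists_posOrientedTangentBasis hy (by simpa [hz0] using hzn)
  exact ⟨_, w, hy, hw, isRegularValue_of_isRegularLevel hq hF hFS hzn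
    (smul_inv_smul₀ hzn.ne' z)⟩

theorem SmoothOnSet.exists_isPontryaginManifold [FiniteDimensional ℝ E] (hf : SmoothOnSet f M)
    (hfS : MapsTo f M (sphereSet p)) (hM : IsSubmanifold M m) (hMc : IsCompact M) :
    ∃ y w N ν, IsPontryaginManifold m p f M y w N ν := by
  obtain ⟨F, hF, hfF⟩ := hf.exists_contDiff hMc.isClosed
  have hFS : MapsTo F M (sphereSet p) := hfS.congr hfF
  obtain ⟨y, w, hy, hw, hreg⟩ := hM.exists_isRegularValue hF hFS
  obtain ⟨N, ν, hN⟩ := hreg.exists_isPontryaginManifold hM hMc hF hFS hy hw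
  exact ⟨y, w, N, ν, hN.congr hfF.symm⟩

end RegularValues

section PositiveDeterminant

variable {n : Type*} [Fintype n] [DecidableEq n] {A B : Matrix n n ℝ}

theorem rotation_mul_rotation_neg {R : Type*} [Ring R] [Algebra ℝ R] {P J : R} (hPP : P * P = P)
    (hPJ : P * J = J) (hJP : J * P = J) (hJJ : J * J = -P) {c s : ℝ} (h : c ^ 2 + s ^ 2 = 1) :
    (1 + (c - 1) • P + s • J) * (1 + (c - 1) • P - s • J) = 1 := by
  simp only [mul_add, mul_sub, add_mul, one_mul, mul_one, smul_mul_smul_comm, hPP, hPJ, hJP, hJJ]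
  linear_combination (norm := module) h • P

/-- The matrix `A` is joined to the identity by a smooth path of invertible matrices that is
constant outside `[0, 1]`. -/
def IsSmoothlyJoinedToOne (A : Matrix n n ℝ) : Prop :=
  ∃ γ : ℝ → Matrix n n ℝ, (∀ i j, ContDiff ℝ ∞ fun t => γ t i j) ∧
    (∀ t ≤ 0, γ t = 1) ∧ (∀ t, 1 ≤ t → γ t = A) ∧ ∀ t, IsUnit (γ t)

namespace IsSmoothlyJoinedToOne

theorem mul (hA : IsSmoothlyJoinedToOne A) (hB : IsSmoothlyJoinedToOne B) :
    IsSmoothlyJoinedToOne (A * B) := by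
  obtain ⟨γ, hγ, hγ0, hγ1, hγu⟩ := hA
  obtain ⟨δ, hδ, hδ0, hδ1, hδu⟩ := hB
  refine ⟨fun t => γ t * δ t, fun i j => ?_, fun t ht => by simp [hγ0 t ht, hδ0 t ht],
    fun t ht => by simp [hγ1 t ht, hδ1 t ht], fun t => (hγu t).mul (hδu t)⟩
  simp only [Matrix.mul_apply]
  exact ContDiff.sum fun k _ => (hγ i k).mul (hδ k j)

theorem one : IsSmoothlyJoinedToOne (1 : Matrix n n ℝ) :=
  ⟨fun _ => 1, fun _ _ => contDiff_const, fun _ _ => rfl, fun _ _ => rfl, fun _ => isUnit_one⟩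

theorem of_segment (h : ∀ t ∈ Icc (0 : ℝ) 1, IsUnit (1 + t • (A - 1))) :
    IsSmoothlyJoinedToOne A := by
  refine ⟨fun t => 1 + Real.smoothTransition t • (A - 1), fun i j => ?_, fun t ht => ?_,
    fun t ht => ?_, fun t => h _ ⟨Real.smoothTransition.nonneg t, Real.smoothTransition.le_one t⟩⟩
  · exact contDiff_const.add (Real.smoothTransition.contDiff.mul contDiff_const)
  · simp [Real.smoothTransition.zero_of_nonpos ht]
  · simp [Real.smoothTransition.one_of_one_le ht]

theorem transvection {i j : n} (hij : i ≠ j) (c : ℝ) :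
    IsSmoothlyJoinedToOne (Matrix.transvection i j c) := by
  refine of_segment fun t _ => ?_
  have heq : 1 + t • (Matrix.transvection i j c - 1) = Matrix.transvection i j (t * c) := by
    simp [Matrix.transvection, Matrix.smul_single]
  rw [heq, Matrix.isUnit_iff_isUnit_det, Matrix.det_transvection_of_ne i j hij]
  exact isUnit_one

theorem diagonal_of_pos {D : n → ℝ} (hD : ∀ i, 0 < D i) :
    IsSmoothlyJoinedToOne (Matrix.diagonal D) := by
  refine of_segment fun t ht => ?_
  have heq : 1 + t • (Matrix.diagonal D - 1) = Matrix.diagonal fun i => 1 + t * (D i - 1) := by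
    rw [← Matrix.diagonal_one, Matrix.diagonal_sub, ← Matrix.diagonal_smul, Matrix.diagonal_add]
    rfl
  rw [heq, Matrix.isUnit_iff_isUnit_det, Matrix.det_diagonal, isUnit_iff_ne_zero]
  refine (Finset.prod_pos fun i _ => ?_).ne'
  rcases ht.1.eq_or_lt with h | h
  · simp [← h]
  · nlinarith [mul_pos h (hD i), ht.2]

/-- The signs of the half turn in the plane of the coordinates `i` and `j`. -/
def halfTurnSign (i j k : n) : ℝ :=
  (if k = i then -1 else 1) * (if k = j then -1 else 1)

omit [Fintype n] in
theorem halfTurnSign_mul_self (i j k : n) : halfTurnSign i j k * halfTurnSign i j k = 1 := by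
  simp only [halfTurnSign]
  split_ifs <;> norm_num

theorem prod_halfTurnSign (i j : n) : ∏ k, halfTurnSign i j k = 1 := by
  simp only [halfTurnSign, Finset.prod_mul_distrib, Finset.prod_ite_eq', Finset.mem_univ, if_true]
  norm_num

theorem diagonal_halfTurnSign {i j : n} (hij : i ≠ j) :
    IsSmoothlyJoinedToOne (Matrix.diagonal (halfTurnSign i j)) := by
  let P : Matrix n n ℝ := Matrix.single i i 1 + Matrix.single j j 1
  let J : Matrix n n ℝ := Matrix.single i j 1 - Matrix.single j i 1
  have hinv (c s : ℝ) (h : c ^ 2 + s ^ 2 = 1) :=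
    rotation_mul_rotation_neg (P := P) (J := J)
      (by simp [P, mul_add, add_mul, hij, hij.symm])
      (by simp [P, J, mul_sub, add_mul, hij, hij.symm])
      (by simp [P, J, mul_add, sub_mul, hij, hij.symm, neg_add_eq_sub])
      (by simp [P, J, mul_sub, sub_mul, hij, hij.symm]; abel) h
  let θ (t : ℝ) : ℝ := Real.pi * Real.smoothTransition t
  have hθ : ContDiff ℝ ∞ θ := contDiff_const.mul Real.smoothTransition.contDiff
  refine ⟨fun t => 1 + (Real.cos (θ t) - 1) • P + Real.sin (θ t) • J, fun a b => ?_, fun t ht => ?_,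
    fun t ht => ?_, fun t => IsUnit.of_mul_eq_one _ (hinv _ _ (Real.cos_sq_add_sin_sq (θ t)))⟩
  · exact (contDiff_const.add (((Real.contDiff_cos.comp hθ).sub contDiff_const).mul
      contDiff_const)).add ((Real.contDiff_sin.comp hθ).mul contDiff_const)
  · simp [θ, Real.smoothTransition.zero_of_nonpos ht]
  · simp only [θ, Real.smoothTransition.one_of_one_le ht, mul_one, Real.cos_pi, Real.sin_pi,
      zero_smul, add_zero]
    ext a b
    simp only [P, halfTurnSign, Matrix.diagonal_apply, Matrix.one_apply, Matrix.single_apply,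
      Matrix.add_apply, Matrix.smul_apply, smul_eq_mul]
    grind

theorem diagonal_of_prod_pos_of_forall_notMem {i₀ : n} (s : Finset n) {D : n → ℝ}
    (hD : ∀ i ∉ s, i ≠ i₀ → 0 < D i) (hprod : 0 < ∏ i, D i) :
    IsSmoothlyJoinedToOne (Matrix.diagonal D) := by
  induction s using Finset.induction_on generalizing D with
  | empty =>
    refine diagonal_of_pos fun i => ?_
    rcases eq_or_ne i i₀ with rfl | hi
    · rw [← Finset.mul_prod_erase _ _ (Finset.mem_univ i)] at hprod
      exact pos_of_mul_pos_left hprod (Finset.prod_nonneg fun k hk =>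
        (hD k (Finset.notMem_empty k) (Finset.ne_of_mem_erase hk)).le)
    · exact hD i (Finset.notMem_empty i) hi
  | insert j s hj ih =>
    by_cases hDj : j = i₀ ∨ 0 < D j
    · refine ih (fun i hi hi₀ => ?_) hprod
      rcases eq_or_ne i j with rfl | hij
      · exact hDj.resolve_left hi₀
      · exact hD i (by simp [hij, hi]) hi₀
    obtain ⟨hj₀, hDj⟩ := not_or.1 hDj
    have hneg : D j < 0 := lt_of_le_of_ne (not_lt.1 hDj)
      fun h => hprod.ne' (Finset.prod_eq_zero (Finset.mem_univ j) h)
    have hfactor : Matrix.diagonal D =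
        Matrix.diagonal (fun k => D k * halfTurnSign i₀ j k) *
          Matrix.diagonal (halfTurnSign i₀ j) := by
      simp [Matrix.diagonal_mul_diagonal, mul_assoc, halfTurnSign_mul_self]
    rw [hfactor]
    refine (ih (fun i hi hi₀ => ?_) ?_).mul (diagonal_halfTurnSign (Ne.symm hj₀))
    · rcases eq_or_ne i j with rfl | hij
      · simpa [halfTurnSign, hi₀] using hneg
      · simpa [halfTurnSign, hi₀, hij] using hD i (by simp [hij, hi]) hi₀
    · rwa [Finset.prod_mul_distrib, prod_halfTurnSign, mul_one]

theorem diagonal_of_prod_pos {D : n → ℝ} (hprod : 0 < ∏ i, D i) :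
    IsSmoothlyJoinedToOne (Matrix.diagonal D) := by
  rcases isEmpty_or_nonempty n with h | ⟨⟨i₀⟩⟩
  · exact diagonal_of_pos isEmptyElim
  · exact diagonal_of_prod_pos_of_forall_notMem (i₀ := i₀) Finset.univ
      (fun i hi => absurd (Finset.mem_univ i) hi) hprod

theorem prod_transvections (L : List (Matrix.TransvectionStruct n ℝ)) :
    IsSmoothlyJoinedToOne (L.map Matrix.TransvectionStruct.toMatrix).prod := by
  induction L with
  | nil => exact one
  | cons a L ih =>
    rw [List.map_cons, List.prod_cons]
    exact (transvection a.hij a.c).mul ih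

theorem of_det_pos (hA : 0 < A.det) : IsSmoothlyJoinedToOne A := by
  obtain ⟨L, L', D, rfl⟩ := Matrix.Pivot.exists_list_transvec_mul_diagonal_mul_list_transvec A
  refine ((prod_transvections L).mul (diagonal_of_prod_pos ?_)).mul (prod_transvections L')
  simpa [Matrix.TransvectionStruct.det_toMatrix_prod] using hA

end IsSmoothlyJoinedToOne

end PositiveDeterminant

section NonvanishingHomotopies

variable {V W : Type*} [NormedAddCommGroup V] [NormedSpace ℝ V] [NormedAddCommGroup W]

section NormedTarget

variable [NormedSpace ℝ W] {M : Set V} {f f' g g' h : V → W}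

/-- The maps `f` and `g` are joined, over `M`, by a smooth homotopy without zeros that is stationary
outside `[0, 1]`. -/
def NonvanishingHomotopic (M : Set V) (f g : V → W) : Prop :=
  ∃ H : V × ℝ → W, ContDiff ℝ ∞ H ∧ (∀ x ∈ M, ∀ t, H (x, t) ≠ 0) ∧
    (∀ x ∈ M, ∀ t ≤ 0, H (x, t) = f x) ∧ ∀ x ∈ M, ∀ t, 1 ≤ t → H (x, t) = g x

theorem exists_contDiff_homotopy_of_det_pos [FiniteDimensional ℝ W] {P : W →ₗ[ℝ] W}
    (hP : 0 < P.det) :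
    ∃ Q : ℝ × W → W, ContDiff ℝ ∞ Q ∧ (∀ t ≤ 0, ∀ v, Q (t, v) = v) ∧
      (∀ t, 1 ≤ t → ∀ v, Q (t, v) = P v) ∧ ∀ t v, Q (t, v) = 0 → v = 0 := by
  let b := Module.finBasis ℝ W
  rw [← LinearMap.det_toMatrix b] at hP
  obtain ⟨γ, hγ, hγ0, hγ1, hγu⟩ := IsSmoothlyJoinedToOne.of_det_pos hP
  refine ⟨fun z => Matrix.toLin b b (γ z.1) z.2, ?_, fun t ht v => by simp [hγ0 t ht],
    fun t ht v => by simp [hγ1 t ht], fun t v hv => ?_⟩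
  · simp only [Matrix.toLin_apply, Matrix.mulVec, dotProduct]
    refine ContDiff.sum fun i _ => (ContDiff.sum fun j _ => ?_).smul contDiff_const
    exact ((hγ i j).comp contDiff_fst).mul
      ((b.coord j).toContinuousLinearMap.contDiff.comp contDiff_snd)
  · have hv' : Matrix.toLin b b (γ t) v = 0 := hv
    obtain ⟨N, hN⟩ := (hγu t).exists_left_inv
    rw [← LinearMap.id_apply (R := ℝ) v, ← Matrix.toLin_one b, ← hN, Matrix.toLin_mul b b b,
      LinearMap.comp_apply, hv', map_zero]

namespace NonvanishingHomotopic

theorem congr (h : NonvanishingHomotopic M f g) (hf : EqOn f f' M) (hg : EqOn g g' M) :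
    NonvanishingHomotopic M f' g' := by
  obtain ⟨H, hH, hne, hH0, hH1⟩ := h
  exact ⟨H, hH, hne, fun x hx t ht => (hH0 x hx t ht).trans (hf hx),
    fun x hx t ht => (hH1 x hx t ht).trans (hg hx)⟩

theorem symm (h : NonvanishingHomotopic M f g) : NonvanishingHomotopic M g f := by
  obtain ⟨H, hH, hne, hH0, hH1⟩ := h
  exact ⟨fun z => H (z.1, 1 - z.2), by fun_prop, fun x hx t => hne x hx _,
    fun x hx t ht => hH1 x hx _ (by linarith), fun x hx t ht => hH0 x hx _ (by linarith)⟩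

theorem trans (hfg : NonvanishingHomotopic M f g) (hgh : NonvanishingHomotopic M g h) :
    NonvanishingHomotopic M f h := by
  obtain ⟨H, hH, hHne, hH0, hH1⟩ := hfg
  obtain ⟨K, hK, hKne, hK0, hK1⟩ := hgh
  let G (z : V × ℝ) : W := H (z.1, 3 * z.2) + K (z.1, 3 * z.2 - 2) - H (z.1, 1)
  have hleft {x : V} (hx : x ∈ M) {t : ℝ} (ht : t ≤ 2 / 3) : G (x, t) = H (x, 3 * t) := by
    simp only [G, hK0 x hx _ (by linarith : 3 * t - 2 ≤ 0), hH1 x hx 1 le_rfl, add_sub_cancel_right]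
  have hright {x : V} (hx : x ∈ M) {t : ℝ} (ht : 1 / 3 ≤ t) : G (x, t) = K (x, 3 * t - 2) := by
    simp only [G, hH1 x hx (3 * t) (by linarith), hH1 x hx 1 le_rfl, add_sub_cancel_left]
  refine ⟨G, by fun_prop, fun x hx t => ?_, fun x hx t ht => ?_, fun x hx t ht => ?_⟩
  · rcases le_total t (1 / 2) with ht | ht
    · rw [hleft hx (by linarith)]
      exact hHne x hx _
    · rw [hright hx (by linarith)]
      exact hKne x hx _
  · rw [hleft hx (by linarith), hH0 x hx _ (by linarith)]
  · rw [hright hx (by linarith), hK1 x hx _ (by linarith)]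

theorem of_path {G : V × ℝ → W} (hG : ContDiff ℝ ∞ G) {t₀ t₁ : ℝ} (ht : t₀ ≤ t₁)
    (hne : ∀ x ∈ M, ∀ t ∈ Icc t₀ t₁, G (x, t) ≠ 0) :
    NonvanishingHomotopic M (fun x => G (x, t₀)) fun x => G (x, t₁) := by
  have hsmooth : ContDiff ℝ ∞ fun z : V × ℝ => t₀ + Real.smoothTransition z.2 * (t₁ - t₀) :=
    contDiff_const.add ((Real.smoothTransition.contDiff.comp contDiff_snd).mul contDiff_const)
  refine ⟨fun z => G (z.1, t₀ + Real.smoothTransition z.2 * (t₁ - t₀)),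
    hG.comp (contDiff_fst.prodMk hsmooth), fun x hx t => hne x hx _ ⟨?_, ?_⟩,
    fun x _ t ht => ?_, fun x _ t ht => ?_⟩
  · nlinarith [Real.smoothTransition.nonneg t]
  · nlinarith [Real.smoothTransition.le_one t]
  · simp [Real.smoothTransition.zero_of_nonpos ht]
  · simp [Real.smoothTransition.one_of_one_le ht]

theorem of_segment (hf : ContDiff ℝ ∞ f) (hg : ContDiff ℝ ∞ g)
    (h : ∀ x ∈ M, (0 : W) ∉ segment ℝ (f x) (g x)) : NonvanishingHomotopic M f g := by
  have hpath := of_path (M := M) (G := fun z => (1 - z.2) • f z.1 + z.2 • g z.1) (by fun_prop)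
    zero_le_one fun x hx t ht hzero =>
      h x hx ⟨1 - t, t, sub_nonneg.2 ht.2, ht.1, sub_add_cancel 1 t, hzero⟩
  simpa only [sub_zero, one_smul, zero_smul, add_zero, sub_self, zero_add] using hpath

theorem map_of_det_pos [FiniteDimensional ℝ W] (hf : ContDiff ℝ ∞ f) (hne : ∀ x ∈ M, f x ≠ 0)
    {P : W →ₗ[ℝ] W} (hP : 0 < P.det) : NonvanishingHomotopic M f fun x => P (f x) := by
  obtain ⟨Q, hQ, hQ0, hQ1, hQne⟩ := exists_contDiff_homotopy_of_det_pos hP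
  exact ⟨fun z => Q (z.2, f z.1), by fun_prop, fun x hx t h => hne x hx (hQne _ _ h),
    fun x _ t ht => hQ0 t ht _, fun x _ t ht => hQ1 t ht _⟩

end NonvanishingHomotopic

end NormedTarget

variable [InnerProductSpace ℝ W]

theorem inv_norm_smul_mem_sphere {v : W} (hv : v ≠ 0) : ‖v‖⁻¹ • v ∈ sphere (0 : W) 1 := by
  simp [norm_smul, hv]

theorem inv_norm_smul_eq_self {v : W} (hv : v ∈ sphere (0 : W) 1) : ‖v‖⁻¹ • v = v := by
  rw [mem_sphere_zero_iff_norm.1 hv, inv_one, one_smul]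

theorem contDiffAt_inv_norm_smul {v : W} (hv : v ≠ 0) :
    ContDiffAt ℝ ∞ (fun v : W => ‖v‖⁻¹ • v) v :=
  ((contDiffAt_norm ℝ hv).inv (norm_ne_zero_iff.2 hv)).smul contDiffAt_id

theorem smoothOnSet_inv_norm_smul {M : Set V} {f : V → W} (hf : ContDiff ℝ ∞ f)
    (hne : ∀ x ∈ M, f x ≠ 0) : SmoothOnSet (fun x => ‖f x‖⁻¹ • f x) M := fun x hx =>
  ⟨{z | f z ≠ 0}, fun x => ‖f x‖⁻¹ • f x, isOpen_ne_fun hf.continuous continuous_const, hne x hx,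
    fun z hz => ((contDiffAt_inv_norm_smul hz).comp z hf.contDiffAt).contDiffWithinAt,
    fun _ _ => rfl⟩

theorem nonvanishingHomotopic_iff_smoothHomotopicOn [FiniteDimensional ℝ E] {M : Set E}
    (hM : IsClosed M) {f g : E → W} (hf : MapsTo f M (sphere 0 1)) (hg : MapsTo g M (sphere 0 1)) :
    NonvanishingHomotopic M f g ↔ SmoothHomotopicOn M f g (sphere 0 1) := by
  constructor
  · rintro ⟨H, hH, hne, hH0, hH1⟩
    refine ⟨fun z => ‖H z‖⁻¹ • H z, smoothOnSet_inv_norm_smul hH fun z hz => hne z.1 hz.1 z.2,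
      fun x hx t => inv_norm_smul_mem_sphere (hne x hx t), fun x hx => ?_, fun x hx => ?_⟩
    · simp only [hH0 x hx 0 le_rfl, inv_norm_smul_eq_self (hf hx)]
    · simp only [hH1 x hx 1 le_rfl, inv_norm_smul_eq_self (hg hx)]
  · rintro ⟨H, hH, hHS, hH0, hH1⟩
    obtain ⟨G, hG, hHG⟩ := hH.exists_contDiff (hM.prod isClosed_univ)
    refine (NonvanishingHomotopic.of_path hG zero_le_one fun x hx t _ => ?_).congr ?_ ?_
    · rw [← hHG ⟨hx, mem_univ t⟩]
      exact ne_zero_of_mem_unit_sphere (⟨_, hHS x hx t⟩ : sphere (0 : W) 1)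
    · exact fun x hx => (hHG ⟨hx, mem_univ 0⟩).symm.trans (hH0 x hx)
    · exact fun x hx => (hHG ⟨hx, mem_univ 1⟩).symm.trans (hH1 x hx)

theorem PosOrientedTangentBasis.exists_det_pos {p : ℕ} {y y' : EuclideanSpace ℝ (Fin (p + 1))}
    {w w' : Fin p → EuclideanSpace ℝ (Fin (p + 1))} (hw : PosOrientedTangentBasis p y w)
    (hw' : PosOrientedTangentBasis p y' w') :
    ∃ P : EuclideanSpace ℝ (Fin (p + 1)) →ₗ[ℝ] EuclideanSpace ℝ (Fin (p + 1)), 0 < P.det ∧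
      ∀ i, P (hw'.basis i) = hw.basis i := by
  let e := (EuclideanSpace.basisFun (Fin (p + 1)) ℝ).toBasis
  have hdet {y : EuclideanSpace ℝ (Fin (p + 1))} {w : Fin p → EuclideanSpace ℝ (Fin (p + 1))}
      (hw : PosOrientedTangentBasis p y w) : 0 < e.det hw.basis := by
    have h := hw.det_basis_pos
    rwa [← Matrix.det_transpose] at h
  let P := (hw'.basis.equiv hw.basis (Equiv.refl _)).toLinearMap
  have hP (i : Fin (p + 1)) : P (hw'.basis i) = hw.basis i := by simp [P]
  have hcomp : e.det hw.basis = P.det * e.det hw'.basis := by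
    rw [← Module.Basis.det_comp]
    exact congrArg e.det (funext fun i => (hP i).symm)
  exact ⟨P, pos_of_mul_pos_left (hcomp ▸ hdet hw) (hdet hw').le, hP⟩

end NonvanishingHomotopies

section Cylinders

section Tangents

variable {V G : Type*} [NormedAddCommGroup V] [NormedSpace ℝ V] [NormedAddCommGroup G]
  [NormedSpace ℝ G] {M : Set V} {ζ : V × ℝ → G} {ζ₀ : V → G} {A : V × ℝ →L[ℝ] G} {A₀ : V →L[ℝ] G}
  {x : V} {t : ℝ}

theorem eqOn_subTangent_prod_univ (hζ : HasFDerivAt ζ A (x, t)) (hζ₀ : HasFDerivAt ζ₀ A₀ x)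
    (h : ∀ᶠ z in 𝓝 (x, t), z.1 ∈ M → ζ z = ζ₀ z.1) :
    EqOn A (A₀.comp (.fst ℝ V ℝ)) (SubTangent (M ×ˢ (univ : Set ℝ)) (x, t)) :=
  eqOn_subTangent_of_hasFDerivAt hζ (hζ₀.comp (x, t) hasFDerivAt_fst)
    (h.mono fun _ hz hzM => hz hzM.1)

theorem surjOn_subTangent_prod_univ (hx : x ∈ M) (hζ : HasFDerivAt ζ A (x, t))
    (hζ₀ : HasFDerivAt ζ₀ A₀ x) (h : ∀ᶠ z in 𝓝 (x, t), z.1 ∈ M → ζ z = ζ₀ z.1)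
    (hA₀ : SurjOn A₀ (SubTangent M x) univ) :
    SurjOn A (SubTangent (M ×ˢ (univ : Set ℝ)) (x, t)) univ := fun c hc => by
  obtain ⟨v, hv, hvc⟩ := hA₀ hc
  have hv' : (v, (0 : ℝ)) ∈ SubTangent (M ×ˢ (univ : Set ℝ)) (x, t) := by
    rwa [subTangent_prod_univ hx]
  exact ⟨_, hv', (eqOn_subTangent_prod_univ hζ hζ₀ h hv').trans hvc⟩

end Tangents

/-- The inner product `prodInner` of `E × ℝ` as a continuous bilinear form. -/
def prodInnerL (E : Type*) [NormedAddCommGroup E] [InnerProductSpace ℝ E] :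
    E × ℝ →L[ℝ] E × ℝ →L[ℝ] ℝ :=
  (show E × ℝ →L[ℝ] E × ℝ →L[ℝ] ℝ from
    (innerSL ℝ : E →L[ℝ] E →L[ℝ] ℝ).bilinearComp (.fst ℝ E ℝ) (.fst ℝ E ℝ)) +
    (ContinuousLinearMap.mul ℝ ℝ).bilinearComp (.snd ℝ E ℝ) (.snd ℝ E ℝ)

theorem prodInnerL_apply (u v : E × ℝ) : prodInnerL E u v = prodInner u v :=
  rfl

theorem anisotropic_prodInnerL : Anisotropic (prodInnerL E) := fun v hv => by
  obtain ⟨h₁, h₂⟩ := (add_eq_zero_iff_of_nonneg real_inner_self_nonneg (mul_self_nonneg v.2)).1 hv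
  exact Prod.ext (inner_self_eq_zero.1 h₁) (mul_self_eq_zero.1 h₂)

variable {M m p} {O : Set (E × ℝ)} {O₀ O₁ : Set E} {ζ : E × ℝ → Fin p → ℝ} {ζ₀ ζ₁ : E → Fin p → ℝ}
  {ν₀ ν₁ : Fin p → E → E} {x : E} {t : ℝ} {J : Set ℝ}

theorem IsOrthogonalLift.prod_univ {G : Type*} [NormedAddCommGroup G] [NormedSpace ℝ G]
    {A : E →L[ℝ] G} {c : G} {u : E} (h : IsOrthogonalLift (innerSL ℝ) (SubTangent M x) A c u)
    (hx : x ∈ M) (t : ℝ) :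
    IsOrthogonalLift (prodInnerL E) (SubTangent (M ×ˢ (univ : Set ℝ)) (x, t))
      (A.comp (.fst ℝ E ℝ)) c (u, 0) where
  mem := by
    rw [subTangent_prod_univ hx]
    exact h.mem
  map_eq := h.map_eq
  orth v hv hv0 := by
    rw [subTangent_prod_univ hx] at hv
    have hu : ⟪u, v.1⟫ = 0 := h.orth v.1 hv hv0
    simp [prodInnerL_apply, prodInner, hu]

/-- Over `M × J` the equation `ζ` on `O` is the pullback of the equation `ζ₀` on `O₀`. -/
def IsCylindrical (M : Set E) (J : Set ℝ) (O : Set (E × ℝ)) (ζ : E × ℝ → Fin p → ℝ) (O₀ : Set E)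
    (ζ₀ : E → Fin p → ℝ) : Prop :=
  ∀ x ∈ M, ∀ t ∈ J, ((x, t) ∈ O ↔ x ∈ O₀) ∧ ζ (x, t) = ζ₀ x

omit [NormedAddCommGroup E] [InnerProductSpace ℝ E] in
theorem IsCylindrical.levelSet_inter (hend : IsCylindrical M J O ζ O₀ ζ₀) (K : Set ℝ) :
    levelSet (M ×ˢ K) O ζ ∩ univ ×ˢ J = levelSet M O₀ ζ₀ ×ˢ (K ∩ J) := by
  ext ⟨x, t⟩
  simp only [levelSet, mem_inter_iff, mem_ofPred_eq, mem_prod, mem_univ, true_and]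
  constructor
  · rintro ⟨⟨⟨hx, ht⟩, hxO, hxζ⟩, htJ⟩
    obtain ⟨hO, hζ⟩ := hend x hx t htJ
    exact ⟨⟨hx, hO.1 hxO, hζ ▸ hxζ⟩, ht, htJ⟩
  · rintro ⟨⟨hx, hxO, hxζ⟩, ht, htJ⟩
    obtain ⟨hO, hζ⟩ := hend x hx t htJ
    exact ⟨⟨⟨hx, ht⟩, hO.2 hxO, hζ.trans hxζ⟩, htJ⟩

omit [InnerProductSpace ℝ E] in
theorem IsCylindrical.eventually_eq (hend : IsCylindrical M J O ζ O₀ ζ₀) (hJ : IsOpen J)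
    (ht : t ∈ J) : ∀ᶠ z in 𝓝 (x, t), z.1 ∈ M → ζ z = ζ₀ z.1 := by
  filter_upwards [(hJ.preimage continuous_snd).mem_nhds ht] with z hz hzM
  exact (hend z.1 hzM z.2 hz).2

theorem IsCylindrical.surjOn_fderiv (hend : IsCylindrical M J O ζ O₀ ζ₀) (hJ : IsOpen J)
    (hζ : DifferentiableAt ℝ ζ (x, t)) (h₀ : IsRegularLevel M O₀ ζ₀)
    (hxt : (x, t) ∈ levelSet (M ×ˢ univ) O ζ) (ht : t ∈ J) :
    SurjOn (fderiv ℝ ζ (x, t)) (SubTangent (M ×ˢ (univ : Set ℝ)) (x, t)) univ := by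
  obtain ⟨⟨hx, -⟩, hxO, hxζ⟩ := hxt
  obtain ⟨hO, heq⟩ := hend x hx t ht
  exact surjOn_subTangent_prod_univ hx hζ.hasFDerivAt (h₀.hasFDerivAt (hO.1 hxO))
    (hend.eventually_eq hJ ht) (h₀.surjOn x ⟨hx, hO.1 hxO, heq ▸ hxζ⟩)

theorem IsCylindrical.levelFrame_eq {u : Fin p → E × ℝ → E × ℝ} (hend : IsCylindrical M J O ζ O₀ ζ₀)
    (hJ : IsOpen J) (h : IsRegularLevel (M ×ˢ univ) O ζ)
    (hu : IsLevelFrame (prodInnerL E) (M ×ˢ univ) O ζ u) (h₀ : IsRegularLevel M O₀ ζ₀)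
    (hν₀ : IsLevelFrame (innerSL ℝ) M O₀ ζ₀ ν₀) (hxt : (x, t) ∈ levelSet (M ×ˢ univ) O ζ)
    (ht : t ∈ J) (i : Fin p) : u i (x, t) = (ν₀ i x, 0) := by
  obtain ⟨⟨hx, -⟩, hxO, hxζ⟩ := id hxt
  obtain ⟨hO, hζ⟩ := hend x hx t ht
  have hx₀ : x ∈ levelSet M O₀ ζ₀ := ⟨hx, hO.1 hxO, hζ ▸ hxζ⟩
  refine ((hu (x, t) hxt i).congr ?_).unique ((hν₀ x hx₀ i).prod_univ hx t) anisotropic_prodInnerL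
  exact eqOn_subTangent_prod_univ (h.hasFDerivAt hxO) (h₀.hasFDerivAt hx₀.2.1)
    (hend.eventually_eq hJ ht)

theorem IsRegularLevel.isSubmanifold_prod_univ (h : IsRegularLevel (M ×ˢ univ) O ζ)
    (hM : IsSubmanifold M m) [FiniteDimensional ℝ E]
    (hdim : m ≤ Module.finrank ℝ E ∨ Module.finrank ℝ E = 0)
    (hp : Module.finrank ℝ E - m + p ≤ Module.finrank ℝ E) :
    IsSubmanifold (levelSet (M ×ˢ univ) O ζ) (m - p + 1) :=
  h.isSubmanifold hM.prod_univ <| by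
    rw [Module.finrank_prod, Module.finrank_self, Module.finrank_fin_fun]
    omega

theorem framedCobordant_empty : FramedCobordant M m p ∅ ν₀ ∅ ν₁ :=
  ⟨∅, fun _ z => z, 1 / 4, by norm_num, by norm_num, isCompact_empty, empty_subset _, by simp,
    by simp, by simp [IsSubmanifold], by simp [SmoothOnSet], by simp, by simp, by simp⟩

theorem IsRegularLevel.framedCobordant (hM : IsSubmanifold M m) (hMc : IsCompact M)
    (h : IsRegularLevel (M ×ˢ univ) O ζ) (hc : IsCompact (levelSet (M ×ˢ Icc 0 1) O ζ))
    (h₀ : IsRegularLevel M O₀ ζ₀) (h₁ : IsRegularLevel M O₁ ζ₁)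
    (hν₀ : IsLevelFrame (innerSL ℝ) M O₀ ζ₀ ν₀) (hν₁ : IsLevelFrame (innerSL ℝ) M O₁ ζ₁ ν₁)
    {ε : ℝ} (hε : 0 < ε) (hε' : ε < 1 / 2)
    (hend₀ : IsCylindrical M (Iio ε) O ζ O₀ ζ₀) (hend₁ : IsCylindrical M (Ioi (1 - ε)) O ζ O₁ ζ₁) :
    FramedCobordant M m p (levelSet M O₀ ζ₀) ν₀ (levelSet M O₁ ζ₁) ν₁ := by
  by_cases hempty : levelSet M O₀ ζ₀ = ∅ ∧ levelSet M O₁ ζ₁ = ∅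
  · rw [hempty.1, hempty.2]
    exact framedCobordant_empty
  -- a point at one of the ends bounds `p` by `m`, so that `m - p` is not truncated
  obtain ⟨hne, hp⟩ : M.Nonempty ∧
      (FiniteDimensional ℝ E → Module.finrank ℝ E - m + p ≤ Module.finrank ℝ E) := by
    rcases not_and_or.1 hempty with hne | hne <;>
      obtain ⟨x, hx⟩ := nonempty_iff_ne_empty.2 hne
    · exact ⟨⟨x, hx.1⟩, fun _ => by simpa using h₀.finrank_le hM hx⟩
    · exact ⟨⟨x, hx.1⟩, fun _ => by simpa using h₁.finrank_le hM hx⟩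
  have := hM.finiteDimensional hMc hne
  obtain ⟨u, hu, hlift⟩ := h.exists_isLevelFrame hM.prod_univ anisotropic_prodInnerL
  have hX : levelSet (M ×ˢ Icc 0 1) O ζ ⊆ levelSet (M ×ˢ univ) O ζ :=
    fun z hz => ⟨⟨hz.1.1, mem_univ _⟩, hz.2⟩
  have hO' : IsOpen (O ∩ univ ×ˢ Ioo (0 : ℝ) 1) := h.isOpen.inter (isOpen_univ.prod isOpen_Ioo)
  have h' := h.mono hO' inter_subset_left
  have hlift' := hlift.mono (inter_subset_left (s := O) (t := univ ×ˢ Ioo (0 : ℝ) 1))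
  have hinterior : levelSet (M ×ˢ Icc 0 1) O ζ ∩ univ ×ˢ Ioo 0 1 =
      levelSet (M ×ˢ univ) (O ∩ univ ×ˢ Ioo 0 1) ζ := by
    ext z
    have := fun hz : z.2 ∈ Ioo (0 : ℝ) 1 => Ioo_subset_Icc_self hz
    simp only [levelSet, mem_inter_iff, mem_ofPred_eq, mem_prod, mem_univ]
    tauto
  refine ⟨levelSet (M ×ˢ Icc 0 1) O ζ, u, ε, hε, hε', hc, fun z hz => hz.1, ?_, ?_, ?_,
    fun i => (hu i).mono hX, ?_,
    fun x t hx ht => hend₀.levelFrame_eq isOpen_Iio h hlift h₀ hν₀ (hX hx) ht,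
    fun x t hx ht => hend₁.levelFrame_eq isOpen_Ioi h hlift h₁ hν₁ (hX hx) ht⟩
  · rw [hend₀.levelSet_inter, show Icc (0 : ℝ) 1 ∩ Iio ε = Ico 0 ε by grind]
  · rw [hend₁.levelSet_inter, show Icc (0 : ℝ) 1 ∩ Ioi (1 - ε) = Ioc (1 - ε) 1 by grind]
  · rw [hinterior]
    exact h'.isSubmanifold_prod_univ hM (hM.le_finrank_or_finrank_eq_zero hMc hne) (hp this)
  · rw [hinterior]
    exact fun z hz => ⟨fun i => (hlift' z hz i).mem,
      fun i v hv => hlift'.orthogonal h' hM.prod_univ hz i hv, hlift'.linearIndependent hz,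
      hlift'.sup_span_range_eq h' hM.prod_univ hz⟩

end Cylinders

section CobordismOfHomotopy

variable {M m p} {W : Type*} [NormedAddCommGroup W] [NormedSpace ℝ W]
  {b : Module.Basis (Fin (p + 1)) ℝ W} {F₀ F₁ : E → W} {ν₀ ν₁ : Fin p → E → E}

/-- A smooth function of time, positive on `(1/6, 5/6)` and zero elsewhere. -/
def middleBump (t : ℝ) : ℝ :=
  expNegInvGlue (t - 1 / 6) * expNegInvGlue (5 / 6 - t)

theorem contDiff_middleBump : ContDiff ℝ ∞ middleBump :=
  (expNegInvGlue.contDiff.comp (contDiff_id.sub contDiff_const)).mul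
    (expNegInvGlue.contDiff.comp (contDiff_const.sub contDiff_id))

theorem middleBump_nonneg (t : ℝ) : 0 ≤ middleBump t :=
  mul_nonneg (expNegInvGlue.nonneg _) (expNegInvGlue.nonneg _)

theorem middleBump_eq_zero_iff {t : ℝ} : middleBump t = 0 ↔ t ≤ 1 / 6 ∨ 5 / 6 ≤ t := by
  rw [middleBump, mul_eq_zero, expNegInvGlue.zero_iff_nonpos, expNegInvGlue.zero_iff_nonpos,
    sub_nonpos, sub_nonpos]

omit [NormedAddCommGroup E] [InnerProductSpace ℝ E] in
theorem isCylindrical_ray {M : Set E} {J : Set ℝ} {G : E × ℝ → W} {F : E → W}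
    (h : ∀ x ∈ M, ∀ t ∈ J, G (x, t) = F x) :
    IsCylindrical M J (rayDomain b G) (rayEquation b G) (rayDomain b F) (rayEquation b F) :=
  fun x hx t ht => by
    simp only [rayDomain, rayEquation, mem_ofPred_eq, h x hx t ht, and_self]

theorem isCompact_levelSet_ray_sub_smul {V : Type*} [TopologicalSpace V] {K : Set V}
    (hK : IsCompact K) {G : V → W} (hG : Continuous G) (hne : ∀ z ∈ K, G z ≠ 0)
    {a : V → ℝ} (ha : Continuous a) (q : Fin p → ℝ) :
    IsCompact (levelSet K (rayDomain b G)
      fun z => rayEquation b G z - (a z * (splitCoord b (G z)).1) • q) := by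
  have hcoord := (splitCoord b).continuous.comp hG
  have hequation : Continuous fun z => rayEquation b G z - (a z * (splitCoord b (G z)).1) • q :=
    hcoord.snd.sub ((ha.mul hcoord.fst).smul continuous_const)
  have hclosed := (isClosed_le (continuous_const (y := (0 : ℝ))) hcoord.fst).inter
    (isClosed_singleton (x := (0 : Fin p → ℝ)) |>.preimage hequation)
  convert hK.inter_right hclosed using 1
  -- on the zero set the first coordinate cannot vanish, as all the others would vanish with it
  ext z
  refine and_congr_right fun hz => and_congr_left fun (hz0 : _ = 0) =>
    ⟨fun hpos : 0 < (splitCoord b (G z)).1 => hpos.le, fun hle => ?_⟩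
  refine (lt_of_le_of_ne hle fun h => hne z hz ?_ : 0 < (splitCoord b (G z)).1)
  rw [← (splitCoord b).map_eq_zero_iff]
  have h' : (splitCoord b (G z)).1 = 0 := h.symm
  beta_reduce at hz0
  rw [h', mul_zero, zero_smul, sub_zero] at hz0
  exact Prod.ext h' hz0

theorem NonvanishingHomotopic.framedCobordant [FiniteDimensional ℝ E]
    (h : NonvanishingHomotopic M F₀ F₁)
    (hM : IsSubmanifold M m) (hMc : IsCompact M)
    (h₀ : IsRegularLevel M (rayDomain b F₀) (rayEquation b F₀))
    (h₁ : IsRegularLevel M (rayDomain b F₁) (rayEquation b F₁))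
    (hν₀ : IsLevelFrame (innerSL ℝ) M (rayDomain b F₀) (rayEquation b F₀) ν₀)
    (hν₁ : IsLevelFrame (innerSL ℝ) M (rayDomain b F₁) (rayEquation b F₁) ν₁) :
    FramedCobordant M m p (levelSet M (rayDomain b F₀) (rayEquation b F₀)) ν₀
      (levelSet M (rayDomain b F₁) (rayEquation b F₁)) ν₁ := by
  obtain ⟨H, hH, hne, hH0, hH1⟩ := h
  let G (z : E × ℝ) : W := H (z.1, 3 * z.2 - 1)
  have hG : ContDiff ℝ ∞ G := by fun_prop
  have hleft : ∀ x ∈ M, ∀ t ∈ Iio (1 / 3 : ℝ), G (x, t) = F₀ x :=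
    fun x hx t ht => hH0 x hx _ (by linarith [mem_Iio.1 ht])
  have hright : ∀ x ∈ M, ∀ t ∈ Ioi (2 / 3 : ℝ), G (x, t) = F₁ x :=
    fun x hx t ht => hH1 x hx _ (by linarith [mem_Ioi.1 ht])
  have hG' := contDiff_rayEquation (b := b) hG
  have hdiff (z : E × ℝ) : DifferentiableAt ℝ (rayEquation b G) z :=
    hG'.differentiable (by simp) z
  obtain ⟨q, hq⟩ := hM.prod_univ.exists_isRegularLevel_sub_smul
    (contDiff_middleBump.comp contDiff_snd) ((splitCoord b).contDiff.comp hG).fst hG'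
    (fun z => middleBump_nonneg z.2) fun z hz hpos hz0 hbump => by
      rcases middleBump_eq_zero_iff.1 hbump with ht | ht
      · exact (isCylindrical_ray hleft).surjOn_fderiv isOpen_Iio (hdiff z) h₀ ⟨hz, hpos, hz0⟩
          (mem_Iio.2 (by linarith))
      · exact (isCylindrical_ray hright).surjOn_fderiv isOpen_Ioi (hdiff z) h₁ ⟨hz, hpos, hz0⟩
          (mem_Ioi.2 (by linarith))
  refine hq.framedCobordant hM hMc ?_ h₀ h₁ hν₀ hν₁ (ε := 1 / 6) (by norm_num) (by norm_num)
    (fun x hx t ht => ?_) fun x hx t ht => ?_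
  · exact isCompact_levelSet_ray_sub_smul (hMc.prod isCompact_Icc) hG.continuous
      (fun z hz => hne z.1 hz.1 _) (contDiff_middleBump.comp contDiff_snd).continuous q
  · have hbump : middleBump t = 0 := middleBump_eq_zero_iff.2 (.inl (mem_Iio.1 ht).le)
    simpa [hbump, rayDomain] using isCylindrical_ray (b := b) hleft x hx t (by grind)
  · have hbump : middleBump t = 0 := middleBump_eq_zero_iff.2 (.inr (by grind))
    simpa [hbump, rayDomain] using isCylindrical_ray (b := b) hright x hx t (by grind)

theorem IsPontryaginManifold.framedCobordant [FiniteDimensional ℝ E]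
    {f g : E → EuclideanSpace ℝ (Fin (p + 1))} {y y' : EuclideanSpace ℝ (Fin (p + 1))}
    {w w' : Fin p → EuclideanSpace ℝ (Fin (p + 1))} {N N' : Set E}
    (hf : IsPontryaginManifold m p f M y w N ν₀) (hg : IsPontryaginManifold m p g M y' w' N' ν₁)
    (hM : IsSubmanifold M m) (hMc : IsCompact M) (hfC : ContDiff ℝ ∞ f) (hgC : ContDiff ℝ ∞ g)
    (hfS : MapsTo f M (sphereSet p)) (hgS : MapsTo g M (sphereSet p))
    (h : NonvanishingHomotopic M f g) : FramedCobordant M m p N ν₀ N' ν₁ := by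
  obtain ⟨P, hP, hPb⟩ := hf.basis.exists_det_pos hg.basis
  have hcoord (v : EuclideanSpace ℝ (Fin (p + 1))) :
      splitCoord hf.basis.basis (P v) = splitCoord hg.basis.basis v :=
    splitCoord_map (P := P.toContinuousLinearMap) hPb v
  have hdomain : rayDomain hf.basis.basis (fun x => P (g x)) = rayDomain hg.basis.basis g := by
    simp only [rayDomain, hcoord]
  have hequation :
      rayEquation hf.basis.basis (fun x => P (g x)) = rayEquation hg.basis.basis g := by
    simp only [funext_iff, rayEquation, hcoord, implies_true]
  have hne : ∀ x ∈ M, g x ≠ 0 :=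
    fun x hx => ne_zero_of_mem_unit_sphere (⟨_, hgS hx⟩ : sphere _ 1)
  have hcob := (h.trans (.map_of_det_pos hgC hne hP)).framedCobordant (b := hf.basis.basis) hM hMc
    (hf.regular.isRegularLevel hfC hfS hf.mem_sphere hf.basis)
    (by rw [hdomain, hequation]
        exact hg.regular.isRegularLevel hgC hgS hg.mem_sphere hg.basis)
    (hf.isLevelFrame hM hfC hfS) (by rw [hdomain, hequation]; exact hg.isLevelFrame hM hgC hgS)
  rwa [hdomain, hequation, hf.basis.levelSet_ray_eq hf.mem_sphere hfS,
    hg.basis.levelSet_ray_eq hg.mem_sphere hgS, ← hf.preimage, ← hg.preimage] at hcob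

end CobordismOfHomotopy

section NormalFrames

variable {V F G : Type*} [NormedAddCommGroup V] [NormedSpace ℝ V] [NormedAddCommGroup F]
  [NormedSpace ℝ F] [NormedAddCommGroup G] [NormedSpace ℝ G] {ι : Type*} {M X : Set V} {x : V}

theorem IsDefiningMap.eventually_mem_of_subTangent_le [CompleteSpace V] [FiniteDimensional ℝ F]
    [FiniteDimensional ℝ G] {Z U U' : Set V} {Ψ : V → F} {Φ : V → G}
    (hX : IsDefiningMap X U Ψ) (hZ : IsDefiningMap Z U' Φ) (hxU : x ∈ U) (hxU' : x ∈ U')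
    (hx : x ∈ X) (hXZ : ∀ᶠ z in 𝓝 x, z ∈ X → z ∈ Z) (hT : SubTangent Z x ≤ SubTangent X x) :
    ∀ᶠ z in 𝓝 x, z ∈ Z → z ∈ X := by
  obtain ⟨O, ψ, hO, h0O, hψ, hψx, hψ', hψX, -⟩ := hX.exists_parametrization hxU hx
  obtain ⟨Q, e, hQ, hxe, heU, he, -⟩ := exists_chart_of_surjective_fderiv hZ.isOpen
    hZ.contDiffOn hxU' (hZ.surjective x hxU')
  have hxZ : x ∈ Z := hXZ.self_of_nhds hx
  rw [hZ.subTangent_eq hxU' hxZ, hX.subTangent_eq hxU hx] at hT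
  have hψ0 := hψ.contDiffAt (hO.mem_nhds h0O)
  -- read in the chart `Q (· - x)` of `Z`, the parametrization of `X` is a submersion at `0`
  have hmap : map (fun k => Q (ψ k - x)) (𝓝 0) = 𝓝 0 := by
    have hstrict := hψ0.hasStrictFDerivAt (by simp)
    rw [hψ'] at hstrict
    have hnhds := (Q.hasStrictFDerivAt.comp 0 (hstrict.sub_const x)).map_nhds_eq_of_surj
      (LinearMap.range_eq_top.2 fun k => ⟨⟨k, hT k.2⟩, hQ k⟩)
    rw [hψx, sub_self, map_zero] at hnhds
    exact hnhds
  have hnear : ∀ᶠ k in 𝓝 0, k ∈ O ∧ ψ k ∈ e.source ∧ ψ k ∈ Z := by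
    have hψlim : Tendsto ψ (𝓝 0) (𝓝 x) := by simpa only [hψx] using hψ0.continuousAt.tendsto
    filter_upwards [hO.mem_nhds h0O, hψlim (e.open_source.mem_nhds hxe), hψlim.eventually hXZ]
      with k hkO hke hkZ using ⟨hkO, hke, hkZ (hψX hkO)⟩
  have hlim : Tendsto (fun z => Q (z - x)) (𝓝 x) (𝓝 0) := by
    have : Continuous fun z => Q (z - x) := by fun_prop
    simpa using this.tendsto x
  filter_upwards [hlim (hmap ▸ image_mem_map hnear), e.open_source.mem_nhds hxe] with z hz hze hzZ
  obtain ⟨k, ⟨hkO, hke, hkZ⟩, hk : Q (ψ k - x) = Q (z - x)⟩ := hz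
  have heq : e (ψ k) = e z := by
    rw [he, he, hk, (hZ.mem_iff _ (heU hke)).1 hkZ, (hZ.mem_iff _ (heU hze)).1 hzZ]
  exact e.injOn hke hze heq ▸ hψX hkO

open scoped Manifold in
theorem exists_contDiff_bump [FiniteDimensional ℝ V] {K W : Set V} (hK : IsClosed K)
    (hW : W ∈ 𝓝ˢ K) :
    ∃ ρ : V → ℝ, ContDiff ℝ ∞ ρ ∧ (∀ z, ρ z ∈ Icc (0 : ℝ) 1) ∧ (∀ᶠ z in 𝓝ˢ K, ρ z = 1) ∧
      ∀ z, (∀ᶠ z' in 𝓝 z, ρ z' = 0) ∨ z ∈ W := by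
  obtain ⟨ρ, h0, h1, h01⟩ := exists_contMDiffMap_zero_one_nhds_of_isClosed (n := (⊤ : ℕ∞)) 𝓘(ℝ, V)
    isOpen_interior.isClosed_compl hK
    (disjoint_compl_left_iff_subset.2 (subset_interior_iff_mem_nhdsSet.2 hW))
  refine ⟨ρ, ρ.contMDiff.contDiff, h01, h1, fun z => ?_⟩
  by_cases hz : z ∈ interior W
  · exact .inr (interior_subset hz)
  · exact .inl (eventually_nhdsSet_iff_forall.1 h0 z hz)

/-- At every point of `X` the fields `u` form a basis of a complement, not necessarily orthogonal,
of the tangent space of `X` in the tangent space of `M`. -/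
structure IsNormalFrame (M X : Set V) (u : ι → V → V) : Prop where
  linearIndependent : ∀ x ∈ X, LinearIndependent ℝ fun i => (SubTangent X x).mkQ (u i x)
  sup_span_eq : ∀ x ∈ X,
    SubTangent X x ⊔ Submodule.span ℝ (range fun i => u i x) = SubTangent M x

theorem Anisotropic.linearIndependent_mkQ {B : V →L[ℝ] V →L[ℝ] ℝ} (hB : Anisotropic B)
    {T : Submodule ℝ V} {u : ι → V} (horth : ∀ i, ∀ v ∈ T, B (u i) v = 0)
    (hu : LinearIndependent ℝ u) : LinearIndependent ℝ fun i => T.mkQ (u i) := by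
  refine hu.map (f := T.mkQ) ?_
  rw [Submodule.ker_mkQ]
  refine disjoint_comm.1 (Submodule.disjoint_def.2 fun v hvT hvu => hB v ?_)
  have hspan : Submodule.span ℝ (range u) ≤ ((B.flip v).ker : Submodule ℝ V) :=
    Submodule.span_le.2 (range_subset_iff.2 fun i => horth i v hvT)
  exact hspan hvu

variable [DecidableEq ι] {u : ι → V → V} {φ φ₁ φ₂ : V → ι → ℝ} {ρ : V → ℝ}

/-- If `z` lies on `X`, then `φ` vanishes at `z` and its derivative is dual to the frame `u`.
A map with this property near `X` is the fibre coordinate of a tubular neighbourhood of `X`. -/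
def IsDualAt (X : Set V) (u : ι → V → V) (φ : V → ι → ℝ) (z : V) : Prop :=
  z ∈ X → φ z = 0 ∧ ∀ i, fderiv ℝ φ z (u i z) = Pi.single i 1

theorem IsDualAt.congr (h : IsDualAt X u φ₁ x) (heq : φ₂ =ᶠ[𝓝 x] φ₁) : IsDualAt X u φ₂ x := by
  intro hx
  rw [heq.fderiv_eq, heq.self_of_nhds]
  exact h hx

theorem isDualAt_add_smul_sub [Fintype ι] (hφ₁ : ContDiff ℝ ∞ φ₁) (hφ₂ : ContDiff ℝ ∞ φ₂)
    (hρ : ContDiff ℝ ∞ ρ) (h₁ : (∀ᶠ z in 𝓝 x, ρ z = 0) ∨ IsDualAt X u φ₁ x)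
    (h₂ : (∀ᶠ z in 𝓝 x, ρ z = 1) ∨ IsDualAt X u φ₂ x) :
    IsDualAt X u (fun z => φ₂ z + ρ z • (φ₁ z - φ₂ z)) x := by
  rcases h₁, h₂ with ⟨h₁ | h₁, h₂ | h₂⟩
  · exact absurd (h₁.self_of_nhds.symm.trans h₂.self_of_nhds) zero_ne_one
  · exact h₂.congr (h₁.mono fun z hz => by simp [hz])
  · exact h₁.congr (h₂.mono fun z hz => by simp [hz])
  · intro hx
    obtain ⟨h₁0, h₁'⟩ := h₁ hx
    obtain ⟨h₂0, h₂'⟩ := h₂ hx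
    have hderiv : fderiv ℝ (fun z => φ₂ z + ρ z • (φ₁ z - φ₂ z)) x = _ :=
      ((hφ₂.differentiable (by simp) x).hasFDerivAt.add
        ((hρ.differentiable (by simp) x).hasFDerivAt.smul
          ((hφ₁.differentiable (by simp) x).hasFDerivAt.sub
            (hφ₂.differentiable (by simp) x).hasFDerivAt))).fderiv
    exact ⟨by simp [h₁0, h₂0], fun i => by simp [hderiv, h₁0, h₂0, h₁', h₂']⟩

theorem IsDefiningMap.exists_fderiv_eq_single [Finite ι] [CompleteSpace V]
    [FiniteDimensional ℝ F] {U : Set V} {Ψ : V → F}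
    (hΨ : IsDefiningMap X U Ψ) (hxU : x ∈ U) (hx : x ∈ X)
    (hu : LinearIndependent ℝ fun i => (SubTangent X x).mkQ (u i x)) :
    ∃ A : F →L[ℝ] ι → ℝ, ∀ i, fderiv ℝ (fun z => A (Ψ z)) x (u i x) = Pi.single i 1 := by
  cases nonempty_fintype ι
  have hli : LinearIndependent ℝ fun i => fderiv ℝ Ψ x (u i x) := by
    rw [Fintype.linearIndependent_iff] at hu ⊢
    refine fun c hc => hu c ?_
    simp only [← map_smul, ← map_sum] at hc ⊢
    rw [Submodule.mkQ_apply, Submodule.Quotient.mk_eq_zero, hΨ.subTangent_eq hxU hx]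
    exact hc
  obtain ⟨A, hA⟩ := LinearMap.exists_leftInverse_of_injective
    (Fintype.linearCombination ℝ fun i => fderiv ℝ Ψ x (u i x))
    (LinearMap.ker_eq_bot.2 (linearIndependent_iff_injective_fintypeLinearCombination.1 hli))
  refine ⟨A.toContinuousLinearMap, fun i => ?_⟩
  have hderiv : HasFDerivAt (fun z => A.toContinuousLinearMap (Ψ z))
      (A.toContinuousLinearMap.comp (fderiv ℝ Ψ x)) x :=
    A.toContinuousLinearMap.hasFDerivAt.comp x (hΨ.hasFDerivAt hxU)
  rw [hderiv.fderiv]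
  simpa using LinearMap.congr_fun hA (Pi.single i 1)

variable [Fintype ι]

/-- The Jacobian of `φ` along the fields `u`. -/
def frameJacobian (u : ι → V → V) (φ : V → ι → ℝ) (z : V) : (ι → ℝ) →L[ℝ] ι → ℝ :=
  ∑ i, (ContinuousLinearMap.proj i : (ι → ℝ) →L[ℝ] ℝ).smulRight (fderiv ℝ φ z (u i z))

omit [DecidableEq ι] in
theorem contDiffOn_frameJacobian {U : Set V} (hU : IsOpen U) (hφ : ContDiffOn ℝ ∞ φ U)
    (hu : ∀ i, ContDiff ℝ ∞ (u i)) : ContDiffOn ℝ ∞ (frameJacobian u φ) U :=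
  ContDiffOn.sum fun i _ => contDiffOn_const.smulRight
    ((hφ.fderiv_of_isOpen hU (by simp)).clm_apply (hu i).contDiffOn)

theorem frameJacobian_single (i : ι) :
    frameJacobian u φ x (Pi.single i 1) = fderiv ℝ φ x (u i x) := by
  simp [frameJacobian, Pi.single_apply]

theorem isDualAt_inverse_frameJacobian {U : Set V} (hU : IsOpen U) (hφ : ContDiffOn ℝ ∞ φ U)
    (hu : ∀ i, ContDiff ℝ ∞ (u i)) (hxU : x ∈ U) (hx : x ∈ X → φ x = 0)
    (hinv : (frameJacobian u φ x).IsInvertible) :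
    ContDiffAt ℝ ∞ (fun z => (frameJacobian u φ z).inverse (φ z)) x ∧
      IsDualAt X u (fun z => (frameJacobian u φ z).inverse (φ z)) x := by
  have hφx := hφ.contDiffAt (hU.mem_nhds hxU)
  have hJ : ContDiffAt ℝ ∞ (fun z => (frameJacobian u φ z).inverse) x := by
    obtain ⟨T, hT⟩ := hinv
    exact (hT ▸ contDiffAt_map_inverse T : ContDiffAt ℝ ∞ _ (frameJacobian u φ x)).comp x
      ((contDiffOn_frameJacobian hU hφ hu).contDiffAt (hU.mem_nhds hxU))
  refine ⟨hJ.clm_apply hφx, fun hxX => ⟨by simp [hx hxX], fun i => ?_⟩⟩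
  rw [((hJ.differentiableAt (by simp)).hasFDerivAt.clm_apply
    (hφx.differentiableAt (by simp)).hasFDerivAt).fderiv]
  simp [hx hxX, ← frameJacobian_single, hinv.inverse_apply_self]

variable [FiniteDimensional ℝ V] {m k : ℕ} {K : Set V}

theorem IsNormalFrame.exists_eventually_isDualAt (h : IsNormalFrame M X u)
    (hX : IsSubmanifold X k) (hu : ∀ i, ContDiff ℝ ∞ (u i)) (hx : x ∈ X) :
    ∃ φ : V → ι → ℝ, ContDiff ℝ ∞ φ ∧ ∀ᶠ z in 𝓝 x, IsDualAt X u φ z := by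
  obtain ⟨U, Ψ, hxU, hΨ⟩ := hX.exists_isDefiningMap hx
  obtain ⟨A, hA⟩ := hΨ.exists_fderiv_eq_single hxU hx (h.linearIndependent x hx)
  have hAΨ : ContDiffOn ℝ ∞ (fun z => A (Ψ z)) U := A.contDiff.comp_contDiffOn hΨ.contDiffOn
  let J := frameJacobian u fun z => A (Ψ z)
  have hJx : J x = ContinuousLinearMap.id ℝ (ι → ℝ) :=
    ContinuousLinearMap.coe_injective <| (Pi.basisFun ℝ ι).ext fun i => by
      simp [J, frameJacobian_single, hA]
  let O : Set V := U ∩ J ⁻¹' {T | T.IsInvertible}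
  have hO : IsOpen O := (contDiffOn_frameJacobian hΨ.isOpen hAΨ hu).continuousOn
    |>.isOpen_inter_preimage hΨ.isOpen ContinuousLinearEquiv.isOpen
  have hxO : x ∈ O := ⟨hxU, .refl ℝ _, hJx.symm⟩
  have hdual (z) (hz : z ∈ O) := isDualAt_inverse_frameJacobian (X := X) hΨ.isOpen hAΨ hu hz.1
    (fun hzX => by simp [(hΨ.mem_iff z hz.1).1 hzX]) hz.2
  obtain ⟨φ, hφ, hφeq⟩ := exists_contDiff_eventuallyEq hO
    (fun z hz => (hdual z hz).1.contDiffWithinAt) hxO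
  refine ⟨φ, hφ, ?_⟩
  filter_upwards [hφeq.eventually_nhds, hO.mem_nhds hxO] with z hz hzO
  exact (hdual z hzO).2.congr hz

theorem IsNormalFrame.exists_isDualAt (h : IsNormalFrame M X u) (hX : IsSubmanifold X k)
    (hu : ∀ i, ContDiff ℝ ∞ (u i)) (hK : IsCompact K) (hKX : K ⊆ X) :
    ∃ φ : V → ι → ℝ, ContDiff ℝ ∞ φ ∧ ∀ᶠ z in 𝓝ˢ K, IsDualAt X u φ z := by
  suffices hclosure : ∃ φ : V → ι → ℝ, ContDiff ℝ ∞ φ ∧ ∀ᶠ z in 𝓝ˢ (closure K),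
      IsDualAt X u φ z by
    rwa [hK.isClosed.closure_eq] at hclosure
  refine hK.induction_on (p := fun s => ∃ φ : V → ι → ℝ, ContDiff ℝ ∞ φ ∧
    ∀ᶠ z in 𝓝ˢ (closure s), IsDualAt X u φ z) ?_ ?_ ?_ ?_
  · exact ⟨0, contDiff_const, by simp⟩
  · rintro s t hst ⟨φ, hφ, hdual⟩
    exact ⟨φ, hφ, hdual.filter_mono (nhdsSet_mono (closure_mono hst))⟩
  · rintro s t ⟨φ₁, hφ₁, h₁⟩ ⟨φ₂, hφ₂, h₂⟩
    obtain ⟨ρ, hρ, -, hρ1, hρ0⟩ := exists_contDiff_bump isClosed_closure h₁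
    refine ⟨_, hφ₂.add (hρ.smul (hφ₁.sub hφ₂)), ?_⟩
    rw [closure_union, nhdsSet_union]
    exact eventually_sup.2 ⟨hρ1.eventually_nhdsSet.mono fun z hz =>
        isDualAt_add_smul_sub hφ₁ hφ₂ hρ (hρ0 z) (.inl hz),
      h₂.mono fun z hz => isDualAt_add_smul_sub hφ₁ hφ₂ hρ (hρ0 z) (.inr hz)⟩
  · intro x hx
    obtain ⟨φ, hφ, hdual⟩ := h.exists_eventually_isDualAt hX hu (hKX hx)
    obtain ⟨r, hr, hball⟩ := nhds_basis_closedBall.mem_iff.1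
      (mem_interior_iff_mem_nhds.1 (mem_interior_iff_mem_nhds.2 hdual.eventually_nhds))
    refine ⟨closedBall x r, mem_nhdsWithin_of_mem_nhds (closedBall_mem_nhds x hr), φ, hφ, ?_⟩
    rw [isClosed_closedBall.closure_eq]
    exact eventually_nhdsSet_iff_forall.2 hball

theorem IsNormalFrame.eventually_mem_of_isDualAt (h : IsNormalFrame M X u)
    (hM : IsSubmanifold M m) (hX : IsSubmanifold X k) (hXM : X ⊆ M) (hφ : ContDiff ℝ ∞ φ)
    (hx : x ∈ X) (hdual : ∀ᶠ z in 𝓝 x, IsDualAt X u φ z) :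
    ∀ᶠ z in 𝓝 x, z ∈ M → φ z = 0 → z ∈ X := by
  have hφx : HasFDerivAt φ (fderiv ℝ φ x) x := (hφ.differentiable (by simp) x).hasFDerivAt
  obtain ⟨hφ0, hφu⟩ := hdual.self_of_nhds hx
  have hsum (c : ι → ℝ) : fderiv ℝ φ x (∑ i, c i • u i x) = c := by
    simp only [map_sum, map_smul, hφu]
    exact (pi_eq_sum_univ' c).symm
  have hφT : ∀ v ∈ SubTangent X x, fderiv ℝ φ x v = 0 := fun v hv =>
    eqOn_subTangent_of_hasFDerivAt hφx (hasFDerivAt_const (0 : ι → ℝ) x)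
      (hdual.mono fun z hz hzX => (hz hzX).1) hv
  have hspan (c : ι → ℝ) : ∑ i, c i • u i x ∈ SubTangent M x :=
    h.sup_span_eq x hx ▸ Submodule.mem_sup_right (Submodule.sum_mem _ fun i _ =>
      Submodule.smul_mem _ _ (Submodule.subset_span (mem_range_self i)))
  obtain ⟨U, Φ, hxU, hΦ⟩ := hM.exists_isDefiningMap (hXM hx)
  obtain ⟨U', Ψ, hxU', hΨ⟩ := hX.exists_isDefiningMap hx
  have hxlevel : x ∈ levelSet M univ φ := ⟨hXM hx, mem_univ x, hφ0⟩
  obtain ⟨O, -, hxO, hlevel, hderiv⟩ := hΦ.exists_isDefiningMap_levelSet hxU isOpen_univ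
    hφ.contDiffOn hxlevel fun c _ => ⟨_, hspan c, hsum c⟩
  have hle : SubTangent (levelSet M univ φ) x ≤ SubTangent X x := by
    intro v hv
    rw [hlevel.subTangent_eq hxO hxlevel, hderiv x hxO, ContinuousLinearMap.ker_prod,
      ← hΦ.subTangent_eq hxU (hXM hx), ← h.sup_span_eq x hx] at hv
    obtain ⟨hvM, hvφ : fderiv ℝ φ x v = 0⟩ := hv
    obtain ⟨a, ha, b, hb, rfl⟩ := Submodule.mem_sup.1 hvM
    obtain ⟨c, rfl⟩ := (Submodule.mem_span_range_iff_exists_fun ℝ).1 hb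
    rw [map_add, hφT a ha, hsum, zero_add] at hvφ
    simpa [hvφ] using ha
  filter_upwards [hΨ.eventually_mem_of_subTangent_le hlevel hxU' hxO hx
    (hdual.mono fun z hz hzX => ⟨hXM hzX, mem_univ z, (hz hzX).1⟩) hle] with z hz hzM hzφ
  exact hz ⟨hzM, mem_univ z, hzφ⟩

theorem IsNormalFrame.exists_collapse_weight (h : IsNormalFrame M X u) (hM : IsSubmanifold M m)
    (hX : IsSubmanifold X k) (hXM : X ⊆ M) (hφ : ContDiff ℝ ∞ φ) (hK : IsCompact K) (hKX : K ⊆ X)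
    (hdual : ∀ᶠ z in 𝓝ˢ K, IsDualAt X u φ z) :
    ∃ ρ : V → ℝ, ContDiff ℝ ∞ ρ ∧ (∀ z, 0 ≤ ρ z) ∧ (∀ᶠ z in 𝓝ˢ K, ρ z = 1) ∧
      ∀ z ∈ M, φ z = 0 → ρ z = 0 ∨ z ∈ X := by
  have hzero : {z | z ∈ M → φ z = 0 → z ∈ X} ∈ 𝓝ˢ K :=
    eventually_nhdsSet_iff_forall.2 fun x hx => h.eventually_mem_of_isDualAt hM hX hXM hφ (hKX hx)
      (eventually_nhdsSet_iff_forall.1 hdual x hx)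
  obtain ⟨ρ, hρ, hρ01, hρ1, hρ0⟩ := exists_contDiff_bump hK.isClosed hzero
  exact ⟨ρ, hρ, fun z => (hρ01 z).1, hρ1, fun z hzM hφz =>
    (hρ0 z).imp (fun hz => hz.self_of_nhds) fun hz => hz hzM hφz⟩

end NormalFrames

section CollapseMap

variable {V W : Type*} [NormedAddCommGroup W] [NormedSpace ℝ W] {p : ℕ}
  (b b' : Module.Basis (Fin (p + 1)) ℝ W)

/-- The Pontryagin–Thom collapse with fibre coordinate `φ` and weight `ρ`. It points along `b 0`
where `φ = 0` and `ρ = 1`, and is constantly `-b 0` away from the support of `ρ`. -/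
def collapse (ρ : V → ℝ) (φ : V → Fin p → ℝ) (z : V) : W :=
  (splitCoord b).symm (2 * ρ z - 1, ρ z • φ z)

variable {b b'} {ρ : V → ℝ} {φ : V → Fin p → ℝ} {F : V → W} {z : V}

theorem splitCoord_collapse : splitCoord b (collapse b ρ φ z) = (2 * ρ z - 1, ρ z • φ z) :=
  (splitCoord b).apply_symm_apply _

theorem collapse_ne_zero (h : φ z = 0 → ρ z = 0 ∨ ρ z = 1) : collapse b ρ φ z ≠ 0 := by
  intro hzero
  have hcoord := splitCoord_collapse (b := b) (ρ := ρ) (φ := φ) (z := z)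
  rw [hzero, map_zero, eq_comm, Prod.mk_eq_zero, smul_eq_zero] at hcoord
  obtain ⟨hρ, hρ0 | hφ0⟩ := hcoord
  · simp [hρ0] at hρ
  · rcases h hφ0 with h0 | h1
    · simp [h0] at hρ
    · norm_num [h1] at hρ

theorem collapse_eq_smul_iff {r : ℝ} :
    collapse b ρ φ z = r • b 0 ↔ 2 * ρ z - 1 = r ∧ ρ z • φ z = 0 := by
  rw [← splitCoord_symm_fst, collapse, (splitCoord b).symm.injective.eq_iff, Prod.mk.injEq]

theorem map_collapse {P : W →L[ℝ] W} (hP : ∀ i, P (b' i) = b i) :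
    P (collapse b' ρ φ z) = collapse b ρ φ z :=
  (splitCoord b).injective <| by rw [splitCoord_map hP, splitCoord_collapse, splitCoord_collapse]

theorem zero_notMem_segment_collapse (hF : F z ≠ 0) (hρ : 0 ≤ ρ z)
    (hpos : z ∈ rayDomain b F → rayEquation b F z = 0 → ρ z = 1)
    (hneg : z ∉ rayDomain b F → rayEquation b F z = 0 → ρ z = 0) :
    (0 : W) ∉ segment ℝ (F z) (collapse b ρ (rayEquation b F) z) := by
  rintro ⟨s, t, hs, ht, hst, hzero⟩
  set a : ℝ := (splitCoord b (F z)).1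
  have hsplit : splitCoord b (F z) = (a, rayEquation b F z) := rfl
  have hcoord : s * a + t * (2 * ρ z - 1) = 0 ∧ (s + t * ρ z) • rayEquation b F z = 0 := by
    have := congrArg (splitCoord b) hzero
    rw [map_zero, map_add, map_smul, map_smul, splitCoord_collapse, hsplit] at this
    exact ⟨congrArg Prod.fst this, by rw [add_smul, mul_smul]; exact congrArg Prod.snd this⟩
  obtain ⟨hfst, hsnd⟩ := hcoord
  by_cases hφ : rayEquation b F z = 0
  · rcases lt_trichotomy a 0 with ha | ha | ha
    · have hlt : s * a + t * -1 < 0 :=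
        convex_Iio (0 : ℝ) (mem_Iio.2 ha) (mem_Iio.2 neg_one_lt_zero) hs ht hst
      rw [hneg ha.not_gt hφ] at hfst
      linarith
    · exact hF ((splitCoord b).injective (by rw [hsplit, ha, hφ, map_zero]; rfl))
    · have hlt : 0 < s * a + t * 1 :=
        convex_Ioi (0 : ℝ) (mem_Ioi.2 ha) (mem_Ioi.2 zero_lt_one) hs ht hst
      rw [hpos ha hφ] at hfst
      linarith
  · have hsum : s + t * ρ z = 0 := (smul_eq_zero.1 hsnd).resolve_right hφ
    have hs0 : s = 0 := le_antisymm (by linarith [mul_nonneg ht hρ]) hs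
    rw [hs0, zero_add] at hst hsum
    rw [hst, one_mul] at hsum
    norm_num [hs0, hst, hsum] at hfst

variable [NormedAddCommGroup V] [NormedSpace ℝ V] {M : Set V}

theorem contDiff_collapse (hρ : ContDiff ℝ ∞ ρ) (hφ : ContDiff ℝ ∞ φ) :
    ContDiff ℝ ∞ (collapse b ρ φ) :=
  (splitCoord b).symm.contDiff.comp
    (((contDiff_const.mul hρ).sub contDiff_const).prodMk (hρ.smul hφ))

theorem NonvanishingHomotopic.collapse_rayEquation (hF : ContDiff ℝ ∞ F) (hne : ∀ x ∈ M, F x ≠ 0)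
    (hρ : ContDiff ℝ ∞ ρ) (hρ0 : ∀ x, 0 ≤ ρ x)
    (hρ1 : ∀ x ∈ levelSet M (rayDomain b F) (rayEquation b F), ρ x = 1)
    (hρM : ∀ x ∈ M, rayEquation b F x = 0 →
      ρ x = 0 ∨ x ∈ levelSet M (rayDomain b F) (rayEquation b F)) :
    NonvanishingHomotopic M F (collapse b ρ (rayEquation b F)) :=
  .of_segment hF (contDiff_collapse hρ (contDiff_rayEquation hF)) fun x hx =>
    zero_notMem_segment_collapse (hne x hx) (hρ0 x) (fun hpos hζ => hρ1 x ⟨hx, hpos, hζ⟩)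
      fun hneg hζ => (hρM x hx hζ).resolve_right fun h => hneg h.2.1

theorem NonvanishingHomotopic.collapse_slice {X : Set (V × ℝ)} {ρ : V × ℝ → ℝ}
    {φ : V × ℝ → Fin p → ℝ} (hρ : ContDiff ℝ ∞ ρ) (hφ : ContDiff ℝ ∞ φ)
    {t₀ t₁ : ℝ} (ht : t₀ ≤ t₁) (hρX : ∀ z ∈ M ×ˢ univ, φ z = 0 → ρ z = 0 ∨ z ∈ X)
    (hρ1 : ∀ z ∈ X, z.2 ∈ Icc t₀ t₁ → ρ z = 1) :
    NonvanishingHomotopic M (fun x => collapse b ρ φ (x, t₀)) fun x => collapse b ρ φ (x, t₁) :=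
  .of_path (contDiff_collapse hρ hφ) ht fun x hx t ht => collapse_ne_zero fun hφ0 =>
    (hρX (x, t) ⟨hx, mem_univ t⟩ hφ0).imp_right fun hX => hρ1 _ hX ht

end CollapseMap

section HomotopyOfCobordism

variable {M m p} {N N' : Set E} {ν ν' : Fin p → E → E} {X : Set (E × ℝ)}
  {u : Fin p → E × ℝ → E × ℝ} {F G : E → EuclideanSpace ℝ (Fin (p + 1))}
  {y y' : EuclideanSpace ℝ (Fin (p + 1))} {w w' : Fin p → EuclideanSpace ℝ (Fin (p + 1))}

/-- `X` is the part over `(0, 1)` of a framed cobordism in `M × [0, 1]` from `(N, ν)` to `(N', ν')`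
of dimension `k`, with product structure at distance less than `ε` from the ends, and `u` extends
its framing smoothly to the ambient space. -/
structure IsOpenCobordism (M : Set E) (k : ℕ) (N : Set E) (ν : Fin p → E → E) (N' : Set E)
    (ν' : Fin p → E → E) (X : Set (E × ℝ)) (u : Fin p → E × ℝ → E × ℝ) (ε : ℝ) : Prop where
  eps_pos : 0 < ε
  eps_lt : ε < 1 / 2
  isSubmanifold : IsSubmanifold X k
  subset : X ⊆ M ×ˢ univ
  contDiff : ∀ i, ContDiff ℝ ∞ (u i)
  isNormalFrame : IsNormalFrame (M ×ˢ univ) X u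
  isCompact : IsCompact (X ∩ univ ×ˢ Icc (ε / 2) (1 - ε / 2))
  mem_left : ∀ z : E × ℝ, z.2 < ε → z ∈ X → z.1 ∈ N ∧ ∀ i, u i z = (ν i z.1, 0)
  mem_right : ∀ z : E × ℝ, 1 - ε < z.2 → z ∈ X → z.1 ∈ N' ∧ ∀ i, u i z = (ν' i z.1, 0)
  left_mem : ∀ x ∈ N, (x, ε / 2) ∈ X
  right_mem : ∀ x ∈ N', (x, 1 - ε / 2) ∈ X

theorem FramedCobordant.exists_isOpenCobordism [FiniteDimensional ℝ E]
    (h : FramedCobordant M m p N ν N' ν') :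
    ∃ X u ε, IsOpenCobordism M (m - p + 1) N ν N' ν' X u ε := by
  obtain ⟨Xc, u₀, ε, hε, hε', hXc, hXcM, hleft, hright, hX, hu₀, hframe, hν, hν'⟩ := h
  choose u hu huu₀ using fun i => (hu₀ i).exists_contDiff hXc.isClosed
  have huX : ∀ z ∈ Xc, ∀ i, u i z = u₀ i z := fun z hz i => (huu₀ i hz).symm
  refine ⟨Xc ∩ univ ×ˢ Ioo 0 1, u, ε, hε, hε', hX, fun z hz => ⟨(hXcM hz.1).1, mem_univ _⟩, hu,
    ⟨fun z hz => ?_, fun z hz => ?_⟩, ?_, fun z hzε hz => ⟨?_, fun i => ?_⟩,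
    fun z hzε hz => ⟨?_, fun i => ?_⟩, fun x hx => ?_, fun x hx => ?_⟩
  · obtain ⟨-, horth, hli, -⟩ := hframe z hz
    simp only [huX z hz.1]
    exact anisotropic_prodInnerL.linearIndependent_mkQ horth hli
  · simpa only [huX z hz.1] using (hframe z hz).2.2.2
  · rw [inter_assoc, prod_inter_prod, univ_inter, inter_eq_right.2 (Icc_subset_Ioo
      (by linarith) (by linarith))]
    exact hXc.inter_right (isClosed_univ.prod isClosed_Icc)
  · exact (hleft.subset ⟨hz.1, mem_univ _, hzε⟩).1
  · rw [huX z hz.1, hν z.1 z.2 hz.1 hzε]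
  · exact (hright.subset ⟨hz.1, mem_univ _, hzε⟩).1
  · rw [huX z hz.1, hν' z.1 z.2 hz.1 hzε]
  · exact ⟨(hleft.superset ⟨hx, by constructor <;> dsimp <;> linarith⟩).1, mem_univ _,
      by constructor <;> dsimp <;> linarith⟩
  · exact ⟨(hright.superset ⟨hx, by constructor <;> dsimp <;> linarith⟩).1, mem_univ _,
      by constructor <;> dsimp <;> linarith⟩

theorem IsPontryaginManifold.isDualAt_rayEquation_fst [FiniteDimensional ℝ E]
    (h : IsPontryaginManifold m p F M y w N ν) (hM : IsSubmanifold M m) (hF : ContDiff ℝ ∞ F)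
    (hFS : MapsTo F M (sphereSet p)) {z : E × ℝ}
    (hz : z ∈ X → z.1 ∈ N ∧ ∀ i, u i z = (ν i z.1, 0)) :
    IsDualAt X u (fun z => rayEquation h.basis.basis F z.1) z := by
  intro hzX
  obtain ⟨hzN, huz⟩ := hz hzX
  have hlevel := (h.basis.levelSet_ray_eq h.mem_sphere hFS).trans h.preimage.symm
  have hzlevel := hlevel.superset hzN
  refine ⟨hzlevel.2.2, fun i => ?_⟩
  have hderiv := ((contDiff_rayEquation (b := h.basis.basis) hF).differentiable (by simp)
    z.1).hasFDerivAt.comp z hasFDerivAt_fst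
  rw [huz i, show fderiv ℝ (fun z : E × ℝ => rayEquation h.basis.basis F z.1) z = _ from
    hderiv.fderiv]
  exact (h.isLevelFrame hM hF hFS z.1 hzlevel i).map_eq

theorem exists_isDualAt_of_slice [FiniteDimensional ℝ E] {φ : E × ℝ → Fin p → ℝ}
    {φ₀ : E → Fin p → ℝ} (hφ : ContDiff ℝ ∞ φ) (hφ₀ : ContDiff ℝ ∞ φ₀) {t : ℝ} {J : Set ℝ}
    (hJ : J ∈ 𝓝 t) (h₀ : ∀ z : E × ℝ, z.2 ∈ J → IsDualAt X u (fun z => φ₀ z.1) z) :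
    ∃ φ' : E × ℝ → Fin p → ℝ, ContDiff ℝ ∞ φ' ∧ (∀ z, IsDualAt X u φ z → IsDualAt X u φ' z) ∧
      (∀ x, φ' (x, t) = φ₀ x) ∧ ∀ z : E × ℝ, z.2 ∉ J → φ' z = φ z := by
  obtain ⟨ρ, hρ, -, hρ1, hρ0⟩ := exists_contDiff_bump (isClosed_singleton (x := t))
    (by rwa [nhdsSet_singleton])
  rw [nhdsSet_singleton] at hρ1
  have hφ₀' : ContDiff ℝ ∞ fun z : E × ℝ => φ₀ z.1 := hφ₀.comp contDiff_fst
  have hρ' : ContDiff ℝ ∞ fun z : E × ℝ => ρ z.2 := hρ.comp contDiff_snd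
  refine ⟨_, hφ.add (hρ'.smul (hφ₀'.sub hφ)), fun z hz =>
    isDualAt_add_smul_sub hφ₀' hφ hρ' ?_ (.inr hz), fun x => ?_, fun z hz => ?_⟩
  · exact (hρ0 z.2).imp (fun h => continuous_snd.continuousAt.eventually h) (h₀ z)
  · simp [hρ1.self_of_nhds]
  · simp [((hρ0 z.2).resolve_right hz).self_of_nhds]

theorem IsPontryaginManifold.nonvanishingHomotopic_collapse
    (h : IsPontryaginManifold m p F M y w N ν) (hF : ContDiff ℝ ∞ F)
    (hFS : MapsTo F M (sphereSet p)) (hw' : PosOrientedTangentBasis p y' w') {ρ : E → ℝ}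
    (hρ : ContDiff ℝ ∞ ρ) (hρ0 : ∀ x, 0 ≤ ρ x) (hρ1 : ∀ x ∈ N, ρ x = 1)
    (hρM : ∀ x ∈ M, rayEquation h.basis.basis F x = 0 → ρ x = 0 ∨ x ∈ N) :
    NonvanishingHomotopic M F (collapse hw'.basis ρ (rayEquation h.basis.basis F)) := by
  obtain ⟨P, hP, hPb⟩ := hw'.exists_det_pos h.basis
  have hlevel := (h.basis.levelSet_ray_eq h.mem_sphere hFS).trans h.preimage.symm
  have hne : ∀ x ∈ M, F x ≠ 0 := fun x hx => ne_zero_of_mem_unit_sphere ⟨F x, hFS hx⟩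
  have hne' : ∀ x ∈ M, collapse h.basis.basis ρ (rayEquation h.basis.basis F) x ≠ 0 :=
    fun x hx => collapse_ne_zero fun hζ => (hρM x hx hζ).imp_right (hρ1 x)
  refine (NonvanishingHomotopic.collapse_rayEquation hF hne hρ hρ0
    (fun x hx => hρ1 x (hlevel.subset hx))
    fun x hx hζ => (hρM x hx hζ).imp_right (hlevel.superset ·)).trans
      ((NonvanishingHomotopic.map_of_det_pos (contDiff_collapse hρ (contDiff_rayEquation hF)) hne'
        hP).congr (fun _ _ => rfl) fun x _ => ?_)
  exact map_collapse (P := P.toContinuousLinearMap) hPb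

theorem IsOpenCobordism.exists_collapse_data {k : ℕ} {ε : ℝ} [FiniteDimensional ℝ E]
    (h : IsOpenCobordism M k N ν N' ν' X u ε) (hM : IsSubmanifold M m) {φ₀ φ₁ : E → Fin p → ℝ}
    (hφ₀ : ContDiff ℝ ∞ φ₀) (hφ₁ : ContDiff ℝ ∞ φ₁)
    (h₀ : ∀ z : E × ℝ, z.2 < ε → IsDualAt X u (fun z => φ₀ z.1) z)
    (h₁ : ∀ z : E × ℝ, 1 - ε < z.2 → IsDualAt X u (fun z => φ₁ z.1) z) :
    ∃ (φ : E × ℝ → Fin p → ℝ) (ρ : E × ℝ → ℝ), ContDiff ℝ ∞ φ ∧ ContDiff ℝ ∞ ρ ∧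
      (∀ x, φ (x, ε / 2) = φ₀ x) ∧ (∀ x, φ (x, 1 - ε / 2) = φ₁ x) ∧ (∀ z, 0 ≤ ρ z) ∧
      (∀ z ∈ X, z.2 ∈ Icc (ε / 2) (1 - ε / 2) → ρ z = 1) ∧
      ∀ z ∈ M ×ˢ univ, φ z = 0 → ρ z = 0 ∨ z ∈ X := by
  have hε := h.eps_pos
  have hε' := h.eps_lt
  obtain ⟨φ, hφ, hdual⟩ := h.isNormalFrame.exists_isDualAt h.isSubmanifold h.contDiff h.isCompact
    inter_subset_left
  obtain ⟨φ', hφ', hdual', hleft, -⟩ := exists_isDualAt_of_slice hφ hφ₀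
    (Iio_mem_nhds (half_lt_self hε)) h₀
  obtain ⟨φ'', hφ'', hdual'', hright, hout⟩ := exists_isDualAt_of_slice hφ' hφ₁
    (Ioi_mem_nhds (by linarith : 1 - ε < 1 - ε / 2)) h₁
  obtain ⟨ρ, hρ, hρ0, hρ1, hρX⟩ := h.isNormalFrame.exists_collapse_weight hM.prod_univ
    h.isSubmanifold h.subset hφ'' h.isCompact inter_subset_left
    (hdual.mono fun z hz => hdual'' z (hdual' z hz))
  refine ⟨φ'', ρ, hφ'', hρ, fun x => ?_, hright, hρ0, fun z hz hzt => ?_, hρX⟩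
  · rw [hout (x, ε / 2) (by rw [mem_Ioi]; linarith), hleft]
  · exact hρ1.self_of_nhdsSet z ⟨hz, mem_univ _, hzt⟩

theorem FramedCobordant.nonvanishingHomotopic [FiniteDimensional ℝ E]
    (h : FramedCobordant M m p N ν N' ν') (hM : IsSubmanifold M m)
    (hF : ContDiff ℝ ∞ F) (hG : ContDiff ℝ ∞ G) (hFS : MapsTo F M (sphereSet p))
    (hGS : MapsTo G M (sphereSet p)) (hFN : IsPontryaginManifold m p F M y w N ν)
    (hGN : IsPontryaginManifold m p G M y' w' N' ν') : NonvanishingHomotopic M F G := by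
  obtain ⟨X, u, ε, hX⟩ := h.exists_isOpenCobordism
  have hε := hX.eps_pos
  have hε' := hX.eps_lt
  obtain ⟨φ, ρ, hφ, hρ, hφ₀, hφ₁, hρ0, hρ1, hρX⟩ := hX.exists_collapse_data hM
    (contDiff_rayEquation hF) (contDiff_rayEquation hG)
    (fun z hz => hFN.isDualAt_rayEquation_fst hM hF hFS (hX.mem_left z hz))
    (fun z hz => hGN.isDualAt_rayEquation_fst hM hG hGS (hX.mem_right z hz))
  have hslice (t : ℝ) : ContDiff ℝ ∞ fun x => ρ (x, t) :=
    hρ.comp (contDiff_id.prodMk contDiff_const)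
  have hleft : NonvanishingHomotopic M F
      (collapse hFN.basis.basis (fun x => ρ (x, ε / 2)) (rayEquation hFN.basis.basis F)) := by
    refine hFN.nonvanishingHomotopic_collapse hF hFS hFN.basis (hslice _) (fun x => hρ0 _)
      (fun x hx => hρ1 _ (hX.left_mem x hx) ⟨le_rfl, by dsimp; linarith⟩) fun x hx hζ => ?_
    exact (hρX (x, ε / 2) ⟨hx, mem_univ _⟩ (by rw [hφ₀, hζ])).imp_right fun hxX =>
      (hX.mem_left _ (half_lt_self hε) hxX).1
  have hright : NonvanishingHomotopic M G
      (collapse hFN.basis.basis (fun x => ρ (x, 1 - ε / 2)) (rayEquation hGN.basis.basis G)) := by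
    refine hGN.nonvanishingHomotopic_collapse hG hGS hFN.basis (hslice _) (fun x => hρ0 _)
      (fun x hx => hρ1 _ (hX.right_mem x hx) ⟨by dsimp; linarith, le_rfl⟩) fun x hx hζ => ?_
    exact (hρX (x, 1 - ε / 2) ⟨hx, mem_univ _⟩ (by rw [hφ₁, hζ])).imp_right fun hxX =>
      (hX.mem_right _ (by dsimp; linarith) hxX).1
  refine hleft.trans (((NonvanishingHomotopic.collapse_slice (b := hFN.basis.basis) hρ hφ
    (by linarith) hρX hρ1).congr (fun x _ => ?_) fun x _ => ?_).trans hright.symm)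
  · simp only [collapse, hφ₀]
  · simp only [collapse, hφ₁]

end HomotopyOfCobordism

section CollapseAlongZeros

variable {V W : Type*} [NormedAddCommGroup V] [NormedSpace ℝ V] [NormedAddCommGroup W]

theorem fderiv_collapse [NormedSpace ℝ W] {p : ℕ} {b : Module.Basis (Fin (p + 1)) ℝ W}
    {ρ : V → ℝ} {φ : V → Fin p → ℝ} {z : V} (hρ : ∀ᶠ z' in 𝓝 z, ρ z' = 1)
    (hφ : DifferentiableAt ℝ φ z) (v : V) :
    fderiv ℝ (collapse b ρ φ) z v = (splitCoord b).symm (0, fderiv ℝ φ z v) := by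
  have heq : collapse b ρ φ =ᶠ[𝓝 z] fun z' => (splitCoord b).symm (1, φ z') := by
    filter_upwards [hρ] with z' hz'
    norm_num [collapse, hz']
  have hderiv := (splitCoord b).symm.hasFDerivAt.comp z
    ((hasFDerivAt_const (1 : ℝ) z).prodMk hφ.hasFDerivAt)
  exact DFunLike.congr_fun (hderiv.congr_of_eventuallyEq heq).fderiv v

variable [InnerProductSpace ℝ W] {v y : W}

theorem inv_norm_smul_eq_iff (hy : ‖y‖ = 1) :
    ‖v‖⁻¹ • v = y ↔ ∃ r : ℝ, 0 < r ∧ v = r • y := by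
  constructor
  · rintro rfl
    have hv : v ≠ 0 := fun h => by simp [h] at hy
    exact ⟨‖v‖, norm_pos_iff.2 hv, (smul_inv_smul₀ (norm_ne_zero_iff.2 hv) v).symm⟩
  · rintro ⟨r, hr, rfl⟩
    rw [norm_smul, hy, mul_one, Real.norm_of_nonneg hr.le, inv_smul_smul₀ hr.ne']

theorem hasFDerivAt_inv_norm_smul (hv : ‖v‖ = 1) :
    HasFDerivAt (fun v : W => ‖v‖⁻¹ • v)
      (ContinuousLinearMap.id ℝ W - (innerSL ℝ v).smulRight v) v := by
  have hsqrt := (hasStrictFDerivAt_norm_sq v).hasFDerivAt.sqrt (by simp [hv])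
  simp only [Real.sqrt_sq (norm_nonneg _)] at hsqrt
  have hinv := (hasDerivAt_inv (x := ‖v‖) (by simp [hv])).comp_hasFDerivAt v hsqrt
  refine (hinv.smul (hasFDerivAt_id v)).congr_fderiv ?_
  ext u
  simp [hv, sub_eq_add_neg]

end CollapseAlongZeros

section Realisation

variable {M m p} {N : Set E} {ν : Fin p → E → E} {f : E → EuclideanSpace ℝ (Fin (p + 1))}
  {y : EuclideanSpace ℝ (Fin (p + 1))} {w : Fin p → EuclideanSpace ℝ (Fin (p + 1))}

theorem IsFramedSubmanifold.isPontryaginManifold (h : IsFramedSubmanifold M m N p ν)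
    (hy : y ∈ sphereSet p) (hw : PosOrientedTangentBasis p y w) (hN : N = {x ∈ M | f x = y})
    (hν : ∀ x ∈ N, ∃ L, HasDerivOn f M x L ∧ ∀ i, L (ν i x) = w i) :
    IsPontryaginManifold m p f M y w N ν where
  framed := h
  mem_sphere := hy
  basis := hw
  regular x hx hxy := by
    have hxN : x ∈ N := hN ▸ ⟨hx, hxy⟩
    obtain ⟨L, hL, hLw⟩ := hν x hxN
    refine ⟨L, hL, fun u hu => ⟨∑ i, (splitCoord hw.basis u).2 i • ν i x, ?_, ?_⟩⟩
    · exact Submodule.sum_mem _ fun i _ => Submodule.smul_mem _ _ (h.framing.mem_tangent i x hxN)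
    · rw [mem_subTangent_sphereSet_iff hy, ← hw.splitCoord_fst hy] at hu
      have hsum := splitCoord_symm_apply hw.basis (splitCoord hw.basis u)
      rw [ContinuousLinearEquiv.symm_apply_apply, hu, zero_smul, zero_add] at hsum
      simpa [hLw, hw.basis_succ] using hsum.symm
  preimage := hN
  pullback := hν

theorem IsFramedSubmanifold.exists_collapse_data [FiniteDimensional ℝ E]
    (h : IsFramedSubmanifold M m N p ν) (hM : IsSubmanifold M m) :
    ∃ (ρ : E → ℝ) (φ : E → Fin p → ℝ), ContDiff ℝ ∞ ρ ∧ ContDiff ℝ ∞ φ ∧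
      (∀ x ∈ N, ∀ᶠ z in 𝓝 x, ρ z = 1) ∧ (∀ x ∈ M, φ x = 0 → ρ x = 0 ∨ x ∈ N) ∧
      ∀ x ∈ N, φ x = 0 ∧ ∀ i, fderiv ℝ φ x (ν i x) = Pi.single i 1 := by
  choose u hu huν using fun i => (h.framing.smooth i).exists_contDiff h.compact.isClosed
  have huN : ∀ x ∈ N, ∀ i, u i x = ν i x := fun x hx i => (huν i hx).symm
  have hframe : IsNormalFrame M N u := by
    refine ⟨fun x hx => ?_, fun x hx => ?_⟩
    · simp only [huN x hx]
      exact anisotropic_innerSL.linearIndependent_mkQ (fun i => h.framing.orth i x hx)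
        (h.framing.indep x hx)
    · simpa only [huN x hx] using h.framing.spans x hx
  obtain ⟨φ, hφ, hdual⟩ := hframe.exists_isDualAt h.submanifold hu h.compact Subset.rfl
  obtain ⟨ρ, hρ, -, hρN, hρM⟩ := hframe.exists_collapse_weight hM h.submanifold h.subset hφ
    h.compact Subset.rfl hdual
  refine ⟨ρ, φ, hρ, hφ, fun x hx => eventually_nhdsSet_iff_forall.1 hρN x hx, hρM, fun x hx => ?_⟩
  simpa only [huN x hx] using hdual.self_of_nhdsSet x hx hx

theorem IsFramedSubmanifold.exists_isPontryaginManifold_of_finiteDimensional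
    [FiniteDimensional ℝ E] (h : IsFramedSubmanifold M m N p ν) (hM : IsSubmanifold M m)
    (hy : y ∈ sphereSet p) (hw : PosOrientedTangentBasis p y w) :
    ∃ f : E → EuclideanSpace ℝ (Fin (p + 1)), SmoothOnSet f M ∧ MapsTo f M (sphereSet p) ∧
      IsPontryaginManifold m p f M y w N ν := by
  obtain ⟨ρ, φ, hρ, hφ, hρN, hρM, hdual⟩ := h.exists_collapse_data hM
  have hne : ∀ x ∈ M, collapse hw.basis ρ φ x ≠ 0 := fun x hx => collapse_ne_zero fun hφx =>
    (hρM x hx hφx).imp_right fun hxN => (hρN x hxN).self_of_nhds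
  have hcollapse : ContDiff ℝ ∞ (collapse hw.basis ρ φ) := contDiff_collapse hρ hφ
  have hynorm := norm_eq_one_of_mem_sphereSet hy
  have hcollapse_eq (x : E) (r : ℝ) :
      collapse hw.basis ρ φ x = r • y ↔ 2 * ρ x - 1 = r ∧ ρ x • φ x = 0 := by
    simpa only [hw.basis_zero] using collapse_eq_smul_iff (b := hw.basis) (z := x) (r := r)
  have hcollapseN : ∀ x ∈ N, collapse hw.basis ρ φ x = y := fun x hx => by
    refine ((hcollapse_eq x 1).2 ?_).trans (one_smul ℝ y)
    norm_num [(hρN x hx).self_of_nhds, (hdual x hx).1]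
  refine ⟨fun x => ‖collapse hw.basis ρ φ x‖⁻¹ • collapse hw.basis ρ φ x,
    smoothOnSet_inv_norm_smul hcollapse hne, fun x hx => inv_norm_smul_mem_sphere (hne x hx),
    h.isPontryaginManifold hy hw ?_ fun x hx => ⟨_, hasDerivOn_of_eqOn (h.subset hx)
      (fun _ _ => rfl) ((hasFDerivAt_inv_norm_smul ?_).comp x
        (hcollapse.differentiable (by simp) x).hasFDerivAt), fun i => ?_⟩⟩
  · refine Subset.antisymm (fun x hx => ⟨h.subset hx, ?_⟩) fun x ⟨hx, hxy⟩ => ?_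
    · rw [hcollapseN x hx, inv_norm_smul_eq_self hy]
    · obtain ⟨r, hr, hxr⟩ := (inv_norm_smul_eq_iff hynorm).1 hxy
      rw [hcollapse_eq] at hxr
      have hρ0 : ρ x ≠ 0 := fun h0 => by linarith
      exact (hρM x hx ((smul_eq_zero.1 hxr.2).resolve_left hρ0)).resolve_left hρ0
  · rw [hcollapseN x hx, hynorm]
  · have hderiv : fderiv ℝ (collapse hw.basis ρ φ) x (ν i x) = w i := by
      rw [fderiv_collapse (hρN x hx) (hφ.differentiable (by simp) x), (hdual x hx).2 i,
        ← hw.splitCoord_eq, ContinuousLinearEquiv.symm_apply_apply]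
    simp [hderiv, hcollapseN x hx, hw.1 i]

end Realisation

section Correspondence

theorem exists_bijective_quot {α β : Type*} {r : α → α → Prop} {s : β → β → Prop}
    (P : α → β → Prop) (hr : ∀ a, r a a) (left_total : ∀ a, ∃ b, P a b)
    (right_total : ∀ b, ∃ a, P a b)
    (rel_iff : ∀ {a a' b b'}, P a b → P a' b' → (r a a' ↔ s b b')) :
    ∃ Φ : Quot r → Quot s, Bijective Φ ∧ ∀ a b, P a b → Φ (Quot.mk r a) = Quot.mk s b := by
  choose φ hφ using left_total
  choose ψ hψ using right_total
  let Φ : Quot r → Quot s :=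
    Quot.map φ fun a a' h => (rel_iff (hφ a) (hφ a')).1 h
  let Ψ : Quot s → Quot r :=
    Quot.map ψ fun b b' h => (rel_iff (hψ b) (hψ b')).2 h
  have hΦ : ∀ a b, P a b → Φ (Quot.mk r a) = Quot.mk s b := fun a b h =>
    Quot.sound ((rel_iff (hφ a) h).1 (hr a))
  have hΨΦ : LeftInverse Ψ Φ := Quot.ind fun a =>
    Quot.sound ((rel_iff (hψ _) (hφ a)).2 ((rel_iff (hφ a) (hφ a)).1 (hr a)))
  have hΦΨ : RightInverse Ψ Φ := Quot.ind fun b => hΦ _ _ (hψ b)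
  exact ⟨Φ, ⟨hΨΦ.injective, hΦΨ.surjective⟩, hΦ⟩

variable {M m p} {N N' : Set E} {ν ν' : Fin p → E → E} {f g : E → EuclideanSpace ℝ (Fin (p + 1))}
  {y y' : EuclideanSpace ℝ (Fin (p + 1))} {w w' : Fin p → EuclideanSpace ℝ (Fin (p + 1))}

theorem SmoothHomotopicOn.refl (hf : SmoothOnSet f M) (hfS : MapsTo f M (sphereSet p)) :
    SmoothHomotopicOn M f f (sphereSet p) := by
  refine ⟨fun z => f z.1, ?_, fun x hx _ => hfS hx, fun _ _ => rfl, fun _ _ => rfl⟩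
  rintro z ⟨hz, -⟩
  obtain ⟨U, F, hU, hzU, hF, hfF⟩ := hf z.1 hz
  exact ⟨U ×ˢ univ, fun z => F z.1, hU.prod isOpen_univ, ⟨hzU, mem_univ _⟩,
    hF.comp contDiff_fst.contDiffOn fun _ h => h.1, fun _ h => hfF ⟨h.1.1, h.2.1⟩⟩

theorem IsFramedSubmanifold.empty : IsFramedSubmanifold M m ∅ p ν where
  subset := empty_subset M
  compact := isCompact_empty
  submanifold := by simp [IsSubmanifold]
  framing := ⟨by simp [SmoothOnSet], by simp, by simp, by simp, by simp⟩

theorem exists_mem_sphereSet_posOrientedTangentBasis (p : ℕ) :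
    ∃ y ∈ sphereSet p, ∃ w, PosOrientedTangentBasis p y w :=
  have hmem : EuclideanSpace.single (0 : Fin (p + 1)) (1 : ℝ) ∈ sphereSet p := by simp [sphereSet]
  ⟨_, hmem, exists_posOrientedTangentBasis hmem (by simp)⟩

theorem IsFramedSubmanifold.exists_isPontryaginManifold (h : IsFramedSubmanifold M m N p ν)
    (hM : IsSubmanifold M m) (hMc : IsCompact M) :
    ∃ (f : E → EuclideanSpace ℝ (Fin (p + 1))) (y : _) (w : _), SmoothOnSet f M ∧
      MapsTo f M (sphereSet p) ∧ IsPontryaginManifold m p f M y w N ν := by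
  obtain ⟨y, hy, w, hw⟩ := exists_mem_sphereSet_posOrientedTangentBasis p
  rcases M.eq_empty_or_nonempty with rfl | hne
  · obtain rfl : N = ∅ := subset_empty_iff.1 h.subset
    exact ⟨0, y, w, by simp [SmoothOnSet], mapsTo_empty _ _,
      h.isPontryaginManifold hy hw (by simp) (by simp)⟩
  · have := hM.finiteDimensional hMc hne
    obtain ⟨f, hf⟩ := h.exists_isPontryaginManifold_of_finiteDimensional hM hy hw
    exact ⟨f, y, w, hf⟩

theorem SmoothOnSet.exists_isPontryaginManifold_of_isCompact (hf : SmoothOnSet f M)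
    (hfS : MapsTo f M (sphereSet p)) (hM : IsSubmanifold M m) (hMc : IsCompact M) :
    ∃ y w N ν, IsPontryaginManifold m p f M y w N ν := by
  rcases M.eq_empty_or_nonempty with rfl | hne
  · obtain ⟨y, hy, w, hw⟩ := exists_mem_sphereSet_posOrientedTangentBasis p
    exact ⟨y, w, ∅, 0, IsFramedSubmanifold.empty.isPontryaginManifold hy hw (by simp) (by simp)⟩
  · have := hM.finiteDimensional hMc hne
    exact hf.exists_isPontryaginManifold hfS hM hMc

theorem IsPontryaginManifold.smoothHomotopicOn_iff_framedCobordant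
    (hfN : IsPontryaginManifold m p f M y w N ν) (hgN : IsPontryaginManifold m p g M y' w' N' ν')
    (hM : IsSubmanifold M m) (hMc : IsCompact M) (hf : SmoothOnSet f M)
    (hfS : MapsTo f M (sphereSet p)) (hg : SmoothOnSet g M) (hgS : MapsTo g M (sphereSet p)) :
    SmoothHomotopicOn M f g (sphereSet p) ↔ FramedCobordant M m p N ν N' ν' := by
  rcases M.eq_empty_or_nonempty with rfl | hne
  · obtain rfl : N = ∅ := subset_empty_iff.1 hfN.framed.subset
    obtain rfl : N' = ∅ := subset_empty_iff.1 hgN.framed.subset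
    exact iff_of_true ⟨0, by simp [SmoothOnSet], by simp, by simp, by simp⟩ framedCobordant_empty
  have := hM.finiteDimensional hMc hne
  obtain ⟨F, hF, hfF⟩ := hf.exists_contDiff hMc.isClosed
  obtain ⟨G, hG, hgG⟩ := hg.exists_contDiff hMc.isClosed
  have hFS : MapsTo F M (sphereSet p) := hfS.congr hfF
  have hGS : MapsTo G M (sphereSet p) := hgS.congr hgG
  have hFN := hfN.congr hfF
  have hGN := hgN.congr hgG
  rw [sphereSet, ← nonvanishingHomotopic_iff_smoothHomotopicOn hMc.isClosed hfS hgS]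
  exact ⟨fun h => hFN.framedCobordant hGN hM hMc hF hG hFS hGS (h.congr hfF hgG),
    fun h => (h.nonvanishingHomotopic hM hF hG hFS hGS hFN hGN).congr hfF.symm hgG.symm⟩

theorem IsPontryaginManifold.framedCobordant_of_eq
    (h : IsPontryaginManifold m p f M y w N ν) (h' : IsPontryaginManifold m p f M y' w' N' ν')
    (hM : IsSubmanifold M m) (hMc : IsCompact M) (hf : SmoothOnSet f M)
    (hfS : MapsTo f M (sphereSet p)) : FramedCobordant M m p N ν N' ν' :=
  (h.smoothHomotopicOn_iff_framedCobordant h' hM hMc hf hfS hf hfS).1 (.refl hf hfS)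

theorem smoothHomotopicOn_iff_exists_framedCobordant (hM : IsSubmanifold M m) (hMc : IsCompact M)
    (hf : SmoothOnSet f M) (hfS : MapsTo f M (sphereSet p)) (hg : SmoothOnSet g M)
    (hgS : MapsTo g M (sphereSet p)) :
    SmoothHomotopicOn M f g (sphereSet p) ↔ ∃ y w N ν y' w' N' ν',
      IsPontryaginManifold m p f M y w N ν ∧ IsPontryaginManifold m p g M y' w' N' ν' ∧
      FramedCobordant M m p N ν N' ν' := by
  constructor
  · intro h
    obtain ⟨y, w, N, ν, hfN⟩ := hf.exists_isPontryaginManifold_of_isCompact hfS hM hMc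
    obtain ⟨y', w', N', ν', hgN⟩ := hg.exists_isPontryaginManifold_of_isCompact hgS hM hMc
    exact ⟨y, w, N, ν, y', w', N', ν', hfN, hgN,
      (hfN.smoothHomotopicOn_iff_framedCobordant hgN hM hMc hf hfS hg hgS).1 h⟩
  · rintro ⟨y, w, N, ν, y', w', N', ν', hfN, hgN, h⟩
    exact (hfN.smoothHomotopicOn_iff_framedCobordant hgN hM hMc hf hfS hg hgS).2 h

theorem exists_bijective_pontryagin (hM : IsSubmanifold M m) (hMc : IsCompact M) :
    ∃ Φ : SmoothMapClasses M p → FramedCobordismClasses M m p,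
      Bijective Φ ∧ ∀ (f : SmoothSphereMap M p) (a : FramedPair M m p),
        (∃ y w, IsPontryaginManifold m p f.1 M y w a.1.1 a.1.2) →
          Φ (Quot.mk _ f) = Quot.mk _ a := by
  refine exists_bijective_quot _ (fun f => .refl f.2.1 f.2.2) (fun f => ?_) (fun a => ?_) ?_
  · obtain ⟨y, w, N, ν, h⟩ := f.2.1.exists_isPontryaginManifold_of_isCompact f.2.2 hM hMc
    exact ⟨⟨(N, ν), h.framed⟩, y, w, h⟩
  · obtain ⟨f, y, w, hf, hfS, h⟩ := a.2.exists_isPontryaginManifold hM hMc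
    exact ⟨⟨f, hf, hfS⟩, y, w, h⟩
  · rintro f g a b ⟨y, w, h⟩ ⟨y', w', h'⟩
    exact h.smoothHomotopicOn_iff_framedCobordant h' hM hMc f.2.1 f.2.2 g.2.1 g.2.2

end Correspondence

end

/-- **The Pontryagin–Thom correspondence.**
(i) The framed cobordism class of the Pontryagin manifold of `f` does not depend on the
choice of regular value and positively oriented tangent basis;
(ii) two smooth maps are smoothly homotopic iff their Pontryagin manifolds are framed
cobordant;
hence (iii) the Pontryagin construction is a bijection `[M, S^p] ≅ Π^p_fr(M)`. -/
theorem pontryagin_thom (hM : IsSubmanifold M m) (hMc : IsCompact M) :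
    (∀ (f : E → EuclideanSpace ℝ (Fin (p + 1))), SmoothOnSet f M →
      (∀ x ∈ M, f x ∈ sphereSet p) →
      ∀ y w N ν y' w' N' ν',
        IsPontryaginManifold m p f M y w N ν →
        IsPontryaginManifold m p f M y' w' N' ν' →
        FramedCobordant M m p N ν N' ν') ∧
    (∀ (f g : E → EuclideanSpace ℝ (Fin (p + 1))), SmoothOnSet f M →
      (∀ x ∈ M, f x ∈ sphereSet p) → SmoothOnSet g M →
      (∀ x ∈ M, g x ∈ sphereSet p) →
      (SmoothHomotopicOn M f g (sphereSet p) ↔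
        ∃ y w N ν y' w' N' ν',
          IsPontryaginManifold m p f M y w N ν ∧
          IsPontryaginManifold m p g M y' w' N' ν' ∧
          FramedCobordant M m p N ν N' ν')) ∧
    (∃ Φ : SmoothMapClasses M p → FramedCobordismClasses M m p,
      Function.Bijective Φ ∧
      ∀ (f : SmoothSphereMap M p) (y w N ν)
        (h : IsPontryaginManifold m p f.1 M y w N ν),
        Φ (Quot.mk _ f) = Quot.mk _ (⟨(N, ν), h.framed⟩ : FramedPair M m p)) := by
  refine ⟨fun f hf hfS y w N ν y' w' N' ν' h h' => h.framedCobordant_of_eq h' hM hMc hf hfS,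
    fun f g hf hfS hg hgS => smoothHomotopicOn_iff_exists_framedCobordant hM hMc hf hfS hg hgS, ?_⟩
  obtain ⟨Φ, hΦ, hΦ_mk⟩ := exists_bijective_pontryagin hM hMc
  exact ⟨Φ, hΦ, fun f y w N ν h => hΦ_mk f ⟨(N, ν), h.framed⟩ ⟨y, w, h⟩⟩

end Paper
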